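/- Every finitely generated subgroup of Aut(B_n) is orbit decidable: for every n ≥ 2, every m, and every family φ : Fin m → MulAut(B_n), letting A be the subgroup of MulAut(B_n) generated by the φ(j), there exists a computable function f taking two signed words u, v and returning a Boolean, such that f(u,v) = true if and only if there exists α ∈ A with π(v) conjugate in B_n to α(π(u)). -/

import Mathlib

/-!
The orbit problem for a subgroup `A` of `Aut (B n)` reduces to finitely many conjugacy problems in
the braid group, because `A` meets only finitely many classes modulo inner automorphisms
(`exists_reps`), and conjugacy of braids is decidable.

**Finiteness modulo inner automorphisms.** An automorphism is determined up to an inner one by the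
permutations and the crossing numbers modulo three of the images of the Artin generators
(`inner_of_crHom`). Indeed, suppose that an automorphism preserves permutations and crossing numbers
modulo three. On the linking numbers of pure braids it acts by integral matrices commuting with the
symmetric group; the eigenvalues are units congruent to one modulo three, hence equal to one, so
linking numbers of pure braids are preserved (`cr_of_tri`). A finitely generated normal subgroup of a
free group on which some letter has zero exponent sum is trivial (`normal_fg_trivial`); this forces
the free group of pushes of the zeroth strand to be preserved (`lp_pu`), so that there is an induced
automorphism on one strand less, inner by induction. The remaining discrepancy is controlled by a
braid that rotates the free generators cyclically: its displacement is a coboundary by a Hilbert 90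
statement for that rotation (`exists_of_rnorm_eq_one`), and an automorphism of the free group that
commutes with the rotation and preserves exponent sums is the identity (`rot_rigid`).

**Conjugacy.** In the positive braid monoid Garside's key property (`kUpTo`) gives cancellation, least
common multiples and greatest common divisors, and the full twist `Om` is a central multiple of all
generators, so the monoid embeds in the braid group (`emb_injective`). A conjugation of positive
braids by a positive braid factors into conjugations by divisors of `Om` (`exists_step`); the
intermediate braids have constant length, so there are boundedly many of them, and cutting out loops
bounds the length of a conjugating word (`conj_bound`).

**Words.** The Artin representation on the free group is faithful (`art_faithful`), so comparing the
reduced images of the free generators decides the word problem (`braidNF_eq_iff`). The bounded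
search for a conjugating word is primitive recursive.
-/

def braidRels (m : ℕ) : Set (FreeGroup (Fin m)) :=
  { r | (∃ i j : Fin m, (i : ℕ) + 1 < (j : ℕ) ∧
          r = FreeGroup.of i * FreeGroup.of j * (FreeGroup.of i)⁻¹ * (FreeGroup.of j)⁻¹) ∨
        (∃ i j : Fin m, (i : ℕ) + 1 = (j : ℕ) ∧
          r = FreeGroup.of i * FreeGroup.of j * FreeGroup.of i *
              (FreeGroup.of j)⁻¹ * (FreeGroup.of i)⁻¹ * (FreeGroup.of j)⁻¹) }

/-- The braid group on `n` strands. -/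
abbrev B (n : ℕ) := PresentedGroup (braidRels (n - 1))

/-- The Artin generators. -/
def σ {n : ℕ} (i : Fin (n - 1)) : B n := PresentedGroup.of i

/-- Evaluation of a signed word in the generators. -/
def π {n : ℕ} (w : List (Fin (n - 1) × Bool)) : B n :=
  (w.map (fun p => if p.2 then σ p.1 else (σ p.1)⁻¹)).prod

/-- The submonoid of positive braids. -/
def P (n : ℕ) : Submonoid (B n) := Submonoid.closure (Set.range (σ (n := n)))

def σ' {n : ℕ} (j : ℕ) : B n := if h : j < n - 1 then σ ⟨j, h⟩ else 1

/-- The Garside half-twist element Δ. -/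
def Δ (n : ℕ) : B n :=
  ((List.range (n - 1)).map
    (fun k => (((List.range (k + 1)).reverse).map (σ' (n := n))).prod)).prod

/-- Simple elements: positive prefixes of Δ. -/
def Simple {n : ℕ} (s : B n) : Prop := s ∈ P n ∧ s⁻¹ * Δ n ∈ P n

/-- Palindromic-free positive braids. -/
def PalFree {n : ℕ} (x : B n) : Prop :=
  ∀ i : Fin (n - 1), (σ i)⁻¹ * x * (σ i)⁻¹ ∉ P n

/-- Canonical length at most `m`. -/
def lenLE {n : ℕ} (x : B n) (m : ℕ) : Prop :=
  ∃ p : ℤ, (Δ n) ^ (-p) * x ∈ P n ∧ x⁻¹ * (Δ n) ^ (p + (m : ℤ)) ∈ P n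

/-- Canonical length exactly `m`. -/
def lenEQ {n : ℕ} (x : B n) (m : ℕ) : Prop :=
  lenLE x m ∧ (1 ≤ m → ¬ lenLE x (m - 1))

/-- Left normal form (as a list of simple factors). -/
def IsLeftNF {n : ℕ} (x : B n) (L : List (B n)) : Prop :=
  (∀ s ∈ L, Simple s ∧ s ≠ 1) ∧ L.prod = x ∧
  ∀ i : ℕ, i + 1 < L.length → ∀ u : B n, Simple u →
    u⁻¹ * (L.getD i 1 * L.getD (i + 1) 1) ∈ P n → u⁻¹ * L.getD i 1 ∈ P n

/-- Right normal form (as a list of simple factors). -/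
def IsRightNF {n : ℕ} (x : B n) (L : List (B n)) : Prop :=
  (∀ s ∈ L, Simple s ∧ s ≠ 1) ∧ L.prod = x ∧
  ∀ i : ℕ, i + 1 < L.length → ∀ u : B n, Simple u →
    (L.getD i 1 * L.getD (i + 1) 1) * u⁻¹ ∈ P n → L.getD (i + 1) 1 * u⁻¹ ∈ P n

namespace BraidOrbit

/-! ### The braid groups and their universal property -/

/-- The Artin braid group with `n` generators, that is, on `n + 1` strands. -/
abbrev Br (n : ℕ) := PresentedGroup (braidRels n)

/-- The Artin generators of `Br n`. -/
def s {n : ℕ} (i : Fin n) : Br n := PresentedGroup.of i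

theorem s_comm {n : ℕ} {i j : Fin n} (h : (i : ℕ) + 1 < j) : s i * s j = s j * s i := by
  have h1 : (QuotientGroup.mk' (Subgroup.normalClosure (braidRels n))
      (FreeGroup.of i * FreeGroup.of j * (FreeGroup.of i)⁻¹ * (FreeGroup.of j)⁻¹)) = 1 := by
    apply (QuotientGroup.eq_one_iff _).2
    exact Subgroup.subset_normalClosure (Or.inl ⟨i, j, h, rfl⟩)
  rw [map_mul, map_mul, map_mul, map_inv, map_inv, mul_inv_eq_one, mul_inv_eq_iff_eq_mul] at h1
  exact h1

theorem s_braid {n : ℕ} {i j : Fin n} (h : (i : ℕ) + 1 = j) :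
    s i * s j * s i = s j * s i * s j := by
  have h1 : (QuotientGroup.mk' (Subgroup.normalClosure (braidRels n))
      (FreeGroup.of i * FreeGroup.of j * FreeGroup.of i *
              (FreeGroup.of j)⁻¹ * (FreeGroup.of i)⁻¹ * (FreeGroup.of j)⁻¹)) = 1 := by
    apply (QuotientGroup.eq_one_iff _).2
    exact Subgroup.subset_normalClosure (Or.inr ⟨i, j, h, rfl⟩)
  simp only [map_mul, map_inv, mul_inv_eq_iff_eq_mul] at h1
  exact h1

/-- A homomorphism out of `Br n` from images of the generators satisfying the braid relations. -/
def brLift {n : ℕ} {G : Type*} [Group G] (f : Fin n → G)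
    (h1 : ∀ i j : Fin n, (i : ℕ) + 1 < j → f i * f j = f j * f i)
    (h2 : ∀ i j : Fin n, (i : ℕ) + 1 = j → f i * f j * f i = f j * f i * f j) : Br n →* G :=
  PresentedGroup.toGroup (f := f) (by
    rintro r (⟨i, j, h, rfl⟩ | ⟨i, j, h, rfl⟩)
    · simp [h1 i j h]
    · simp only [map_mul, map_inv, FreeGroup.lift_apply_of]
      rw [h2 i j h]; group)

@[simp] theorem brLift_s {n : ℕ} {G : Type*} [Group G] (f : Fin n → G) (h1 h2) (i : Fin n) :
    brLift f h1 h2 (s i) = f i := PresentedGroup.toGroup.of _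

theorem br_closure (n : ℕ) : Subgroup.closure (Set.range (s : Fin n → Br n)) = ⊤ :=
  PresentedGroup.closure_range_of _

theorem br_hom_ext {n : ℕ} {G : Type*} [Group G] {f g : Br n →* G}
    (h : ∀ i, f (s i) = g (s i)) : f = g :=
  PresentedGroup.ext h

theorem br_induction {n : ℕ} {p : Br n → Prop} (h1 : p 1)
    (hm : ∀ g i, p g → p (g * s i)) (hi : ∀ g i, p g → p (g * (s i)⁻¹)) (g : Br n) : p g := by
  have hg : g ∈ Subgroup.closure (Set.range (s : Fin n → Br n)) := by
    rw [br_closure]; trivial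
  induction hg using Subgroup.closure_induction_right with
  | one => exact h1
  | mul_right x _ y hy ih => obtain ⟨i, rfl⟩ := hy; exact hm _ _ ih
  | mul_inv_cancel x _ y hy ih => obtain ⟨i, rfl⟩ := hy; exact hi _ _ ih

theorem br_mem_of {n : ℕ} (H : Subgroup (Br n)) (h : ∀ i, s i ∈ H) (g : Br n) : g ∈ H := by
  have : (⊤ : Subgroup (Br n)) ≤ H := by
    rw [← br_closure, Subgroup.closure_le]; rintro _ ⟨i, rfl⟩; exact h i
  exact this trivial

/-! ### The Artin representation -/

section Twist
variable {α : Type*} [DecidableEq α]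
open FreeGroup

/-- The images of the free generators under the half-twist exchanging `a` and `b`. -/
def twFun (a b j : α) : FreeGroup α :=
  if j = b then of a else if j = a then (of a)⁻¹ * of b * of a else of j

/-- The images of the free generators under the inverse half-twist. -/
def twInvFun (a b j : α) : FreeGroup α :=
  if j = a then of b else if j = b then of b * of a * (of b)⁻¹ else of j

/-- The half-twist automorphism `b ↦ a`, `a ↦ a⁻¹ b a` of a free group. -/
def tw (a b : α) : MulAut (FreeGroup α) :=
  if h : a = b then 1 else
  MonoidHom.toMulEquiv (FreeGroup.lift (twFun a b)) (FreeGroup.lift (twInvFun a b))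
    (by
      ext j
      simp only [MonoidHom.comp_apply, FreeGroup.lift_apply_of, MonoidHom.id_apply, twFun]
      split_ifs with h1 h2
      · subst h1; simp [twInvFun]
      · subst h2; simp [twInvFun, Ne.symm h, mul_assoc]
      · simp [twInvFun, h1, h2])
    (by
      ext j
      simp only [MonoidHom.comp_apply, FreeGroup.lift_apply_of, MonoidHom.id_apply, twInvFun]
      split_ifs with h1 h2
      · subst h1; simp [twFun]
      · subst h2; simp [twFun, h, mul_assoc]
      · simp [twFun, h1, h2])

variable {a b c d : α}

theorem tw_right (h : a ≠ b) : tw a b (of b) = of a := by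
  simp [tw, h, MonoidHom.toMulEquiv, twFun]

theorem tw_left (h : a ≠ b) : tw a b (of a) = (of a)⁻¹ * of b * of a := by
  simp [tw, h, MonoidHom.toMulEquiv, twFun]

theorem tw_other {j : α} (ha : j ≠ a) (hb : j ≠ b) : tw a b (of j) = of j := by
  unfold tw
  split_ifs
  · rfl
  · simp [MonoidHom.toMulEquiv, twFun, ha, hb]

theorem mulAut_ext {β : Type*} {f g : MulAut (FreeGroup β)} (h : ∀ j, f (of j) = g (of j)) : f = g := by
  have : f.toMonoidHom = g.toMonoidHom := by ext j; exact h j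
  ext x; exact DFunLike.congr_fun this x

theorem tw_comm (h2 : a ≠ c) (h3 : a ≠ d) (h4 : b ≠ c) (h5 : b ≠ d) :
    tw a b * tw c d = tw c d * tw a b := by
  by_cases h1 : a = b
  · subst h1; simp [tw]
  by_cases h6 : c = d
  · subst h6; simp [tw]
  apply mulAut_ext
  intro j
  simp only [MulAut.mul_apply]
  by_cases ja : j = a
  · subst ja
    simp [tw_left h1, tw_other h2 h3, tw_other h4 h5]
  by_cases jb : j = b
  · subst jb
    simp [tw_right h1, tw_other h2 h3, tw_other h4 h5]
  by_cases jc : j = c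
  · subst jc
    simp [tw_left h6, tw_other h2.symm h4.symm, tw_other h3.symm h5.symm]
  by_cases jd : j = d
  · subst jd
    simp [tw_right h6, tw_other h2.symm h4.symm, tw_other h3.symm h5.symm]
  simp [tw_other ja jb, tw_other jc jd]

theorem tw_braid (h1 : a ≠ b) (h2 : a ≠ c) (h3 : b ≠ c) :
    tw a b * tw b c * tw a b = tw b c * tw a b * tw b c := by
  apply mulAut_ext
  intro j
  simp only [MulAut.mul_apply]
  by_cases ja : j = a
  · subst ja
    simp [tw_left h1, tw_left h3, tw_other h1 h2, tw_right h1, tw_other h2.symm h3.symm]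
    group
  by_cases jb : j = b
  · subst jb
    simp [tw_left h1, tw_left h3, tw_other h1 h2, tw_right h1, tw_other h2.symm h3.symm,
      tw_right h3]
  by_cases jc : j = c
  · subst jc
    simp [tw_right h3, tw_other h1 h2, tw_right h1, tw_other h2.symm h3.symm]
  simp [tw_other ja jb, tw_other jb jc]

end Twist

theorem cs_ne {n : ℕ} (k : Fin n) : k.castSucc ≠ k.succ := by
  simp [Fin.ext_iff]

/-- The Artin representation of the braid group on `n + 1` strands on the free group of rank
`n + 1`. -/
def art (n : ℕ) : Br n →* MulAut (FreeGroup (Fin (n + 1))) :=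
  brLift (fun k => tw k.castSucc k.succ)
    (by
      intro i j h
      apply tw_comm <;> simp [Fin.ext_iff] <;> omega)
    (by
      intro i j h
      have : j.castSucc = i.succ := by simp [Fin.ext_iff, h]
      rw [this]
      apply tw_braid <;> simp [Fin.ext_iff] <;> omega)

@[simp] theorem art_s {n : ℕ} (k : Fin n) : art n (s k) = tw k.castSucc k.succ := brLift_s _ _ _ _

/-- The permutation of the strands. -/
def rho (n : ℕ) : Br n →* Equiv.Perm (Fin (n + 1)) :=
  brLift (fun k => Equiv.swap k.castSucc k.succ)
    (by
      intro i j h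
      apply (Equiv.Perm.Disjoint.commute ?_).eq
      apply Equiv.Perm.disjoint_swap_swap
      simp [Fin.ext_iff]; omega)
    (by
      intro i j h
      have : j.castSucc = i.succ := by simp [Fin.ext_iff, h]
      rw [this]
      have h1 : i.castSucc ≠ i.succ := cs_ne i
      have h2 : i.castSucc ≠ j.succ := by simp [Fin.ext_iff]; omega
      have h3 : i.succ ≠ j.succ := by simp [Fin.ext_iff]; omega
      ext x; simp only [Equiv.Perm.mul_apply, Equiv.swap_apply_def]; grind)

@[simp] theorem rho_s {n : ℕ} (k : Fin n) : rho n (s k) = Equiv.swap k.castSucc k.succ :=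
  brLift_s _ _ _ _

end BraidOrbit

namespace BraidOrbit

/-! ### Point-pushing: the kernel of forgetting the zeroth strand -/

section WordIdentities
variable {G : Type*} [Group G] {a b A : G}

theorem braid_assoc (h : a * b * a = b * a * b) (x : G) :
    a * (b * (a * x)) = b * (a * (b * x)) := by
  simpa [mul_assoc] using congrArg (· * x) h

theorem typeB_base (h : a * b * a = b * a * b) :
    b * a ^ 2 * b * a ^ 2 = a ^ 2 * b * a ^ 2 * b := by
  calc b * a ^ 2 * b * a ^ 2 = b * a * (a * b * a) * a := by simp [pow_two, mul_assoc]
    _ = b * a * (b * a * b) * a := by rw [h]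
    _ = (b * a * b) * (a * b * a) := by simp [mul_assoc]
    _ = (a * b * a) * (b * a * b) := by rw [h]
    _ = a * (b * a * b) * (a * b) := by simp [mul_assoc]
    _ = a ^ 2 * b * a ^ 2 * b := by rw [← h]; simp [pow_two, mul_assoc]

theorem typeB_conj (h : a * A * a * A = A * a * A * a) :
    A⁻¹ * (a⁻¹ * A * a) * A = a * A * a⁻¹ := by
  rw [eq_mul_inv_iff_mul_eq]
  calc A⁻¹ * (a⁻¹ * A * a) * A * a = A⁻¹ * a⁻¹ * (A * a * A * a) := by group
    _ = a * A := by rw [← h]; group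

/-- Conjugating the pair `(A, a)` by `b * a` yields `(a⁻¹ * A * a, b)`. -/
theorem typeB_step (h : a * b * a = b * a * b) (hb : A * b = b * A)
    (h2 : a * A * a * A = A * a * A * a) :
    b * (a⁻¹ * A * a) * b * (a⁻¹ * A * a) = (a⁻¹ * A * a) * b * (a⁻¹ * A * a) * b := by
  have e1 : (a⁻¹ * A * a) = (b * a)⁻¹ * A * (b * a) := by
    rw [mul_inv_rev]
    have : b⁻¹ * A * b = A := by rw [mul_assoc, hb, inv_mul_cancel_left]
    calc a⁻¹ * A * a = a⁻¹ * (b⁻¹ * A * b) * a := by rw [this]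
      _ = _ := by group
  have e2 : b = (b * a)⁻¹ * a * (b * a) := by
    rw [mul_assoc, eq_inv_mul_iff_mul_eq, ← mul_assoc, h]
  calc b * (a⁻¹ * A * a) * b * (a⁻¹ * A * a)
      = (b * a)⁻¹ * a * (b * a) * ((b * a)⁻¹ * A * (b * a)) * ((b * a)⁻¹ * a * (b * a)) *
          ((b * a)⁻¹ * A * (b * a)) := by rw [← e1, ← e2]
    _ = (b * a)⁻¹ * (a * A * a * A) * (b * a) := by group
    _ = (b * a)⁻¹ * (A * a * A * a) * (b * a) := by rw [h2]
    _ = ((b * a)⁻¹ * A * (b * a)) * ((b * a)⁻¹ * a * (b * a)) * ((b * a)⁻¹ * A * (b * a)) * ((b * a)⁻¹ * a * (b * a)) := by group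
    _ = _ := by rw [← e1, ← e2]

theorem comm_far_base (h : a * b * a = b * a * b) (hb : A * b = b * A) :
    a * (b⁻¹ * (a⁻¹ * A * a) * b) = (b⁻¹ * (a⁻¹ * A * a) * b) * a := by
  have e : a * b⁻¹ * a⁻¹ = b⁻¹ * a⁻¹ * b := by
    rw [mul_inv_eq_iff_eq_mul, mul_inv_eq_iff_eq_mul, eq_comm]
    simp only [mul_assoc]
    rw [inv_mul_eq_iff_eq_mul, inv_mul_eq_iff_eq_mul]
    simpa [mul_assoc] using h.symm
  calc a * (b⁻¹ * (a⁻¹ * A * a) * b) = (a * b⁻¹ * a⁻¹) * A * a * b := by group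
    _ = b⁻¹ * a⁻¹ * (b * A) * a * b := by rw [e]; group
    _ = b⁻¹ * a⁻¹ * A * (b * a * b) := by rw [← hb]; group
    _ = _ := by rw [← h]; group

end WordIdentities

variable {n : ℕ}

/-- The Artin generators indexed by all natural numbers, with the value `1` out of range. -/
def sN (j : ℕ) : Br n := if h : j < n then s ⟨j, h⟩ else 1

theorem sN_of_lt {j : ℕ} (h : j < n) : (sN j : Br n) = s ⟨j, h⟩ := dif_pos h
theorem sN_of_ge {j : ℕ} (h : n ≤ j) : (sN j : Br n) = 1 := dif_neg (by omega)
@[simp] theorem sN_val (k : Fin n) : (sN (k : ℕ) : Br n) = s k := sN_of_lt k.2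

theorem sN_comm {i j : ℕ} (h : i + 1 < j) : (sN i : Br n) * sN j = sN j * sN i := by
  by_cases hj : j < n
  · rw [sN_of_lt hj, sN_of_lt (by omega : i < n)]; exact s_comm h
  · rw [sN_of_ge (j := j) (by omega)]; simp

theorem sN_braid {i : ℕ} (h : i + 1 < n) :
    (sN i : Br n) * sN (i + 1) * sN i = sN (i + 1) * sN i * sN (i + 1) := by
  rw [sN_of_lt h, sN_of_lt (by omega : i < n)]; exact s_braid rfl

/-- The pure braid in which the zeroth strand encircles the strand `j + 1`. -/
def pA : ℕ → Br n
  | 0 => sN 0 ^ 2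
  | j + 1 => (sN (j + 1))⁻¹ * pA j * sN (j + 1)

theorem pA_comm_gt (j k : ℕ) (h : j + 1 < k) : (pA j : Br n) * sN k = sN k * pA j := by
  induction j with
  | zero =>
    have : Commute (sN 0 : Br n) (sN k) := sN_comm h
    exact (this.pow_left 2).eq
  | succ j ih =>
    have h1 : Commute (sN (j+1) : Br n) (sN k) := sN_comm h
    have h2 : Commute (pA j : Br n) (sN k) := ih (by omega)
    exact ((h1.inv_left.mul_left h2).mul_left h1).eq

theorem pA_typeB (j : ℕ) (h : j + 1 < n) :
    (sN (j+1) : Br n) * pA j * sN (j+1) * pA j = pA j * sN (j+1) * pA j * sN (j+1) := by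
  induction j with
  | zero => exact typeB_base (sN_braid h)
  | succ j ih => exact typeB_step (sN_braid h) (pA_comm_gt j (j+2) (by omega)) (ih (by omega))

theorem pA_comm_lt (j k : ℕ) (hk : 1 ≤ k) (h : k < j) (hj : j < n) :
    (sN k : Br n) * pA j = pA j * sN k := by
  induction j, h using Nat.le_induction with
  | base =>
    obtain ⟨k, rfl⟩ := Nat.exists_eq_add_of_le' hk
    exact comm_far_base (sN_braid hj) (pA_comm_gt k (k+2) (by omega))
  | succ j hj' ih =>
    have h1 : Commute (sN k : Br n) (sN (j+1)) := sN_comm (by omega)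
    have h2 : Commute (sN k : Br n) (pA j) := ih (by omega)
    exact ((h1.inv_right.mul_right h2).mul_right h1).eq

/-- The braid moving the strand `j` to the zeroth position. -/
def pT : ℕ → Br n
  | 0 => 1
  | j + 1 => pT j * sN j

theorem pT_comm_gt (j k : ℕ) (h : j < k) : (pT j : Br n) * sN k = sN k * pT j := by
  induction j with
  | zero => simp [pT]
  | succ j ih =>
    have h1 : Commute (sN j : Br n) (sN k) := sN_comm h
    have h2 : Commute (pT j : Br n) (sN k) := ih (by omega)
    exact (h2.mul_left h1).eq

theorem pT_comm_lt (j k : ℕ) (h : k + 2 ≤ j) (hj : j ≤ n) :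
    (pT j : Br n) * sN k = sN (k+1) * pT j := by
  induction j, h using Nat.le_induction with
  | base =>
    have hb : (sN k : Br n) * sN (k+1) * sN k = sN (k+1) * sN k * sN (k+1) := sN_braid (by omega)
    have hc : (pT k : Br n) * sN (k+1) = sN (k+1) * pT k := pT_comm_gt _ _ (by omega)
    calc (pT k : Br n) * sN k * sN (k+1) * sN k = pT k * (sN k * sN (k+1) * sN k) := by
          simp [mul_assoc]
      _ = (pT k * sN (k+1)) * (sN k * sN (k+1)) := by rw [hb]; simp [mul_assoc]
      _ = _ := by rw [hc]; simp [pT, mul_assoc]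
  | succ j hj' ih =>
    have hc : (sN j : Br n) * sN k = sN k * sN j := (sN_comm (by omega)).symm
    calc (pT j : Br n) * sN j * sN k = (pT j * sN k) * sN j := by rw [mul_assoc, hc, mul_assoc]
      _ = _ := by rw [ih (by omega)]; simp [pT, mul_assoc]

theorem pT_pA (j : ℕ) (hj : j < n) : (pT (j+1) : Br n) * sN j = pA j * pT j := by
  induction j with
  | zero => simp [pT, pA, pow_two]
  | succ j ih =>
    have hb : (sN j : Br n) * sN (j+1) * sN j = sN (j+1) * sN j * sN (j+1) := sN_braid (by omega)
    have hc : (pT j : Br n) * sN (j+1) = sN (j+1) * pT j := pT_comm_gt _ _ (by omega)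
    have h0 := ih (by omega)
    change (pT j : Br n) * sN j * sN (j+1) * sN (j+1) =
      (sN (j + 1))⁻¹ * pA j * sN (j + 1) * (pT j * sN j)
    simp only [mul_assoc]
    rw [eq_inv_mul_iff_mul_eq]
    calc (sN (j+1) : Br n) * (pT j * (sN j * (sN (j+1) * sN (j+1))))
        = (sN (j+1) * pT j) * (sN j * sN (j+1)) * sN (j+1) := by simp [mul_assoc]
      _ = pT j * (sN (j+1) * sN j * sN (j+1)) * sN (j+1) := by rw [← hc]; simp [mul_assoc]
      _ = pT j * sN j * (sN (j+1) * sN j * sN (j+1)) := by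
          rw [← hb]; simp only [mul_assoc] at hb ⊢; rw [hb]
      _ = (pT (j+1) * sN j) * (sN (j+1) * sN j) := by rw [← hb]; simp [mul_assoc, pT]
      _ = pA j * (pT j * sN (j+1)) * sN j := by rw [h0]; simp [mul_assoc]
      _ = _ := by rw [hc]; simp [mul_assoc]

/-- The inclusion of `Br n` into `Br (n + 1)` adding a trivial strand in position zero. -/
def sh (n : ℕ) : Br n →* Br (n + 1) :=
  brLift (fun k => s k.succ) (fun i j h => s_comm (by simpa using h))
    (fun i j h => s_braid (by simpa using h))

@[simp] theorem sh_s (k : Fin n) : sh n (s k) = s k.succ := brLift_s _ _ _ _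

/-- The point-pushing homomorphism: the free generator `j` goes to `pA j`. -/
def pu (n : ℕ) : FreeGroup (Fin (n + 1)) →* Br (n + 1) := FreeGroup.lift (fun j => pA (j : ℕ))

@[simp] theorem pu_of (j : Fin (n+1)) : pu n (FreeGroup.of j) = pA (j : ℕ) :=
  FreeGroup.lift_apply_of ..

theorem pu_art_s (k : Fin n) (x : FreeGroup (Fin (n+1))) :
    pu n (art n (s k) x) = s k.succ * pu n x * (s k.succ)⁻¹ := by
  suffices h : (pu n).comp (art n (s k)).toMonoidHom =
      (MulAut.conj (s k.succ)).toMonoidHom.comp (pu n) from DFunLike.congr_fun h x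
  apply FreeGroup.ext_hom
  intro j
  have es : (s k.succ : Br (n+1)) = sN ((k : ℕ) + 1) := by
    rw [sN_of_lt (by omega)]; rfl
  simp only [MonoidHom.comp_apply, MulEquiv.coe_toMonoidHom, art_s, MulAut.conj_apply, pu_of]
  by_cases h1 : j = k.succ
  · subst h1
    rw [tw_right (cs_ne k), pu_of, es]
    simp [pA, mul_assoc]
  by_cases h2 : j = k.castSucc
  · subst h2
    rw [tw_left (cs_ne k), es]
    have h := pA_typeB (n := n+1) k (by omega)
    simp only [map_mul, map_inv, pu_of, Fin.val_castSucc, Fin.val_succ, pA]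
    exact typeB_conj h
  · rw [tw_other h2 h1, pu_of, es, eq_mul_inv_iff_mul_eq]
    have h1' : (j : ℕ) ≠ k + 1 := fun h => h1 (Fin.ext h)
    have h2' : (j : ℕ) ≠ k := fun h => h2 (Fin.ext h)
    rcases Nat.lt_or_ge (j : ℕ) k with h | h
    · exact pA_comm_gt _ _ (by omega)
    · exact (pA_comm_lt _ _ (by omega) (by omega) (by omega)).symm

theorem pu_art (g : Br n) (x : FreeGroup (Fin (n+1))) :
    pu n (art n g x) = sh n g * pu n x * (sh n g)⁻¹ := by
  induction g using br_induction generalizing x with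
  | h1 => simp
  | hm g i ih => rw [map_mul, MulAut.mul_apply, ih, pu_art_s]; simp [mul_assoc]
  | hi g i ih =>
    rw [map_mul, MulAut.mul_apply, ih, map_inv]
    have := pu_art_s i ((art n (s i))⁻¹ x)
    rw [MulAut.apply_inv_self] at this
    rw [this]; simp [mul_assoc]

/-- The semidirect product of the free group by the braid group via the Artin representation. -/
abbrev SD (n : ℕ) := SemidirectProduct (FreeGroup (Fin (n+1))) (Br n) (art n)

/-- The homomorphism from the semidirect product onto the stabilizer of the zeroth strand. -/
def th (n : ℕ) : SD n →* Br (n+1) :=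
  SemidirectProduct.lift (pu n) (sh n) (by
    intro g; ext x; simp [pu_art])

theorem th_apply (x : SD n) : th n x = pu n x.left * sh n x.right := rfl

theorem th_mk (u : FreeGroup (Fin (n+1))) (b : Br n) : th n ⟨u, b⟩ = pu n u * sh n b := rfl

theorem exists_th_mul_pT (g : Br (n+1)) : ∃ x : SD n, ∃ j ≤ n + 1, g = th n x * pT j := by
  have key : ∀ j ≤ n + 1, ∀ k < n + 1, ∃ y : SD n, ∃ j' ≤ n + 1,
      (pT j : Br (n+1)) * sN k = th n y * pT j' := by
    intro j hj k hk
    have hs : ∀ i, 1 ≤ i → i < n + 1 → ∃ y : SD n, (sN i : Br (n+1)) = th n y := by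
      intro i h1 h2
      refine ⟨⟨1, s ⟨i - 1, by omega⟩⟩, ?_⟩
      rw [th_mk, sN_of_lt h2, sh_s]
      simp only [map_one, one_mul]; congr 1; ext; simp; omega
    rcases Nat.lt_trichotomy j k with h | h | h
    · obtain ⟨y, hy⟩ := hs k (by omega) hk
      exact ⟨y, j, hj, by rw [pT_comm_gt _ _ h, hy]⟩
    · subst h; exact ⟨1, j + 1, by omega, by simp [pT]⟩
    · rcases Nat.lt_or_ge j (k+2) with h' | h'
      · obtain rfl : j = k + 1 := by omega
        refine ⟨⟨FreeGroup.of ⟨k, hk⟩, 1⟩, k, by omega, ?_⟩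
        rw [pT_pA _ hk, th_mk]; simp
      · obtain ⟨y, hy⟩ := hs (k+1) (by omega) (by omega)
        exact ⟨y, j, hj, by rw [pT_comm_lt _ _ h' hj, hy]⟩
  have key2 : ∀ j ≤ n + 1, ∀ k < n + 1, ∃ y : SD n, ∃ j' ≤ n + 1,
      (pT j : Br (n+1)) * (sN k)⁻¹ = th n y * pT j' := by
    intro j hj k hk
    -- the generator permutes the cosets as an involution
    have hs : ∀ i, 1 ≤ i → i < n + 1 → ∃ y : SD n, (sN i : Br (n+1)) = th n y := by
      intro i h1 h2
      refine ⟨⟨1, s ⟨i - 1, by omega⟩⟩, ?_⟩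
      rw [th_mk, sN_of_lt h2, sh_s]
      simp only [map_one, one_mul]; congr 1; ext; simp; omega
    rcases Nat.lt_trichotomy j k with h | h | h
    · obtain ⟨y, hy⟩ := hs k (by omega) hk
      refine ⟨y⁻¹, j, hj, ?_⟩
      rw [map_inv, ← hy, mul_inv_eq_iff_eq_mul, mul_assoc, pT_comm_gt _ _ h, inv_mul_cancel_left]
    · subst h
      refine ⟨(⟨FreeGroup.of ⟨j, hk⟩, 1⟩)⁻¹, j + 1, by omega, ?_⟩
      rw [mul_inv_eq_iff_eq_mul, mul_assoc, pT_pA _ hk, map_inv, th_mk]; simp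
    · rcases Nat.lt_or_ge j (k+2) with h' | h'
      · obtain rfl : j = k + 1 := by omega
        exact ⟨1, k, by omega, by simp [pT]⟩
      · obtain ⟨y, hy⟩ := hs (k+1) (by omega) (by omega)
        refine ⟨y⁻¹, j, hj, ?_⟩
        rw [map_inv, ← hy, mul_inv_eq_iff_eq_mul, mul_assoc, pT_comm_lt _ _ h' hj,
          inv_mul_cancel_left]
  induction g using br_induction with
  | h1 => exact ⟨1, 0, by omega, by simp [pT]⟩
  | hm g i ih =>
    obtain ⟨x, j, hj, rfl⟩ := ih
    obtain ⟨y, j', hj', h⟩ := key j hj i i.2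
    exact ⟨x * y, j', hj', by rw [mul_assoc, ← sN_val, h, map_mul, mul_assoc]⟩
  | hi g i ih =>
    obtain ⟨x, j, hj, rfl⟩ := ih
    obtain ⟨y, j', hj', h⟩ := key2 j hj i i.2
    exact ⟨x * y, j', hj', by rw [mul_assoc, ← sN_val, h, map_mul, mul_assoc]⟩

theorem rho_sN {j : ℕ} (h : j < n) :
    rho n (sN j) = Equiv.swap ⟨j, by omega⟩ ⟨j + 1, by omega⟩ := by
  rw [sN_of_lt h, rho_s]; rfl

theorem rho_pA (j : ℕ) : rho n (pA j) = 1 := by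
  induction j with
  | zero =>
    by_cases h : 0 < n
    · simp [pA, rho_sN h, pow_two]
    · simp [pA, sN_of_ge (by omega : n ≤ 0)]
  | succ j ih => simp [pA, ih]

theorem rho_pu (u : FreeGroup (Fin (n+1))) : rho (n+1) (pu n u) = 1 := by
  suffices h : (rho (n+1)).comp (pu n) = 1 from DFunLike.congr_fun h u
  ext1 j; simp [rho_pA]

theorem rho_sh_zero (b : Br n) : rho (n+1) (sh n b) 0 = 0 := by
  induction b using br_induction with
  | h1 => simp
  | hm g i ih =>
    rw [map_mul, map_mul, Equiv.Perm.mul_apply, sh_s, rho_s,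
      Equiv.swap_apply_of_ne_of_ne (by simp [Fin.ext_iff]) (by simp [Fin.ext_iff]), ih]
  | hi g i ih =>
    rw [map_mul, map_mul, Equiv.Perm.mul_apply, map_inv, map_inv, sh_s, rho_s, Equiv.swap_inv,
      Equiv.swap_apply_of_ne_of_ne (by simp [Fin.ext_iff]) (by simp [Fin.ext_iff]), ih]

theorem rho_sh_succ (b : Br n) (j : Fin (n+1)) :
    rho (n+1) (sh n b) j.succ = (rho n b j).succ := by
  have hs : ∀ (i : Fin n) (j : Fin (n+1)),
      rho (n+1) (s i.succ) j.succ = (rho n (s i) j).succ := by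
    intro i j
    rw [rho_s, rho_s, ← Fin.succ_castSucc]
    exact (Function.Injective.swap_apply (Fin.succ_injective _) _ _ _)
  induction b using br_induction generalizing j with
  | h1 => simp
  | hm g i ih =>
    rw [map_mul, map_mul, Equiv.Perm.mul_apply, sh_s, hs, ih, map_mul, Equiv.Perm.mul_apply]
  | hi g i ih =>
    have e : rho (n+1) (s i.succ)⁻¹ j.succ = (rho n (s i)⁻¹ j).succ := by
      rw [map_inv, map_inv, Equiv.Perm.inv_eq_iff_eq, hs]; simp
    rw [map_mul, map_mul, Equiv.Perm.mul_apply, map_inv (sh n), sh_s, e, ih, map_mul,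
      Equiv.Perm.mul_apply]

theorem rho_pT (j : ℕ) (h : j ≤ n) : rho n (pT j) ⟨j, by omega⟩ = 0 := by
  induction j with
  | zero => simp [pT]
  | succ j ih =>
    rw [pT, map_mul, Equiv.Perm.mul_apply, rho_sN h, Equiv.swap_apply_right, ih (by omega)]

/-- The stabilizer of the zeroth strand is the image of the semidirect product. -/
theorem mem_range_th_iff (g : Br (n+1)) : (∃ x, th n x = g) ↔ rho (n+1) g 0 = 0 := by
  constructor
  · rintro ⟨x, rfl⟩
    rw [th_apply, map_mul, rho_pu, one_mul, rho_sh_zero]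
  · intro h
    obtain ⟨x, j, hj, rfl⟩ := exists_th_mul_pT g
    have h1 : rho (n+1) (th n x * pT j) ⟨j, by omega⟩ = 0 := by
      rw [map_mul, Equiv.Perm.mul_apply, rho_pT j hj, th_apply, map_mul, rho_pu, one_mul,
        rho_sh_zero]
    have h2 := (rho (n+1) (th n x * pT j)).injective (h.trans h1.symm)
    have : j = 0 := by simpa [Fin.ext_iff] using h2.symm
    subst this
    exact ⟨x, by simp [pT]⟩

end BraidOrbit

namespace BraidOrbit
open FreeGroup (of)

variable {n : ℕ}

theorem fg_ind {α : Type*} {C : FreeGroup α → Prop} (one : C 1) (of : ∀ a, C (of a))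
    (inv : ∀ x, C x → C x⁻¹) (mul : ∀ x y, C x → C y → C (x * y)) (x : FreeGroup α) : C x :=
  FreeGroup.induction_on x one of (fun _ h => inv _ h) mul

/-! ### Faithfulness of the Artin representation -/

/-- The homomorphism killing the zeroth free generator. -/
def qz (n : ℕ) : FreeGroup (Fin (n+2)) →* FreeGroup (Fin (n+1)) :=
  FreeGroup.lift (Fin.cases 1 of)

@[simp] theorem qz_zero : qz n (of 0) = 1 := by simp [qz]
@[simp] theorem qz_succ (j : Fin (n+1)) : qz n (of j.succ) = of j := by simp [qz]

theorem qz_art_sh (b : Br n) (x : FreeGroup (Fin (n+2))) :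
    qz n (art (n+1) (sh n b) x) = art n b (qz n x) := by
  have hs : ∀ (i : Fin n) x, qz n (art (n+1) (s i.succ) x) = art n (s i) (qz n x) := by
    intro i x
    suffices h : (qz n).comp (art (n+1) (s i.succ)).toMonoidHom =
      (art n (s i)).toMonoidHom.comp (qz n) from DFunLike.congr_fun h x
    apply FreeGroup.ext_hom
    intro j
    simp only [MonoidHom.comp_apply, MulEquiv.coe_toMonoidHom, art_s]
    have hne : i.succ.castSucc ≠ i.succ.succ := cs_ne _
    have hne' : i.castSucc ≠ i.succ := cs_ne _
    induction j using Fin.cases with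
    | zero =>
      rw [tw_other (by simp [Fin.ext_iff]) (by simp [Fin.ext_iff])]; simp
    | succ j =>
      rw [qz_succ]
      by_cases h1 : j = i.succ
      · subst h1; rw [tw_right hne, tw_right hne', ← Fin.succ_castSucc, qz_succ]
      by_cases h2 : j = i.castSucc
      · subst h2; rw [Fin.succ_castSucc, tw_left hne, tw_left hne', ← Fin.succ_castSucc]; simp
      rw [tw_other h2 h1, tw_other, qz_succ]
      · rw [← Fin.succ_castSucc]; simpa using h2
      · simpa using h1
  induction b using br_induction generalizing x with
  | h1 => simp
  | hm g i ih => rw [map_mul, map_mul, MulAut.mul_apply, ih, sh_s, hs, map_mul, MulAut.mul_apply]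
  | hi g i ih =>
    rw [map_mul, map_mul, MulAut.mul_apply, ih, map_mul, MulAut.mul_apply]
    congr 1
    rw [map_inv, sh_s, map_inv, map_inv]
    have := hs i ((art (n+1) (s i.succ))⁻¹ x)
    rw [MulAut.apply_inv_self] at this
    rw [this, MulAut.inv_apply_self]

theorem art_sh_zero (b : Br n) : art (n+1) (sh n b) (of 0) = of 0 := by
  have hs : ∀ i : Fin n, art (n+1) (s i.succ) (of 0) = of 0 := by
    intro i
    rw [art_s, tw_other (by simp [Fin.ext_iff]) (by simp [Fin.ext_iff])]
  induction b using br_induction with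
  | h1 => simp
  | hm g i ih => rw [map_mul, map_mul, MulAut.mul_apply, sh_s, hs, ih]
  | hi g i ih =>
    rw [map_mul, map_mul, MulAut.mul_apply, map_inv, map_inv, sh_s]
    have := congrArg (⇑(art (n+1) (s i.succ))⁻¹) (hs i)
    rw [MulAut.inv_apply_self] at this
    rw [← this, ih]

/-- A braid which acts trivially modulo the zeroth free generator and conjugates that generator
by an element that reduces to `u`. -/
def Pushes (g : Br (n+1)) (u : FreeGroup (Fin (n+1))) : Prop :=
  (∀ x, qz n (art (n+1) g x) = qz n x) ∧
    ∃ w, qz n w = u ∧ art (n+1) g (of 0) = w⁻¹ * of 0 * w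

theorem Pushes.mul {g h : Br (n+1)} {u v : FreeGroup (Fin (n+1))} (hg : Pushes g u)
    (hh : Pushes h v) : Pushes (g * h) (u * v) := by
  obtain ⟨h1, w, hw, h2⟩ := hg
  obtain ⟨h3, w', hw', h4⟩ := hh
  refine ⟨fun x => ?_, w * art (n+1) g w', ?_, ?_⟩
  · rw [map_mul, MulAut.mul_apply, h1, h3]
  · rw [map_mul, hw, h1, hw']
  · rw [map_mul, MulAut.mul_apply, h4, map_mul, map_mul, h2, map_inv]; group

theorem Pushes.inv {g : Br (n+1)} {u : FreeGroup (Fin (n+1))} (hg : Pushes g u) :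
    Pushes g⁻¹ u⁻¹ := by
  obtain ⟨h1, w, hw, h2⟩ := hg
  have h3 : ∀ x, qz n (art (n+1) g⁻¹ x) = qz n x := by
    intro x
    rw [← h1, ← MulAut.mul_apply, ← map_mul]; simp
  refine ⟨h3, (art (n+1) g⁻¹ w)⁻¹, ?_, ?_⟩
  · rw [map_inv, h3, hw]
  · have := congrArg (art (n+1) g⁻¹) h2
    rw [← MulAut.mul_apply, ← map_mul, inv_mul_cancel, map_one, MulAut.one_apply, map_mul, map_mul,
      map_inv] at this
    rw [inv_inv]
    nth_rw 2 [this]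
    group

theorem pushes_pA (j : Fin (n+1)) : Pushes (pA (j : ℕ) : Br (n+1)) (of j) := by
  obtain ⟨j, hj⟩ := j
  induction j with
  | zero =>
    have e : (sN 0 : Br (n+1)) = s 0 := sN_val (0 : Fin (n+1))
    have h01 : (0 : Fin (n+2)) ≠ 1 := by simp
    have e1 : art (n+1) (pA 0) = tw 0 1 * tw 0 1 := by
      rw [pA, e, pow_two, map_mul, art_s]; simp
    refine ⟨fun x => ?_, (of 0)⁻¹ * of 1 * of 0, ?_, ?_⟩
    · suffices h : (qz n).comp (art (n+1) (pA 0)).toMonoidHom = qz n from DFunLike.congr_fun h x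
      apply FreeGroup.ext_hom
      intro j
      simp only [MonoidHom.comp_apply, MulEquiv.coe_toMonoidHom, e1, MulAut.mul_apply]
      by_cases h0 : j = 0
      · subst h0; simp [tw_left h01, tw_right h01]
      by_cases h1 : j = 1
      · subst h1; simp [tw_left h01, tw_right h01]
      rw [tw_other h0 h1, tw_other h0 h1]
    · simpa using qz_succ (n := n) 0
    · simp only [e1, MulAut.mul_apply]; simp [tw_left h01, tw_right h01]
  | succ j ih =>
    obtain ⟨h1, w, hw, h2⟩ := ih (by omega)
    have es : (sN (j+1) : Br (n+1)) = sh n (s ⟨j, by omega⟩) := by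
      rw [sN_of_lt hj, sh_s]; rfl
    have e : (pA (j+1) : Br (n+1)) =
      sh n (s ⟨j, by omega⟩)⁻¹ * pA j * sh n (s ⟨j, by omega⟩) := by rw [pA, es, map_inv]
    simp only at h1 h2
    refine ⟨fun x => ?_, art (n+1) (sh n (s ⟨j, by omega⟩)⁻¹) w, ?_, ?_⟩
    · simp only [e, map_mul, MulAut.mul_apply]
      rw [qz_art_sh, h1, qz_art_sh, ← MulAut.mul_apply, ← map_mul]; simp
    · rw [qz_art_sh, hw]
      have := tw_right (cs_ne (⟨j, by omega⟩ : Fin n))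
      rw [← art_s] at this
      have h3 := congrArg (art n (s ⟨j, by omega⟩)⁻¹) this
      rw [← MulAut.mul_apply, ← map_mul] at h3
      simpa using h3.symm
    · simp only [e]
      rw [map_mul, map_mul, MulAut.mul_apply, MulAut.mul_apply, art_sh_zero, h2, map_mul, map_mul,
        art_sh_zero, map_inv]

theorem pushes_pu (u : FreeGroup (Fin (n+1))) : Pushes (pu n u) u := by
  induction u using fg_ind with
  | one => exact ⟨fun x => by simp, 1, by simp, by simp⟩
  | of j => rw [pu_of]; exact pushes_pA j
  | inv x h => rw [map_inv]; exact h.inv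
  | mul x y hx hy => rw [map_mul]; exact hx.mul hy

/-- Each generator acts on `FreeGroup (Fin (n+1)) × ℤ`: the zeroth one raises the counter over the
identity, the others translate the first coordinate. -/
def cntGen (n : ℕ) : Fin (n+2) → Equiv.Perm (FreeGroup (Fin (n+1)) × ℤ) :=
  Fin.cases
    { toFun := fun p => (p.1, p.2 + if p.1 = 1 then 1 else 0)
      invFun := fun p => (p.1, p.2 - if p.1 = 1 then 1 else 0)
      left_inv := fun p => by simp
      right_inv := fun p => by simp }
    (fun j => (Equiv.mulLeft (of j)).prodCongr (Equiv.refl ℤ))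

/-- The permutation representation detecting the centralizer of the zeroth free generator. -/
def cnt (n : ℕ) : FreeGroup (Fin (n+2)) →* Equiv.Perm (FreeGroup (Fin (n+1)) × ℤ) :=
  FreeGroup.lift (cntGen n)

/-- The first coordinate moves by the image of `w` after killing the zeroth generator, and the
counter moves by an amount independent of its value. -/
theorem cnt_spec (w : FreeGroup (Fin (n+2))) :
    ∀ g, ∃ c : ℤ, ∀ k, cnt n w (g, k) = (qz n w * g, k + c) := by
  induction w using fg_ind with
  | one => intro g; exact ⟨0, fun k => by simp⟩
  | of j =>
    intro g
    induction j using Fin.cases with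
    | zero => exact ⟨if g = 1 then 1 else 0, fun k => by simp [cnt, cntGen]⟩
    | succ j => exact ⟨0, fun k => by simp [cnt, cntGen]⟩
  | inv x h =>
    intro g
    obtain ⟨c, hc⟩ := h ((qz n x)⁻¹ * g)
    refine ⟨-c, fun k => ?_⟩
    rw [map_inv, Equiv.Perm.inv_eq_iff_eq, map_inv, hc]; simp
  | mul x y hx hy =>
    intro g
    obtain ⟨c, hc⟩ := hy g
    obtain ⟨d, hd⟩ := hx (qz n y * g)
    exact ⟨c + d, fun k => by rw [map_mul, Equiv.Perm.mul_apply, hc, hd, map_mul, mul_assoc,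
      add_assoc]⟩

/-- An element commuting with the zeroth free generator dies when that generator is killed: otherwise
the two sides would raise the counter differently. -/
theorem qz_eq_one_of_commute {w : FreeGroup (Fin (n+2))} (h : w * of 0 = of 0 * w) :
    qz n w = 1 := by
  obtain ⟨c, hc⟩ := cnt_spec w 1
  have h1 := congrArg (fun x => (cnt n x (1, 0)).2) h
  simp only [map_mul, Equiv.Perm.mul_apply, hc] at h1
  by_contra hne
  have e : ∀ p, cnt n (of 0) p = (p.1, p.2 + if p.1 = 1 then 1 else 0) := by
    intro p; simp [cnt, cntGen]
  rw [e, e, hc] at h1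
  simp [hne] at h1

/-- A braid fixing the zeroth strand and acting trivially has a trivially acting image on one strand
less, and trivial point-pushing part as soon as that image is trivial. -/
theorem art_th_eq_one {u : FreeGroup (Fin (n+1))} {b : Br n}
    (h : art (n+1) (th n ⟨u, b⟩) = 1) : art n b = 1 ∧ (b = 1 → u = 1) := by
  rw [th_mk] at h
  constructor
  · apply mulAut_ext
    intro j
    have h1 := (pushes_pu u).1 (art (n+1) (sh n b) (of j.succ))
    rw [← MulAut.mul_apply, ← map_mul, h, qz_art_sh] at h1
    simpa using h1.symm
  · rintro rfl
    obtain ⟨w, hw, h2⟩ := (pushes_pu u).2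
    rw [map_one, mul_one] at h
    rw [h] at h2
    rw [← hw]
    apply qz_eq_one_of_commute
    simp only [MulAut.one_apply, mul_assoc] at h2
    rw [eq_inv_mul_iff_mul_eq] at h2
    exact h2

/-- Braids send each free generator to a conjugate of the one prescribed by their permutation. -/
theorem art_conj (g : Br n) (j : Fin (n+1)) :
    ∃ w, art n g (of j) = w⁻¹ * of (rho n g j) * w := by
  have hs : ∀ (i : Fin n) j, ∃ w, art n (s i) (of j) = w⁻¹ * of (rho n (s i) j) * w := by
    intro i j
    rw [art_s, rho_s]
    by_cases h1 : j = i.succ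
    · subst h1; exact ⟨1, by rw [tw_right (cs_ne i)]; simp⟩
    by_cases h2 : j = i.castSucc
    · subst h2; exact ⟨of i.castSucc, by rw [tw_left (cs_ne i)]; simp⟩
    exact ⟨1, by rw [tw_other h2 h1, Equiv.swap_apply_of_ne_of_ne h2 h1]; simp⟩
  induction g using br_induction generalizing j with
  | h1 => exact ⟨1, by simp⟩
  | hm g i ih =>
    obtain ⟨w, hw⟩ := hs i j
    obtain ⟨v, hv⟩ := ih (rho n (s i) j)
    refine ⟨v * art n g w, ?_⟩
    rw [map_mul, MulAut.mul_apply, hw, map_mul, map_mul, map_mul, Equiv.Perm.mul_apply, hv,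
      map_inv]
    group
  | hi g i ih =>
    obtain ⟨w, hw⟩ := hs i (rho n (s i)⁻¹ j)
    obtain ⟨v, hv⟩ := ih (rho n (s i)⁻¹ j)
    have e : rho n (s i) (rho n (s i)⁻¹ j) = j := by rw [map_inv]; simp
    rw [e] at hw
    have e2 : art n (s i)⁻¹ (of j) =
      art n (s i)⁻¹ w * of (rho n (s i)⁻¹ j) * (art n (s i)⁻¹ w)⁻¹ := by
      have := congrArg (art n (s i)⁻¹) hw
      rw [← MulAut.mul_apply, ← map_mul, inv_mul_cancel, map_one, MulAut.one_apply, map_mul,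
        map_mul, map_inv (art n (s i)⁻¹)] at this
      rw [this]; group
    refine ⟨v * (art n g (art n (s i)⁻¹ w))⁻¹, ?_⟩
    rw [map_mul, MulAut.mul_apply, e2, map_mul, map_mul, hv, map_mul (rho n), Equiv.Perm.mul_apply,
      map_inv (art n g)]
    group

/-- The exponent sum of the letter `a`. -/
def expo {α : Type*} [DecidableEq α] (a : α) : FreeGroup α →* Multiplicative ℤ :=
  FreeGroup.lift (fun b => Multiplicative.ofAdd (if b = a then 1 else 0))

@[simp] theorem expo_of {α : Type*} [DecidableEq α] (a b : α) :
    expo a (of b) = Multiplicative.ofAdd (if b = a then 1 else 0) := by simp [expo]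

theorem rho_eq_one_of_art {g : Br n} (h : art n g = 1) : rho n g = 1 := by
  ext j : 1
  obtain ⟨w, hw⟩ := art_conj g j
  rw [h] at hw
  have h1 := congrArg (expo j) hw
  simp only [MulAut.one_apply, map_mul, map_inv, expo_of] at h1
  by_contra hne
  rw [mul_comm, ← mul_assoc] at h1
  simp at h1
  exact hne (by simpa using h1)

instance : Subsingleton (Br 0) := by
  refine ⟨fun a b => ?_⟩
  have : ∀ g : Br 0, g = 1 := fun g => by
    have := br_mem_of (⊥ : Subgroup (Br 0)) (fun i => i.elim0) g
    simpa using this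
  rw [this a, this b]

/-- Artin's theorem: the action of the braid group on the free group is faithful. -/
theorem art_faithful (g : Br n) (h : art n g = 1) : g = 1 := by
  induction n with
  | zero => exact Subsingleton.elim _ _
  | succ n ih =>
    have h0 : rho (n+1) g 0 = 0 := by rw [rho_eq_one_of_art h]; rfl
    obtain ⟨⟨u, b⟩, rfl⟩ := (mem_range_th_iff g).2 h0
    obtain ⟨h1, h2⟩ := art_th_eq_one h
    have hb := ih b h1
    rw [h2 hb, hb]; exact map_one _

theorem th_injective : Function.Injective (th n) := by
  rw [injective_iff_map_eq_one]
  rintro ⟨u, b⟩ h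
  obtain ⟨h1, h2⟩ := art_th_eq_one (u := u) (b := b) (by rw [h, map_one])
  have hb := art_faithful b h1
  rw [h2 hb, hb]; rfl

theorem pu_injective : Function.Injective (pu n) := by
  intro u v h
  have := @th_injective n ⟨u, 1⟩ ⟨v, 1⟩ (by rw [th_mk, th_mk, h])
  exact congrArg (·.left) this

end BraidOrbit

namespace BraidOrbit
open FreeGroup (of)

variable {n : ℕ}

/-! ### Crossing numbers of pairs of strands -/

section Crossing
variable {α : Type*} [DecidableEq α] (R : Type*) [CommRing R]

/-- The indicator of the unordered pair `{a, b}`. -/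
def pairInd (a b i j : α) : R := if (i = a ∧ j = b) ∨ (i = b ∧ j = a) then 1 else 0

/-- Exchange `a` and `b` in a pair of points and count one crossing if the pair is `{a, b}`. -/
def crGen (a b : α) : Equiv.Perm ((α × α) × R) where
  toFun p := ((Equiv.swap a b p.1.1, Equiv.swap a b p.1.2), p.2 + pairInd R a b p.1.1 p.1.2)
  invFun p := ((Equiv.swap a b p.1.1, Equiv.swap a b p.1.2),
    p.2 - pairInd R a b (Equiv.swap a b p.1.1) (Equiv.swap a b p.1.2))
  left_inv p := by simp
  right_inv p := by simp

variable {R}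

theorem crGen_apply (a b i j : α) (t : R) : crGen R a b ((i, j), t) =
    ((Equiv.swap a b i, Equiv.swap a b j), t + pairInd R a b i j) := rfl

theorem crGen_comm {a b c d : α} (h2 : a ≠ c) (h3 : a ≠ d) (h4 : b ≠ c) (h5 : b ≠ d) :
    crGen R a b * crGen R c d = crGen R c d * crGen R a b := by
  have hs : ∀ x, Equiv.swap a b (Equiv.swap c d x) = Equiv.swap c d (Equiv.swap a b x) := by
    intro x; simp only [Equiv.swap_apply_def]; grind
  have e1 : ∀ i j, pairInd R a b (Equiv.swap c d i) (Equiv.swap c d j) = pairInd R a b i j := by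
    intro i j; unfold pairInd; congr 1; simp only [Equiv.swap_apply_def]; grind
  have e2 : ∀ i j, pairInd R c d (Equiv.swap a b i) (Equiv.swap a b j) = pairInd R c d i j := by
    intro i j; unfold pairInd; congr 1; simp only [Equiv.swap_apply_def]; grind
  ext1 ⟨⟨i, j⟩, t⟩
  simp only [Equiv.Perm.mul_apply, crGen_apply, hs, e1, e2]
  rw [add_right_comm]

theorem crGen_braid {a b c : α} (h1 : a ≠ b) (h2 : a ≠ c) (h3 : b ≠ c) :
    crGen R a b * crGen R b c * crGen R a b = crGen R b c * crGen R a b * crGen R b c := by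
  have hs : ∀ x, Equiv.swap a b (Equiv.swap b c (Equiv.swap a b x)) =
      Equiv.swap b c (Equiv.swap a b (Equiv.swap b c x)) := by
    intro x; simp only [Equiv.swap_apply_def]; grind
  have e1 : ∀ i j, pairInd R b c (Equiv.swap a b i) (Equiv.swap a b j) = pairInd R a c i j := by
    intro i j; unfold pairInd; congr 1; simp only [Equiv.swap_apply_def]; grind
  have e2 : ∀ i j, pairInd R a b (Equiv.swap b c i) (Equiv.swap b c j) = pairInd R a c i j := by
    intro i j; unfold pairInd; congr 1; simp only [Equiv.swap_apply_def]; grind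
  have e3 : ∀ i j, pairInd R a c (Equiv.swap a b i) (Equiv.swap a b j) = pairInd R b c i j := by
    intro i j; unfold pairInd; congr 1; simp only [Equiv.swap_apply_def]; grind
  have e4 : ∀ i j, pairInd R a c (Equiv.swap b c i) (Equiv.swap b c j) = pairInd R a b i j := by
    intro i j; unfold pairInd; congr 1; simp only [Equiv.swap_apply_def]; grind
  ext1 ⟨⟨i, j⟩, t⟩
  simp only [Equiv.Perm.mul_apply, crGen_apply, hs, e1, e2, e3, e4]
  rw [add_right_comm (t + _), add_right_comm t, add_right_comm (t + _)]

end Crossing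

/-- The action of braids on pairs of strands decorated with a crossing counter in `R`. -/
def crHom (R : Type*) [CommRing R] (n : ℕ) :
    Br n →* Equiv.Perm ((Fin (n+1) × Fin (n+1)) × R) :=
  brLift (fun k => crGen R k.castSucc k.succ)
    (by
      intro i j h
      apply crGen_comm <;> simp [Fin.ext_iff] <;> omega)
    (by
      intro i j h
      have : j.castSucc = i.succ := by simp [Fin.ext_iff, h]
      rw [this]
      apply crGen_braid <;> simp [Fin.ext_iff] <;> omega)

@[simp] theorem crHom_s (R : Type*) [CommRing R] (k : Fin n) :
    crHom R n (s k) = crGen R k.castSucc k.succ := brLift_s _ _ _ _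

/-- The signed number of crossings between the strands starting at `i` and `j`. -/
def cr (g : Br n) (i j : Fin (n+1)) : ℤ := (crHom ℤ n g ((i, j), 0)).2

theorem crHom_exists (R : Type) [CommRing R] (g : Br n) (i j : Fin (n+1)) :
    ∃ c : ℤ, (∀ t : ℤ, crHom ℤ n g ((i, j), t) = ((rho n g i, rho n g j), t + c)) ∧
      (∀ t : R, crHom R n g ((i, j), t) = ((rho n g i, rho n g j), t + c)) := by
  induction g using br_induction generalizing i j with
  | h1 => exact ⟨0, by simp, by simp⟩
  | hm g k ih =>
    obtain ⟨c, h1, h2⟩ := ih (rho n (s k) i) (rho n (s k) j)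
    refine ⟨pairInd ℤ k.castSucc k.succ i j + c, fun t => ?_, fun t => ?_⟩
    · simp only [map_mul, Equiv.Perm.mul_apply]
      rw [crHom_s, crGen_apply, ← rho_s, h1, add_assoc]
    · simp only [map_mul, Equiv.Perm.mul_apply]
      rw [crHom_s, crGen_apply, ← rho_s, h2, add_assoc]
      congr 2; push_cast; congr 1; simp [pairInd]
  | hi g k ih =>
    obtain ⟨c, h1, h2⟩ := ih (rho n (s k)⁻¹ i) (rho n (s k)⁻¹ j)
    have e : ∀ x, Equiv.swap k.castSucc k.succ x = rho n (s k)⁻¹ x := by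
      intro x; rw [map_inv, rho_s, Equiv.swap_inv]
    have e2 : ∀ (S : Type _) [CommRing S] (t : S), crHom S n (s k)⁻¹ ((i, j), t) =
      ((rho n (s k)⁻¹ i, rho n (s k)⁻¹ j),
        t - pairInd S k.castSucc k.succ (rho n (s k)⁻¹ i) (rho n (s k)⁻¹ j)) := by
      intro S _ t
      rw [map_inv, crHom_s, ← e, ← e]; rfl
    refine ⟨- pairInd ℤ k.castSucc k.succ (rho n (s k)⁻¹ i) (rho n (s k)⁻¹ j) + c,
      fun t => ?_, fun t => ?_⟩
    · rw [map_mul, Equiv.Perm.mul_apply, e2, h1, map_mul, Equiv.Perm.mul_apply,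
        Equiv.Perm.mul_apply, sub_eq_add_neg, add_assoc]
    · rw [map_mul, Equiv.Perm.mul_apply, e2, h2, map_mul, Equiv.Perm.mul_apply,
        Equiv.Perm.mul_apply, sub_eq_add_neg, add_assoc]
      congr 2; push_cast; congr 1; simp [pairInd]

theorem crHom_apply (R : Type) [CommRing R] (g : Br n) (i j : Fin (n+1)) (t : R) :
    crHom R n g ((i, j), t) = ((rho n g i, rho n g j), t + cr g i j) := by
  obtain ⟨c, h1, h2⟩ := crHom_exists R g i j
  have : cr g i j = c := by rw [cr, h1]; simp
  rw [h2, this]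

theorem cr_s (k : Fin n) (i j : Fin (n+1)) : cr (s k) i j = pairInd ℤ k.castSucc k.succ i j := by
  simp [cr, crGen_apply]

@[simp] theorem cr_one (i j : Fin (n+1)) : cr (1 : Br n) i j = 0 := by simp [cr]

theorem cr_mul (g h : Br n) (i j : Fin (n+1)) :
    cr (g * h) i j = cr h i j + cr g (rho n h i) (rho n h j) := by
  have h1 := crHom_apply ℤ (g * h) i j 0
  rw [map_mul, Equiv.Perm.mul_apply, crHom_apply, crHom_apply] at h1
  simpa using (congrArg Prod.snd h1).symm

theorem cr_inv (g : Br n) (i j : Fin (n+1)) :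
    cr g⁻¹ i j = - cr g (rho n g⁻¹ i) (rho n g⁻¹ j) := by
  have := cr_mul g g⁻¹ i j
  rw [mul_inv_cancel, cr_one] at this; omega

theorem cr_symm (g : Br n) (i j : Fin (n+1)) : cr g i j = cr g j i := by
  have hs : ∀ (k : Fin n) i j, cr (s k) i j = cr (s k) j i := by
    intro k i j; rw [cr_s, cr_s]; unfold pairInd; congr 1; simp only [eq_iff_iff]; tauto
  induction g using br_induction generalizing i j with
  | h1 => simp
  | hm g k ih => rw [cr_mul, cr_mul, ih, hs]
  | hi g k ih => rw [cr_mul, cr_mul, ih, cr_inv, cr_inv, hs]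

theorem cr_self (g : Br n) (i : Fin (n+1)) : cr g i i = 0 := by
  have hs : ∀ (k : Fin n) i, cr (s k) i i = 0 := by
    intro k i; rw [cr_s]; simp only [pairInd, ite_eq_right_iff]
    have := cs_ne k
    grind
  induction g using br_induction generalizing i with
  | h1 => simp
  | hm g k ih => rw [cr_mul, ih, hs]; rfl
  | hi g k ih => rw [cr_mul, ih, cr_inv, hs]; rfl

/-- The pure braid group. -/
def pureBr (n : ℕ) : Subgroup (Br n) := (rho n).ker

theorem mem_pure {g : Br n} : g ∈ pureBr n ↔ rho n g = 1 := Iff.rfl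

instance : (pureBr n).Normal := inferInstanceAs (rho n).ker.Normal

theorem cr_mul_pure (g : Br n) {h : Br n} (hh : h ∈ pureBr n) (i j : Fin (n+1)) :
    cr (g * h) i j = cr g i j + cr h i j := by
  rw [cr_mul, mem_pure.1 hh, add_comm]; rfl

theorem cr_inv_pure {h : Br n} (hh : h ∈ pureBr n) (i j : Fin (n+1)) :
    cr h⁻¹ i j = - cr h i j := by
  rw [cr_inv, map_inv, mem_pure.1 hh]; simp

theorem cr_conj_pure (g : Br n) {h : Br n} (hh : h ∈ pureBr n) (i j : Fin (n+1)) :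
    cr (g * h * g⁻¹) i j = cr h (rho n g⁻¹ i) (rho n g⁻¹ j) := by
  rw [cr_mul, cr_mul_pure _ hh, cr_inv]; ring

/-- Crossing numbers of pure braids, between two fixed strands, as a homomorphism. -/
def crP (i j : Fin (n+1)) : pureBr n →* Multiplicative ℤ where
  toFun g := Multiplicative.ofAdd (cr g.1 i j)
  map_one' := by simp
  map_mul' g h := by rw [← ofAdd_add, ← cr_mul_pure _ h.2]; rfl

theorem cr_sh_succ (b : Br n) (i j : Fin (n+1)) : cr (sh n b) i.succ j.succ = cr b i j := by
  have hs : ∀ (k : Fin n) i j, cr (s k.succ) i.succ j.succ = cr (s k) i j := by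
    intro k i j
    rw [cr_s, cr_s, ← Fin.succ_castSucc]; simp [pairInd]
  induction b using br_induction generalizing i j with
  | h1 => simp
  | hm g k ih => rw [map_mul, cr_mul, cr_mul, rho_sh_succ, rho_sh_succ, ih, sh_s, hs]
  | hi g k ih =>
    rw [map_mul, cr_mul, cr_mul, rho_sh_succ, rho_sh_succ, ih, map_inv, sh_s, cr_inv, cr_inv,
      ← sh_s, ← map_inv, rho_sh_succ, rho_sh_succ, sh_s, hs]

theorem cr_sh_zero (b : Br n) (j : Fin (n+2)) : cr (sh n b) 0 j = 0 := by
  have hs : ∀ (k : Fin n) j, cr (s k.succ) 0 j = 0 := by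
    intro k j
    rw [cr_s]; simp [pairInd, Fin.ext_iff]
  induction b using br_induction generalizing j with
  | h1 => simp
  | hm g k ih => rw [map_mul, cr_mul, rho_sh_zero, ih, sh_s, hs]; rfl
  | hi g k ih =>
    rw [map_mul, cr_mul, rho_sh_zero, ih, map_inv, sh_s, cr_inv, ← sh_s, ← map_inv, rho_sh_zero,
      sh_s, hs]; rfl

theorem pA_pure (j : ℕ) : (pA j : Br n) ∈ pureBr n := rho_pA j
theorem pu_pure (u : FreeGroup (Fin (n+1))) : pu n u ∈ pureBr (n+1) := rho_pu u

theorem cr_sq_zero (i j : Fin (n+2)) : cr (pA 0 : Br (n+1)) i j = 2 * pairInd ℤ 0 1 i j := by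
  have e : (sN 0 : Br (n+1)) = s 0 := sN_val (0 : Fin (n+1))
  rw [pA, e, pow_two, cr_mul, cr_s, cr_s, rho_s]
  have : pairInd ℤ (0 : Fin (n+2)) 1 (Equiv.swap 0 1 i) (Equiv.swap 0 1 j)
    = pairInd ℤ (0 : Fin (n+2)) 1 i j := by
      unfold pairInd; congr 1; simp only [Equiv.swap_apply_def]; grind
  simp [this]; ring

theorem cr_pA (j : ℕ) (hj : j < n + 1) (i k : Fin (n+2)) :
    cr (pA j : Br (n+1)) i k = 2 * pairInd ℤ 0 (⟨j + 1, by omega⟩ : Fin (n+2)) i k := by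
  induction j generalizing i k with
  | zero => exact cr_sq_zero i k
  | succ j ih =>
    have e : (pA (j+1) : Br (n+1)) = (sN (j+1))⁻¹ * pA j * (sN (j+1))⁻¹⁻¹ := by rw [pA, inv_inv]
    rw [e, cr_conj_pure _ (pA_pure j), inv_inv, ih (by omega), rho_sN hj]
    congr 1
    have h0 : (0 : Fin (n+2)) ≠ ⟨j + 1, by omega⟩ := by simp [Fin.ext_iff]
    have h1 : (0 : Fin (n+2)) ≠ ⟨j + 1 + 1, by omega⟩ := by simp [Fin.ext_iff]
    unfold pairInd; congr 1; simp only [Equiv.swap_apply_def]; grind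

theorem cr_pu_zero (u : FreeGroup (Fin (n+1))) (j : Fin (n+1)) :
    cr (pu n u) 0 j.succ = 2 * (expo j u).toAdd := by
  induction u using fg_ind with
  | one => simp
  | of k =>
    rw [pu_of, cr_pA _ k.2, expo_of]
    have : (⟨(k : ℕ) + 1, by omega⟩ : Fin (n+2)) = k.succ := rfl
    rw [this]; simp [pairInd, eq_comm, Fin.succ_ne_zero]
  | inv x h => rw [map_inv, cr_inv_pure (pu_pure x), h]; simp
  | mul x y hx hy => rw [map_mul, cr_mul_pure _ (pu_pure y), hx, hy, map_mul, toAdd_mul]; ring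

theorem cr_pu_succ (u : FreeGroup (Fin (n+1))) (i j : Fin (n+1)) :
    cr (pu n u) i.succ j.succ = 0 := by
  induction u using fg_ind with
  | one => simp
  | of k => rw [pu_of, cr_pA _ k.2]; simp [pairInd, Fin.succ_ne_zero]
  | inv x h => rw [map_inv, cr_inv_pure (pu_pure x), h]; simp
  | mul x y hx hy => rw [map_mul, cr_mul_pure _ (pu_pure y), hx, hy]; rfl

theorem rho_th_succ (x : SD n) (j : Fin (n+1)) :
    rho (n+1) (th n x) j.succ = (rho n x.right j).succ := by
  rw [th_apply, map_mul, rho_pu, one_mul, rho_sh_succ]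

theorem cr_th_succ (x : SD n) (i j : Fin (n+1)) :
    cr (th n x) i.succ j.succ = cr x.right i j := by
  rw [th_apply, cr_mul, rho_sh_succ, rho_sh_succ, cr_pu_succ, cr_sh_succ, add_zero]

theorem cr_th_zero (x : SD n) (j : Fin (n+1)) :
    cr (th n x) 0 j.succ = 2 * (expo (rho n x.right j) x.left).toAdd := by
  rw [th_apply, cr_mul, rho_sh_succ, rho_sh_zero, cr_sh_zero, cr_pu_zero, zero_add]

theorem th_pure_iff (x : SD n) : th n x ∈ pureBr (n+1) ↔ x.right ∈ pureBr n := by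
  rw [mem_pure, mem_pure]
  constructor
  · intro h
    ext1 j
    have := rho_th_succ x j
    rw [h] at this
    simpa using this.symm
  · intro h
    ext1 j
    induction j using Fin.cases with
    | zero => exact (mem_range_th_iff _).1 ⟨x, rfl⟩
    | succ j => rw [rho_th_succ, h]; rfl

theorem exists_th_of_pure {g : Br (n+1)} (hg : g ∈ pureBr (n+1)) : ∃ x, th n x = g :=
  (mem_range_th_iff g).2 (by rw [mem_pure.1 hg]; rfl)

theorem sq_conj {G : Type*} [Group G] {a b : G} (h : a * b * a = b * a * b) :
    b ^ 2 = (a * b) * a ^ 2 * (a * b)⁻¹ := by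
  have e : b = (a * b) * a * (a * b)⁻¹ := by rw [h]; group
  nth_rw 1 [e]; rw [conj_pow]

/-- The pure braid group is generated by the conjugates of the square of one generator. -/
theorem pure_le_normalClosure (n : ℕ) :
    pureBr n ≤ Subgroup.normalClosure {((sN 0) ^ 2 : Br n)} := by
  induction n with
  | zero => intro g _; rw [Subsingleton.elim g 1]; exact one_mem _
  | succ n ih =>
    intro g hg
    obtain ⟨x, rfl⟩ := exists_th_of_pure hg
    have hx := (th_pure_iff x).1 hg
    have hA : ∀ j, (pA j : Br (n+1)) ∈ Subgroup.normalClosure {((sN 0) ^ 2 : Br (n+1))} := by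
      intro j
      induction j with
      | zero => exact Subgroup.subset_normalClosure rfl
      | succ j ih =>
        have := Subgroup.normalClosure_normal.conj_mem _ ih (sN (j+1))⁻¹
        rwa [inv_inv] at this
    rw [th_apply]
    apply mul_mem
    · generalize x.left = u
      induction u using fg_ind with
      | one => rw [map_one]; exact one_mem _
      | of j => rw [pu_of]; exact hA j
      | inv u h => rw [map_inv]; exact inv_mem h
      | mul u v hu hv => rw [map_mul]; exact mul_mem hu hv
    · have h1 := ih hx
      have h2 : Subgroup.normalClosure {((sN 0) ^ 2 : Br n)} ≤
          (Subgroup.normalClosure {((sN 0) ^ 2 : Br (n+1))}).comap (sh n) := by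
        apply Subgroup.normalClosure_le_normal
        rw [Set.singleton_subset_iff, SetLike.mem_coe, Subgroup.mem_comap, map_pow]
        by_cases hn : 0 < n
        · have e : sh n (sN 0) = sN 1 := by
            rw [sN_of_lt hn, sh_s, sN_of_lt (by omega)]; rfl
          have hb : (sN 0 : Br (n+1)) * sN 1 * sN 0 = sN 1 * sN 0 * sN 1 := sN_braid (by omega)
          have e2 : (sN 1 : Br (n+1)) ^ 2 = (sN 0 * sN 1) * sN 0 ^ 2 * (sN 0 * sN 1)⁻¹ :=
            sq_conj hb
          rw [e, e2]
          exact Subgroup.normalClosure_normal.conj_mem _ (hA 0) _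
        · have e : (sN 0 : Br n) = 1 := sN_of_ge (by omega)
          rw [e, map_one, one_pow]; exact one_mem _
      exact h2 h1

theorem pure_induction {p : Br n → Prop} (h1 : p 1)
    (hm : ∀ x y, x ∈ pureBr n → y ∈ pureBr n → p x → p y → p (x * y))
    (hi : ∀ x, x ∈ pureBr n → p x → p x⁻¹)
    (hc : ∀ g : Br n, p (g * sN 0 ^ 2 * g⁻¹)) (x : Br n) (hx : x ∈ pureBr n) : p x := by
  have hx' := pure_le_normalClosure n hx
  rw [Subgroup.normalClosure] at hx'
  have hsub : Subgroup.closure (Group.conjugatesOfSet {((sN 0) ^ 2 : Br n)}) ≤ pureBr n := by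
    apply Subgroup.normalClosure_le_normal
    rw [Set.singleton_subset_iff]; exact pA_pure 0
  clear hx
  induction hx' using Subgroup.closure_induction with
  | mem x h =>
    rw [Group.mem_conjugatesOfSet_iff] at h
    obtain ⟨a, ha, hax⟩ := h
    obtain rfl : a = _ := ha
    obtain ⟨c, rfl⟩ := isConj_iff.1 hax
    exact hc c
  | one => exact h1
  | mul x y hx hy ihx ihy => exact hm x y (hsub hx) (hsub hy) ihx ihy
  | inv x hx ih => exact hi x (hsub hx) ih

theorem cr_even {g : Br n} (hg : g ∈ pureBr n) (i j : Fin (n+1)) : Even (cr g i j) := by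
  refine pure_induction (p := fun g => ∀ i j, Even (cr g i j)) ?_ ?_ ?_ ?_ g hg i j
  · simp
  · intro x y hx hy ihx ihy i j; rw [cr_mul_pure _ hy]; exact (ihx i j).add (ihy i j)
  · intro x hx ih i j; rw [cr_inv_pure hx]; exact (ih i j).neg
  · intro g i j
    have hp : (sN 0 ^ 2 : Br n) ∈ pureBr n := pA_pure 0
    rw [cr_conj_pure _ hp]
    cases n with
    | zero => rw [Subsingleton.elim (sN 0 ^ 2 : Br 0) 1]; simp
    | succ n => exact ⟨_, (cr_sq_zero _ _).trans (two_mul _)⟩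

end BraidOrbit

namespace BraidOrbit
open FreeGroup (of)

variable {n : ℕ}

/-! ### The rotation braid and the boundary word -/

theorem art_pT (m : ℕ) (hm : m ≤ n) (j : Fin (n+1)) : art n (pT m) (of j) =
    if h : (j : ℕ) < m then (of 0)⁻¹ * of ⟨j + 1, by omega⟩ * of 0
    else if (j : ℕ) = m then of 0 else of j := by
  induction m generalizing j with
  | zero =>
    by_cases h : (j : ℕ) = 0
    · have : j = 0 := Fin.ext h
      subst this; simp [pT]
    · simp [pT, h]
  | succ m ih =>
    rw [pT, map_mul, MulAut.mul_apply, sN_of_lt (by omega : m < n), art_s]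
    have hne := cs_ne (⟨m, by omega⟩ : Fin n)
    have ih := ih (by omega)
    by_cases h1 : j = Fin.succ ⟨m, by omega⟩
    · subst h1
      rw [tw_right hne, ih]; simp
    by_cases h2 : j = Fin.castSucc ⟨m, by omega⟩
    · subst h2
      rw [tw_left hne]
      simp only [map_mul, map_inv, ih]; simp
    have h1' : (j : ℕ) ≠ m + 1 := fun h => h1 (Fin.ext h)
    have h2' : (j : ℕ) ≠ m := fun h => h2 (Fin.ext h)
    rw [tw_other h2 h1, ih]
    by_cases h3 : (j : ℕ) < m
    · rw [dif_pos h3, dif_pos (by omega)]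
    · rw [dif_neg h3, dif_neg (by omega), if_neg h2', if_neg h1']

/-- Cyclic rotation of the free generators. -/
def rot (n : ℕ) : MulAut (FreeGroup (Fin (n+1))) := FreeGroup.freeGroupCongr (finRotate (n+1))

@[simp] theorem rot_of (j : Fin (n+1)) : rot n (of j) = of (j + 1) := by
  simp [rot]

theorem rot_eq (x : FreeGroup (Fin (n+1))) :
    rot n x = of 0 * art n (pT n) x * (of 0)⁻¹ := by
  suffices h : rot n = MulAut.conj (of 0) * art n (pT n) by rw [h]; simp
  apply mulAut_ext
  intro j
  rw [rot_of, MulAut.mul_apply, art_pT _ le_rfl, MulAut.conj_apply]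
  by_cases h : (j : ℕ) < n
  · rw [dif_pos h]
    have : j + 1 = ⟨j + 1, by omega⟩ := by
      ext; rw [Fin.val_add_one_of_lt (by rw [Fin.lt_def]; simpa using h)]
    rw [this]; group
  · rw [dif_neg h, if_pos (by omega)]
    have : j = Fin.last n := by ext; simp; omega
    rw [this]; simp

/-- The braid in `Br (n+1)` whose conjugation action on the point-pushing subgroup is the cyclic
rotation of its free generators. -/
def yrot (n : ℕ) : Br (n+1) := th n ⟨of 0, pT n⟩

theorem conj_pu_th (x : SD n) (u : FreeGroup (Fin (n+1))) :
    th n x * pu n u * (th n x)⁻¹ = pu n (x.left * art n x.right u * x.left⁻¹) := by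
  rw [th_apply, map_mul, map_mul, pu_art, map_inv]; group

theorem conj_pu_yrot (u : FreeGroup (Fin (n+1))) :
    yrot n * pu n u * (yrot n)⁻¹ = pu n (rot n u) := by
  rw [yrot, conj_pu_th, rot_eq]

/-- The word `x_{j-1} ⋯ x_1 x_0`. -/
def xiAux : ℕ → FreeGroup (Fin (n+1))
  | 0 => 1
  | j + 1 => (if h : j < n + 1 then of ⟨j, h⟩ else 1) * xiAux j

/-- The boundary word `x_n ⋯ x_1 x_0`. -/
def xi (n : ℕ) : FreeGroup (Fin (n+1)) := xiAux (n+1)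

theorem art_s_xiAux (k : Fin n) (j : ℕ) (h : j ≠ k + 1) :
    art n (s k) (xiAux j) = xiAux j := by
  rw [art_s]
  have hlo : ∀ j : ℕ, j ≤ k → tw k.castSucc k.succ (xiAux j) = xiAux j := by
    intro j hj
    induction j with
    | zero => simp [xiAux]
    | succ j ih =>
      rw [xiAux, map_mul, ih (by omega), dif_pos (by omega), tw_other] <;>
        simp [Fin.ext_iff] <;> omega
  rcases Nat.lt_or_ge j (k + 2) with h' | h'
  · exact hlo j (by omega)
  · induction j, h' using Nat.le_induction with
    | base =>
      have h1 : (⟨(k : ℕ) + 1, by omega⟩ : Fin (n+1)) = k.succ := rfl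
      have h2 : (⟨(k : ℕ), by omega⟩ : Fin (n+1)) = k.castSucc := rfl
      rw [xiAux, xiAux, dif_pos (by omega), dif_pos (by omega), map_mul, map_mul, hlo _ le_rfl,
        h1, h2, tw_right (cs_ne k), tw_left (cs_ne k)]
      group
    | succ j hj ih =>
      rw [xiAux, map_mul, ih (by omega)]
      congr 1
      split_ifs
      · rw [tw_other] <;> simp [Fin.ext_iff] <;> omega
      · simp

theorem art_xi (g : Br n) : art n g (xi n) = xi n := by
  have hs : ∀ k : Fin n, art n (s k) (xi n) = xi n := fun k => art_s_xiAux k _ (by omega)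
  induction g using br_induction with
  | h1 => simp
  | hm g i ih => rw [map_mul, MulAut.mul_apply, hs, ih]
  | hi g i ih =>
    rw [map_mul, MulAut.mul_apply, map_inv]
    have := congrArg (⇑(art n (s i))⁻¹) (hs i)
    rw [MulAut.inv_apply_self] at this
    rw [← this, ih]

theorem expo_xi (k : Fin (n+1)) : (expo k (xi n)).toAdd = 1 := by
  have : ∀ j ≤ n + 1, (expo k (xiAux j)).toAdd = if (k : ℕ) < j then 1 else 0 := by
    intro j hj
    induction j with
    | zero => simp [xiAux]
    | succ j ih =>
      rw [xiAux, map_mul, toAdd_mul, ih (by omega), dif_pos (by omega), expo_of, toAdd_ofAdd]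
      simp only [Fin.ext_iff]
      split_ifs <;> omega
  rw [xi, this _ le_rfl]; simp; omega

end BraidOrbit

namespace BraidOrbit
open FreeGroup (of)

/-! ### Finitely generated normal subgroups, commuting elements and centres of free groups -/

section NormalFG
variable {α : Type*}

/-- Translation of the levels of a free group whose letters carry an integer level. -/
def lev (α : Type*) : MulAut (FreeGroup (α × ℤ)) :=
  FreeGroup.freeGroupCongr ((Equiv.refl α).prodCongr (Equiv.addRight (1 : ℤ)))

@[simp] theorem lev_of (b : α) (k : ℤ) : lev α (of (b, k)) = of (b, k + 1) := by simp [lev]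

theorem lev_zpow_of (b : α) (k l : ℤ) : (lev α ^ l) (of (b, k)) = of (b, k + l) := by
  induction l using Int.induction_on generalizing k with
  | zero => simp
  | succ l ih => rw [zpow_add_one, MulAut.mul_apply, lev_of, ih]; congr 2; ring
  | pred l ih =>
    have e : (lev α)⁻¹ (of (b, k)) = of (b, k - 1) := by
      have := congrArg (⇑(lev α)⁻¹) (lev_of b (k - 1))
      rw [MulAut.inv_apply_self] at this
      rw [this]; simp
    rw [zpow_sub_one, MulAut.mul_apply, e, ih]; congr 2; ring

/-- The free group with integer levels, extended by the level translation. -/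
abbrev LevSD (α : Type*) :=
  SemidirectProduct (FreeGroup (α × ℤ)) (Multiplicative ℤ) (zpowersHom _ (lev α))

/-- The embedding of a free group sending the letter `a` to the level translation. -/
def toLev [DecidableEq α] (a : α) : FreeGroup α →* LevSD α :=
  FreeGroup.lift (fun b => if b = a then SemidirectProduct.inr (Multiplicative.ofAdd 1)
    else SemidirectProduct.inl (of (b, 0)))

theorem fromLev_aux (a : α) (l : ℤ) (x : FreeGroup (α × ℤ)) :
    FreeGroup.lift (fun p : α × ℤ => of a ^ p.2 * of p.1 * (of a ^ p.2)⁻¹) ((lev α ^ l) x) =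
    of a ^ l * FreeGroup.lift (fun p : α × ℤ => of a ^ p.2 * of p.1 * (of a ^ p.2)⁻¹) x *
      (of a ^ l)⁻¹ := by
  suffices h : (FreeGroup.lift (fun p : α × ℤ => of a ^ p.2 * of p.1 * (of a ^ p.2)⁻¹)).comp
      (lev α ^ l).toMonoidHom = (MulAut.conj (of a ^ l)).toMonoidHom.comp
      (FreeGroup.lift (fun p : α × ℤ => of a ^ p.2 * of p.1 * (of a ^ p.2)⁻¹)) from
    DFunLike.congr_fun h x
  apply FreeGroup.ext_hom
  rintro ⟨b, k⟩
  simp only [MonoidHom.comp_apply, MulEquiv.coe_toMonoidHom, lev_zpow_of, FreeGroup.lift_apply_of,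
    MulAut.conj_apply]
  rw [add_comm k l, zpow_add]; group

/-- The left inverse of `toLev`. -/
def fromLev (a : α) : LevSD α →* FreeGroup α :=
  SemidirectProduct.lift
    (FreeGroup.lift (fun p : α × ℤ => of a ^ p.2 * of p.1 * (of a ^ p.2)⁻¹))
    (zpowersHom _ (of a)) (by
      intro g
      apply MonoidHom.ext
      intro x
      exact fromLev_aux a g.toAdd x)

theorem fromLev_toLev [DecidableEq α] (a : α) (x : FreeGroup α) : fromLev a (toLev a x) = x := by
  suffices h : (fromLev a).comp (toLev a) = MonoidHom.id _ from DFunLike.congr_fun h x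
  apply FreeGroup.ext_hom
  intro b
  by_cases h : b = a
  · subst h; simp [toLev, fromLev, zpowersHom_apply]
  · simp [toLev, fromLev, h]

theorem toLev_right [DecidableEq α] (a : α) (x : FreeGroup α) : (toLev a x).right = expo a x := by
  suffices h : SemidirectProduct.rightHom.comp (toLev a) = expo a from DFunLike.congr_fun h x
  apply FreeGroup.ext_hom
  intro b
  by_cases h : b = a
  · subst h; simp [toLev]
  · simp [toLev, h]

/-- The subgroup generated by the letters of level at most `M` in absolute value. -/
def levBd (α : Type*) (M : ℕ) : Subgroup (FreeGroup (α × ℤ)) :=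
  Subgroup.closure {x | ∃ p : α × ℤ, |p.2| ≤ M ∧ x = of p}

theorem levBd_mono {M M' : ℕ} (h : M ≤ M') : levBd α M ≤ levBd α M' := by
  apply Subgroup.closure_mono
  rintro x ⟨p, hp, rfl⟩
  exact ⟨p, hp.trans (by exact_mod_cast h), rfl⟩

theorem exists_levBd (x : FreeGroup (α × ℤ)) : ∃ M, x ∈ levBd α M := by
  induction x using fg_ind with
  | one => exact ⟨0, one_mem _⟩
  | of p => exact ⟨p.2.natAbs, Subgroup.subset_closure ⟨p, by simp, rfl⟩⟩
  | inv x h => obtain ⟨M, h⟩ := h; exact ⟨M, inv_mem h⟩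
  | mul x y hx hy =>
    obtain ⟨M, hx⟩ := hx
    obtain ⟨M', hy⟩ := hy
    exact ⟨max M M', mul_mem (levBd_mono (le_max_left _ _) hx) (levBd_mono (le_max_right _ _) hy)⟩

/-- Translating by more than twice the bound leaves no room for a nontrivial element. -/
theorem eq_one_of_levBd {M : ℕ} {y : FreeGroup (α × ℤ)} (h1 : y ∈ levBd α M)
    (h2 : (lev α ^ (2 * (M : ℤ) + 1)) y ∈ levBd α M) : y = 1 := by
  classical
  let r : FreeGroup (α × ℤ) →* FreeGroup (α × ℤ) :=
    FreeGroup.lift (fun p => if |p.2| ≤ M then of p else 1)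
  have hr : ∀ z ∈ levBd α M, r z = z := by
    intro z hz
    have : levBd α M ≤ r.eqLocus (MonoidHom.id _) := by
      rw [levBd, Subgroup.closure_le]
      rintro _ ⟨p, hp, rfl⟩
      change r (of p) = of p
      simp [r, hp]
    exact this hz
  have hr' : r ((lev α ^ (2 * (M : ℤ) + 1)) y) = 1 := by
    have : levBd α M ≤ (r.comp (lev α ^ (2 * (M : ℤ) + 1)).toMonoidHom).ker := by
      rw [levBd, Subgroup.closure_le]
      rintro _ ⟨⟨b, k⟩, hp, rfl⟩
      change r ((lev α ^ (2 * (M : ℤ) + 1)) (of (b, k))) = 1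
      rw [lev_zpow_of]
      have hk : ¬ |k + (2 * (M : ℤ) + 1)| ≤ M := by
        rw [abs_le] at hp ⊢; simp only at hp; omega
      simp [r, hk]
    exact this h1
  rw [hr _ h2] at hr'
  simpa using hr'

/-- A finitely generated normal subgroup of a free group on which some letter has zero exponent sum
is trivial. -/
theorem normal_fg_trivial [DecidableEq α] (a : α) (H : Subgroup (FreeGroup α)) (hN : H.Normal) (hF : H.FG)
    (he : ∀ x ∈ H, expo a x = 1) : H = ⊥ := by
  obtain ⟨S, hS⟩ := hF
  have hfin : ∃ M, ∀ x ∈ S, (toLev a x).left ∈ levBd α M := by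
    classical
    choose f hf using fun x : FreeGroup α => exists_levBd (toLev a x).left
    exact ⟨S.sup f, fun x hx => levBd_mono (Finset.le_sup hx) (hf x)⟩
  obtain ⟨M, hM⟩ := hfin
  have hinl : ∀ x ∈ H, toLev a x = SemidirectProduct.inl (toLev a x).left := by
    intro x hx
    apply SemidirectProduct.ext
    · simp
    · rw [toLev_right, he x hx]; simp
  have hall : ∀ x ∈ H, (toLev a x).left ∈ levBd α M := by
    have : H ≤ (((levBd α M).map (SemidirectProduct.inl : _ →* LevSD α)).comap (toLev a)) := by
      rw [← hS, Subgroup.closure_le]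
      intro x hx
      have hx' : x ∈ H := hS ▸ Subgroup.subset_closure hx
      exact ⟨_, hM x hx, (hinl x hx').symm⟩
    intro x hx
    obtain ⟨y, hy, e⟩ := this hx
    rw [← e]; simpa using hy
  rw [eq_bot_iff]
  intro x hx
  have h1 := hall x hx
  have h2 := hall _ (hN.conj_mem x hx (of a ^ (2 * (M : ℤ) + 1)))
  have e : toLev a (of a ^ (2 * (M : ℤ) + 1)) =
      SemidirectProduct.inr (Multiplicative.ofAdd (2 * (M : ℤ) + 1)) := by
    rw [map_zpow]
    have : toLev a (of a) = SemidirectProduct.inr (Multiplicative.ofAdd 1) := by simp [toLev]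
    rw [this, ← map_zpow, ← ofAdd_zsmul]; simp
  rw [map_mul, map_mul, map_inv, e, hinl x hx, ← map_inv, ← SemidirectProduct.inl_aut,
    SemidirectProduct.left_inl, zpowersHom_apply, toAdd_ofAdd] at h2
  have h3 := eq_one_of_levBd h1 h2
  have h4 := fromLev_toLev a x
  rw [hinl x hx, h3] at h4
  simpa using h4.symm

end NormalFG

section Heis
variable {α : Type*} [DecidableEq α]

/-- The Heisenberg action of a free group on `ℤ × ℤ`. -/
def heis (a b : α) : FreeGroup α →* Equiv.Perm (ℤ × ℤ) :=
  FreeGroup.lift (fun c =>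
    { toFun := fun p => (p.1 + (if c = a then 1 else 0), p.2 + p.1 * (if c = b then 1 else 0))
      invFun := fun p => (p.1 - (if c = a then 1 else 0),
        p.2 - (p.1 - (if c = a then 1 else 0)) * (if c = b then 1 else 0))
      left_inv := fun p => by simp
      right_inv := fun p => by simp })

theorem heis_spec (a b : α) (x : FreeGroup α) : ∃ c : ℤ, ∀ p q, heis a b x (p, q) =
    (p + (expo a x).toAdd, q + c + p * (expo b x).toAdd) := by
  induction x using fg_ind with
  | one => exact ⟨0, by simp⟩
  | of d => exact ⟨0, by simp [heis]⟩
  | inv x h =>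
    obtain ⟨c, h⟩ := h
    refine ⟨-c + (expo a x).toAdd * (expo b x).toAdd, fun p q => ?_⟩
    rw [map_inv, Equiv.Perm.inv_eq_iff_eq, h]; ext <;> simp; ring
  | mul x y hx hy =>
    obtain ⟨c, hx⟩ := hx
    obtain ⟨d, hy⟩ := hy
    refine ⟨c + d + (expo a y).toAdd * (expo b x).toAdd, fun p q => ?_⟩
    rw [map_mul, Equiv.Perm.mul_apply, hy, hx]
    ext <;> simp <;> ring

/-- Commuting elements of a free group have proportional exponent sums. -/
theorem expo_of_commute {x y : FreeGroup α} (h : x * y = y * x) (a b : α) :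
    (expo a y).toAdd * (expo b x).toAdd = (expo a x).toAdd * (expo b y).toAdd := by
  obtain ⟨c, hx⟩ := heis_spec a b x
  obtain ⟨d, hy⟩ := heis_spec a b y
  have h1 := congrArg (fun z => (heis a b z (0, 0)).2) h
  simp only [map_mul, Equiv.Perm.mul_apply, hx, hy] at h1
  linarith

/-- A free group of rank at least two has trivial centre. -/
theorem center_trivial {a b : α} (hab : a ≠ b) {x : FreeGroup α}
    (h : ∀ y, x * y = y * x) : x = 1 := by
  have h1 : (expo a x).toAdd = 0 := by
    have := expo_of_commute (h (of b)) a b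
    simpa [hab.symm] using this.symm
  have h2 : Subgroup.zpowers x = ⊥ := by
    apply normal_fg_trivial a
    · constructor
      intro y hy g
      obtain ⟨k, rfl⟩ := Subgroup.mem_zpowers_iff.1 hy
      have : Commute x g := h g
      rw [← (this.zpow_left k).eq, mul_inv_cancel_right]; exact hy
    · exact ⟨{x}, by simp [Subgroup.zpowers_eq_closure]⟩
    · intro y hy
      obtain ⟨k, rfl⟩ := Subgroup.mem_zpowers_iff.1 hy
      rw [map_zpow]
      have : expo a x = 1 := h1
      rw [this, one_zpow]
  have := Subgroup.mem_zpowers x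
  rw [h2] at this
  simpa using this

end Heis

/-! ### Pure braids with vanishing crossing numbers -/

theorem fg_comap {G H : Type*} [Group G] [Group H] (f : G →* H) (hf : Function.Injective f)
    (V : Subgroup H) (hV : V ≤ f.range) (hF : V.FG) : (V.comap f).FG := by
  classical
  obtain ⟨S, hS⟩ := hF
  have hsub : (S : Set H) ⊆ Set.range f := by
    intro x hx
    exact hV (hS ▸ Subgroup.subset_closure hx)
  obtain ⟨T, hT⟩ := Set.subset_range_iff_exists_image_eq.1 hsub
  have hTf : T.Finite := Set.Finite.of_finite_image (by rw [hT]; exact S.finite_toSet) hf.injOn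
  refine ⟨hTf.toFinset, ?_⟩
  rw [Set.Finite.coe_toFinset, ← hS, ← hT, ← MonoidHom.map_closure,
    Subgroup.comap_map_eq_self_of_injective hf]

/-- A finitely generated subgroup of the pure braid group that is normalized by the pure braid
group and on which all crossing numbers vanish is trivial. -/
theorem pure_fg_trivial {n : ℕ} (V : Subgroup (Br n)) (hF : V.FG) (hP : V ≤ pureBr n)
    (hN : ∀ g ∈ pureBr n, ∀ v ∈ V, g * v * g⁻¹ ∈ V) (hc : ∀ v ∈ V, ∀ i j, cr v i j = 0) :
    V = ⊥ := by
  induction n with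
  | zero => exact Subsingleton.elim _ _
  | succ n ih =>
    have hr : V ≤ (th n).range := fun v hv => exists_th_of_pure (hP hv)
    have hW : (V.comap (th n)).FG := fg_comap _ th_injective V hr hF
    have h1 : (V.comap (th n)).map SemidirectProduct.rightHom = ⊥ := by
      apply ih
      · obtain ⟨S, hS⟩ := hW
        classical
        exact ⟨S.image SemidirectProduct.rightHom, by
          rw [← hS, MonoidHom.map_closure, Finset.coe_image]⟩
      · rintro _ ⟨x, hx, rfl⟩
        exact (th_pure_iff x).1 (hP hx)
      · rintro g hg _ ⟨x, hx, rfl⟩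
        refine ⟨⟨1, g⟩ * x * ⟨1, g⟩⁻¹, ?_, by simp⟩
        have := hN (th n ⟨1, g⟩) ((th_pure_iff _).2 hg) (th n x) hx
        simpa using this
      · rintro _ ⟨x, hx, rfl⟩ i j
        rw [SemidirectProduct.rightHom_eq_right, ← cr_th_succ]; exact hc _ hx _ _
    have h2 : ∀ x, th n x ∈ V → x.right = 1 := by
      intro x hx
      have : x.right ∈ (V.comap (th n)).map SemidirectProduct.rightHom := ⟨x, hx, rfl⟩
      rw [h1] at this; simpa using this
    have h3 : (V.comap (th n)).comap SemidirectProduct.inl = ⊥ := by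
      apply normal_fg_trivial 0
      · constructor
        intro u hu v
        have := hN (pu n v) (pu_pure v) _ hu
        simp only [Subgroup.mem_comap, map_mul, map_inv]
        convert this using 2
        · simp [th_apply]
        · simp [th_apply]
      · apply fg_comap _ SemidirectProduct.inl_injective _ _ hW
        intro x hx
        exact ⟨x.left, SemidirectProduct.ext (by simp) (by simp [h2 x hx])⟩
      · intro u hu
        have := hc _ hu 0 (Fin.succ 0)
        rw [cr_th_zero] at this
        have h : (expo 0 u).toAdd = 0 := by simpa using this
        exact h
    rw [eq_bot_iff]
    intro v hv
    obtain ⟨x, rfl⟩ := hr hv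
    have hx : x = SemidirectProduct.inl x.left :=
      SemidirectProduct.ext (by simp) (by simp [h2 x hv])
    have : x.left ∈ (V.comap (th n)).comap SemidirectProduct.inl := by
      rw [Subgroup.mem_comap, ← hx]; exact hv
    rw [h3] at this
    rw [hx, Subgroup.mem_bot.1 this]; simp

end BraidOrbit

namespace BraidOrbit
open FreeGroup (of)
open scoped Fin.NatCast Fin.CommRing

variable {n : ℕ}

/-! ### Words and the cyclic rotation of the free generators -/

theorem isReduced_block {α : Type*} {L M : List (α × Bool)} (h : FreeGroup.IsReduced L)
    (hM : M <:+: L) : FreeGroup.IsReduced M := by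
  obtain ⟨s, t, rfl⟩ := hM
  exact List.IsChain.right_of_append (List.IsChain.left_of_append h)

/-- Rotation of a word by `k` letters. -/
def rl (k : Fin (n+1)) (L : List (Fin (n+1) × Bool)) : List (Fin (n+1) × Bool) :=
  L.map (fun p => (p.1 + k, p.2))

theorem rl_append (k : Fin (n+1)) (L M : List (Fin (n+1) × Bool)) :
    rl k (L ++ M) = rl k L ++ rl k M := by simp [rl]

theorem rl_zero (L : List (Fin (n+1) × Bool)) : rl 0 L = L := by simp [rl]

theorem rl_rl (k l : Fin (n+1)) (L : List (Fin (n+1) × Bool)) :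
    rl k (rl l L) = rl (l + k) L := by
  simp only [rl, List.map_map]; congr 1; funext p; simp [add_assoc]

theorem rl_invRev (k : Fin (n+1)) (L : List (Fin (n+1) × Bool)) :
    rl k (FreeGroup.invRev L) = FreeGroup.invRev (rl k L) := by
  simp [rl, FreeGroup.invRev, Function.comp_def]

theorem rot_mk (L : List (Fin (n+1) × Bool)) :
    rot n (FreeGroup.mk L) = FreeGroup.mk (rl 1 L) := by
  change FreeGroup.map (finRotate (n+1)) (FreeGroup.mk L) = _
  rw [FreeGroup.map.mk]
  simp [rl]

theorem isReduced_rl {k : Fin (n+1)} {L : List (Fin (n+1) × Bool)} (h : FreeGroup.IsReduced L) :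
    FreeGroup.IsReduced (rl k L) := by
  unfold FreeGroup.IsReduced rl at *
  rw [List.isChain_map]
  simpa using h

theorem isReduced_invRev {α : Type*} {L : List (α × Bool)} (h : FreeGroup.IsReduced L) :
    FreeGroup.IsReduced (FreeGroup.invRev L) := by
  unfold FreeGroup.IsReduced FreeGroup.invRev at *
  rw [List.isChain_reverse, List.isChain_map]
  refine h.imp ?_
  intro a b hab e
  rw [hab e.symm]

/-- The partial norm `u · τ(u) ⋯ τ^(k-1)(u)` for the rotation `τ`. -/
def rnorm (u : FreeGroup (Fin (n+1))) : ℕ → FreeGroup (Fin (n+1))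
  | 0 => 1
  | k+1 => u * rot n (rnorm u k)

/-- The partial norm on words. -/
def rnormL (L : List (Fin (n+1) × Bool)) : ℕ → List (Fin (n+1) × Bool)
  | 0 => []
  | k+1 => L ++ rl 1 (rnormL L k)

theorem rnorm_mk (L : List (Fin (n+1) × Bool)) (k : ℕ) :
    rnorm (FreeGroup.mk L) k = FreeGroup.mk (rnormL L k) := by
  induction k with
  | zero => rfl
  | succ k ih => rw [rnorm, ih, rot_mk, rnormL, FreeGroup.mul_mk]

theorem rnorm_twist (a u : FreeGroup (Fin (n+1))) (k : ℕ) :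
    rnorm (a * u * (rot n a)⁻¹) k = a * rnorm u k * ((rot n ^ k) a)⁻¹ := by
  induction k with
  | zero => simp [rnorm]
  | succ k ih =>
    rw [rnorm, ih, rnorm, pow_succ', MulAut.mul_apply]
    simp only [map_mul, map_inv]; group

theorem rot_pow_of (k : ℕ) (j : Fin (n+1)) : (rot n ^ k) (of j) = of (j + (k : Fin (n+1))) := by
  induction k with
  | zero => simp
  | succ k ih => rw [pow_succ', MulAut.mul_apply, ih, rot_of]; push_cast; rw [add_assoc]

theorem rot_pow_self (x : FreeGroup (Fin (n+1))) : (rot n ^ (n+1)) x = x := by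
  suffices h : rot n ^ (n+1) = 1 by rw [h]; rfl
  apply mulAut_ext
  intro j
  rw [rot_pow_of]; simp

theorem isReduced_rnormL {L : List (Fin (n+1) × Bool)} (h : FreeGroup.IsReduced L) (hL : L ≠ [])
    (hc : ∀ x ∈ L.getLast?, ∀ y ∈ L.head?, x.1 = y.1 + 1 → x.2 = y.2) (k : ℕ) :
    FreeGroup.IsReduced (rnormL L k) := by
  induction k with
  | zero => exact FreeGroup.IsReduced.nil
  | succ k ih =>
    rw [rnormL, FreeGroup.IsReduced, List.isChain_append]
    refine ⟨h, isReduced_rl ih, ?_⟩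
    intro x hx y hy
    cases k with
    | zero => simp [rnormL, rl] at hy
    | succ k =>
      have : y ∈ (rl 1 L).head? := by
        rw [rnormL, rl_append, List.head?_append_of_ne_nil _ (by simpa [rl] using hL)] at hy
        exact hy
      simp only [rl, List.head?_map, Option.mem_def, Option.map_eq_some_iff] at this
      obtain ⟨z, hz, rfl⟩ := this
      exact hc x hx z hz

theorem list_two_ends {α : Type*} (L : List α) : L = [] ∨ (∃ x, L = [x]) ∨
    ∃ x M y, L = x :: (M ++ [y]) := by
  cases L with
  | nil => simp
  | cons x L =>
    rcases List.eq_nil_or_concat L with rfl | ⟨M, y, rfl⟩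
    · simp
    · right; right; exact ⟨x, M, y, by simp⟩

/-- Hilbert 90 for the rotation action on the free group: elements of norm one are coboundaries. -/
theorem exists_of_rnorm_eq_one (u : FreeGroup (Fin (n+1))) (h : rnorm u (n+1) = 1) :
    ∃ v, u = v * (rot n v)⁻¹ := by
  suffices H : ∀ N, ∀ L : List (Fin (n+1) × Bool), L.length ≤ N → FreeGroup.IsReduced L →
      rnorm (FreeGroup.mk L) (n+1) = 1 → ∃ v, FreeGroup.mk L = v * (rot n v)⁻¹ by
    have := H _ u.toWord le_rfl FreeGroup.isReduced_toWord (by rwa [FreeGroup.mk_toWord])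
    rwa [FreeGroup.mk_toWord] at this
  intro N
  induction N with
  | zero =>
    intro L hN _ _
    have : L = [] := by simpa using hN
    exact ⟨1, by rw [this, map_one, inv_one, mul_one, FreeGroup.one_eq_mk]⟩
  | succ N ih =>
    intro L hN hr h
    by_cases hL : L = []
    · exact ⟨1, by rw [hL, map_one, inv_one, mul_one, FreeGroup.one_eq_mk]⟩
    have hc : ¬ ∀ x ∈ L.getLast?, ∀ y ∈ L.head?, x.1 = y.1 + 1 → x.2 = y.2 := by
      intro hc
      have h1 := isReduced_rnormL hr hL hc (n+1)
      rw [rnorm_mk] at h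
      have h2 : FreeGroup.reduce (rnormL L (n+1)) = [] := by
        rw [← FreeGroup.toWord_mk, h, FreeGroup.toWord_one]
      rw [h1.reduce_eq, rnormL] at h2
      simp [hL] at h2
    rcases list_two_ends L with rfl | ⟨x, rfl⟩ | ⟨x, M, y, rfl⟩
    · exact absurd rfl hL
    · simp at hc
    · have hc' : y.1 = x.1 + 1 ∧ y.2 = !x.2 := by
        have : (x :: (M ++ [y])).getLast? = some y := by
          rw [← List.cons_append, List.getLast?_append_of_ne_nil _ (by simp)]; rfl
        rw [this] at hc
        simp only [Option.mem_some_iff, List.head?_cons, forall_eq'] at hc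
        push Not at hc
        exact ⟨hc.1, by have := hc.2; revert this; cases y.2 <;> cases x.2 <;> simp⟩
      have e : FreeGroup.mk (x :: (M ++ [y])) =
          FreeGroup.mk [x] * FreeGroup.mk M * (rot n (FreeGroup.mk [x]))⁻¹ := by
        rw [rot_mk, FreeGroup.inv_mk, FreeGroup.mul_mk, FreeGroup.mul_mk]
        have : y = (x.1 + 1, !x.2) := Prod.ext hc'.1 hc'.2
        simp [rl, FreeGroup.invRev, this]
      rw [e, rnorm_twist, rot_pow_self] at h
      have h' : rnorm (FreeGroup.mk M) (n+1) = 1 := by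
        have := congrArg (fun z => (FreeGroup.mk [x])⁻¹ * z * FreeGroup.mk [x]) h
        simpa only [mul_assoc, mul_one, inv_mul_cancel, inv_mul_cancel_left] using this
      obtain ⟨v, hv⟩ := ih M (by simp at hN; omega)
        (isReduced_block hr ⟨[x], [y], by simp⟩) h'
      refine ⟨FreeGroup.mk [x] * v, ?_⟩
      rw [e, hv, map_mul]; group

/-! ### Automorphisms commuting with the rotation -/

/-- A word is peeled from both ends as long as its last letter is inverse to the rotated first
letter. -/
theorem exists_peel (s : Fin (n+1)) (w : List (Fin (n+1) × Bool)) :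
    ∃ A e, w = A ++ e ++ FreeGroup.invRev (rl s A) ∧
      ∀ x ∈ e.getLast?, ∀ y ∈ e.head?, x.1 = y.1 + s → x.2 = y.2 := by
  induction hN : w.length using Nat.strong_induction_on generalizing w with
  | _ N ih =>
    by_cases hc : ∀ x ∈ w.getLast?, ∀ y ∈ w.head?, x.1 = y.1 + s → x.2 = y.2
    · exact ⟨[], w, by simp [rl], hc⟩
    rcases list_two_ends w with rfl | ⟨x, rfl⟩ | ⟨x, M, y, rfl⟩
    · simp at hc
    · simp at hc
    · have hc' : y.1 = x.1 + s ∧ y.2 = !x.2 := by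
        have : (x :: (M ++ [y])).getLast? = some y := by
          rw [← List.cons_append, List.getLast?_append_of_ne_nil _ (by simp)]; rfl
        rw [this] at hc
        simp only [Option.mem_some_iff, List.head?_cons, forall_eq'] at hc
        push Not at hc
        exact ⟨hc.1, by have := hc.2; revert this; cases y.2 <;> cases x.2 <;> simp⟩
      obtain ⟨A, e, rfl, he⟩ := ih M.length (by simp at hN; omega) M rfl
      refine ⟨x :: A, e, ?_, he⟩
      have : y = (x.1 + s, !x.2) := Prod.ext hc'.1 hc'.2
      simp [rl, FreeGroup.invRev, this]

/-- The total exponent sum of an element of a free group. -/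
def tot (n : ℕ) : FreeGroup (Fin (n+1)) →* Multiplicative ℤ :=
  FreeGroup.lift (fun _ => Multiplicative.ofAdd 1)

theorem tot_eq (x : FreeGroup (Fin (n+1))) : tot n x = ∏ k, expo k x := by
  induction x using fg_ind with
  | one => simp
  | of i =>
    rw [tot, FreeGroup.lift_apply_of, Finset.prod_eq_single i]
    · simp
    · intro j _ h; simp [h.symm]
    · simp
  | inv x h => simp [h]
  | mul x y hx hy => simp [hx, hy, Finset.prod_mul_distrib]

theorem tot_rl (k : Fin (n+1)) (L : List (Fin (n+1) × Bool)) :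
    tot n (FreeGroup.mk (rl k L)) = tot n (FreeGroup.mk L) := by
  simp [tot, FreeGroup.lift_mk, rl, Function.comp_def]

section Peel
variable (s : Fin (n+1)) (A e : List (Fin (n+1) × Bool))

/-- Index of the rotated head in the image of a letter. -/
def hS (p : Fin (n+1) × Bool) : Fin (n+1) := if p.2 then p.1 else p.1 + s

/-- Index of the rotated tail in the image of a letter. -/
def hE (p : Fin (n+1) × Bool) : Fin (n+1) := if p.2 then p.1 + s else p.1

/-- The core of the image of a letter. -/
def hC (p : Fin (n+1) × Bool) : List (Fin (n+1) × Bool) :=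
  if p.2 then rl p.1 e else FreeGroup.invRev (rl p.1 e)

/-- The reduced image of a letter. -/
def hW (p : Fin (n+1) × Bool) : List (Fin (n+1) × Bool) :=
  rl (hS s p) A ++ (hC e p ++ FreeGroup.invRev (rl (hE s p) A))

theorem hW_eq (p : Fin (n+1) × Bool) : hW s A e p =
    if p.2 then rl p.1 (A ++ e ++ FreeGroup.invRev (rl s A))
    else FreeGroup.invRev (rl p.1 (A ++ e ++ FreeGroup.invRev (rl s A))) := by
  obtain ⟨i, b⟩ := p
  cases b <;>
  simp [hW, hS, hE, hC, rl_append, rl_invRev, rl_rl, FreeGroup.invRev_append, add_comm]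

theorem hW_reduced (h : FreeGroup.IsReduced (A ++ e ++ FreeGroup.invRev (rl s A)))
    (p : Fin (n+1) × Bool) : FreeGroup.IsReduced (hW s A e p) := by
  rw [hW_eq]
  split_ifs
  · exact isReduced_rl h
  · exact isReduced_invRev (isReduced_rl h)

theorem invRev_head? {α : Type*} (L : List (α × Bool)) :
    (FreeGroup.invRev L).head? = L.getLast?.map (fun p => (p.1, !p.2)) := by
  simp [FreeGroup.invRev]

theorem invRev_getLast? {α : Type*} (L : List (α × Bool)) :
    (FreeGroup.invRev L).getLast? = L.head?.map (fun p => (p.1, !p.2)) := by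
  simp [FreeGroup.invRev]

theorem rl_head? (k : Fin (n+1)) (L : List (Fin (n+1) × Bool)) :
    (rl k L).head? = L.head?.map (fun p => (p.1 + k, p.2)) := by
  simp [rl]

theorem rl_getLast? (k : Fin (n+1)) (L : List (Fin (n+1) × Bool)) :
    (rl k L).getLast? = L.getLast?.map (fun p => (p.1 + k, p.2)) := by
  simp [rl]

theorem hW_head {w : List (Fin (n+1) × Bool)} (hw : w = A ++ e ++ FreeGroup.invRev (rl s A))
    {f l : Fin (n+1) × Bool} (hf : w.head? = some f) (hl : w.getLast? = some l)
    (hs : l.1 = f.1 + s) (p y : Fin (n+1) × Bool) (hy : y ∈ (hW s A e p).head?) :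
    y.1 = f.1 + hS s p := by
  rw [hW_eq, ← hw] at hy
  unfold hS
  split_ifs at hy ⊢
  · rw [rl_head?, hf] at hy; simp at hy; rw [← hy]
  · rw [invRev_head?, rl_getLast?, hl] at hy; simp at hy; rw [← hy, hs]; simp; ring

theorem hW_last {w : List (Fin (n+1) × Bool)} (hw : w = A ++ e ++ FreeGroup.invRev (rl s A))
    {f l : Fin (n+1) × Bool} (hf : w.head? = some f) (hl : w.getLast? = some l)
    (hs : l.1 = f.1 + s) (p y : Fin (n+1) × Bool) (hy : y ∈ (hW s A e p).getLast?) :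
    y.1 = f.1 + hE s p := by
  rw [hW_eq, ← hw] at hy
  unfold hE
  split_ifs at hy ⊢
  · rw [rl_getLast?, hl] at hy; simp at hy; rw [← hy, hs]; simp; ring
  · rw [invRev_getLast?, rl_head?, hf] at hy; simp at hy; rw [← hy]

theorem hC_junction (he : ∀ x ∈ e.getLast?, ∀ y ∈ e.head?, x.1 = y.1 + s → x.2 = y.2)
    (p q : Fin (n+1) × Bool) (hpq : p.1 = q.1 → p.2 = q.2) (h : hE s p = hS s q) :
    ∀ x ∈ (hC e p).getLast?, ∀ y ∈ (hC e q).head?, x.1 = y.1 → x.2 = y.2 := by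
  obtain ⟨i, b⟩ := p
  obtain ⟨j, c⟩ := q
  intro x hx y hy hxy
  cases b <;> cases c <;> simp only [hE, hS, hC, if_true, if_false, Bool.false_eq_true,
    rl_getLast?, rl_head?, invRev_head?, invRev_getLast?, Option.map_map, Option.mem_def,
    Option.map_eq_some_iff, Function.comp] at h hx hy hpq
  · obtain ⟨x, hx, rfl⟩ := hx
    obtain ⟨y, hy, rfl⟩ := hy
    have := he y hy x hx (by
      subst h; simp only at hxy
      have : x.1 + s + j = y.1 + j := by rw [← hxy]; ring
      exact (add_right_cancel this).symm)
    simp [this]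
  · exact absurd (hpq h) (by simp)
  · exact absurd (hpq (add_right_cancel h)) (by simp)
  · obtain ⟨x, hx, rfl⟩ := hx
    obtain ⟨y, hy, rfl⟩ := hy
    exact he x hx y hy (by
      subst h; simp only at hxy
      have : x.1 + i = y.1 + s + i := by rw [hxy]; ring
      exact (add_right_cancel this))

/-- Images of reduced words under a rotation-equivariant endomorphism do not get shorter. -/
theorem peel_claim {w : List (Fin (n+1) × Bool)} (hw : w = A ++ e ++ FreeGroup.invRev (rl s A))
    (hr : FreeGroup.IsReduced w) {f l : Fin (n+1) × Bool} (hf : w.head? = some f)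
    (hl : w.getLast? = some l) (hs : l.1 = f.1 + s) (hne : e ≠ [])
    (he : ∀ x ∈ e.getLast?, ∀ y ∈ e.head?, x.1 = y.1 + s → x.2 = y.2)
    (ψ : FreeGroup (Fin (n+1)) →* FreeGroup (Fin (n+1)))
    (hψ : ∀ p, ψ (FreeGroup.mk [p]) = FreeGroup.mk (hW s A e p))
    (L : List (Fin (n+1) × Bool)) (p : Fin (n+1) × Bool) (hL : FreeGroup.IsReduced (L ++ [p])) :
    ∃ X : List (Fin (n+1) × Bool), L.length ≤ X.length ∧
      FreeGroup.IsReduced (X ++ (hC e p ++ FreeGroup.invRev (rl (hE s p) A))) ∧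
      ψ (FreeGroup.mk (L ++ [p])) =
        FreeGroup.mk (X ++ (hC e p ++ FreeGroup.invRev (rl (hE s p) A))) := by
  have hCne : ∀ p, hC e p ≠ [] := by
    intro p; unfold hC; split_ifs
    · simpa [rl] using hne
    · simpa [rl, FreeGroup.invRev] using hne
  have hCTne : ∀ p, hC e p ++ FreeGroup.invRev (rl (hE s p) A) ≠ [] := fun p => by
    simp [hCne p]
  induction L using List.reverseRecOn generalizing p with
  | nil =>
    refine ⟨rl (hS s p) A, by simp, ?_, by rw [List.nil_append, hψ]; rfl⟩
    exact hW_reduced s A e (hw ▸ hr) p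
  | append_singleton L q ih =>
    have hL' : FreeGroup.IsReduced (L ++ [q]) := isReduced_block hL ⟨[], [p], by simp⟩
    have hqp : q.1 = p.1 → q.2 = p.2 := by
      have := isReduced_block hL (M := [q, p]) ⟨L, [], by simp⟩
      simpa using this
    obtain ⟨X, hX1, hX2, hX3⟩ := ih q hL'
    have hmul : ψ (FreeGroup.mk (L ++ [q] ++ [p])) = FreeGroup.mk (X ++ (hC e q ++
        FreeGroup.invRev (rl (hE s q) A)) ++ hW s A e p) := by
      rw [← FreeGroup.mul_mk, map_mul, hX3, hψ, FreeGroup.mul_mk]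
    have hpos : 0 < (hC e q).length := List.length_pos_iff.2 (hCne q)
    have hrp := hW_reduced s A e (hw ▸ hr) p
    by_cases hES : hE s q = hS s p
    · refine ⟨X ++ hC e q, ?_, ?_, ?_⟩
      · simp; omega
      · have h1 : FreeGroup.IsReduced (X ++ hC e q) := isReduced_block hX2 ⟨[], _, by
          rw [List.nil_append, List.append_assoc]⟩
        have h2 : FreeGroup.IsReduced (hC e p ++ FreeGroup.invRev (rl (hE s p) A)) :=
          isReduced_block hrp ⟨rl (hS s p) A, [], by simp [hW]⟩
        rw [FreeGroup.IsReduced, List.isChain_append]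
        refine ⟨h1, h2, ?_⟩
        intro x hx y hy
        rw [List.getLast?_append_of_ne_nil _ (hCne q)] at hx
        rw [List.head?_append_of_ne_nil _ (hCne p)] at hy
        exact hC_junction s e he q p hqp hES x hx y hy
      · rw [hmul, hW, hES]
        simp only [← FreeGroup.mul_mk, ← FreeGroup.inv_mk]
        group
    · refine ⟨X ++ (hC e q ++ FreeGroup.invRev (rl (hE s q) A)) ++ rl (hS s p) A, ?_, ?_, ?_⟩
      · simp; omega
      · rw [List.append_assoc]
        change FreeGroup.IsReduced (_ ++ hW s A e p)
        rw [FreeGroup.IsReduced, List.isChain_append]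
        refine ⟨hX2, hrp, ?_⟩
        intro x hx y hy hxy
        rw [List.getLast?_append_of_ne_nil _ (hCTne q)] at hx
        have hx' : x ∈ (hW s A e q).getLast? := by
          rw [hW, List.getLast?_append_of_ne_nil _ (hCTne q)]; exact hx
        rw [hW_last s A e hw hf hl hs q x hx', hW_head s A e hw hf hl hs p y hy] at hxy
        exact absurd (add_left_cancel hxy) hES
      · rw [hmul, hW]; simp

end Peel

/-- An automorphism of the free group that commutes with the rotation and acts trivially on
exponent sums is the identity. -/
theorem rot_rigid (ψ : MulAut (FreeGroup (Fin (n+1)))) (hrot : ∀ x, ψ (rot n x) = rot n (ψ x))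
    (hexp : ∀ k x, expo k (ψ x) = expo k x) : ψ = 1 := by
  set w := (ψ (of 0)).toWord with hw
  have hwmk : FreeGroup.mk w = ψ (of 0) := FreeGroup.mk_toWord
  have hr : FreeGroup.IsReduced w := FreeGroup.isReduced_toWord
  have hwne : w ≠ [] := by
    intro h
    have : ψ (of 0) = 1 := FreeGroup.toWord_eq_nil_iff.1 h
    rw [map_eq_one_iff _ ψ.injective] at this
    exact FreeGroup.of_ne_one _ this
  obtain ⟨f, hf⟩ : ∃ f, w.head? = some f := ⟨_, List.head?_eq_some_head hwne⟩
  obtain ⟨l, hl⟩ : ∃ l, w.getLast? = some l := ⟨_, List.getLast?_eq_some_getLast hwne⟩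
  obtain ⟨A, e, hwAe, he⟩ := exists_peel (l.1 - f.1) w
  have hs : l.1 = f.1 + (l.1 - f.1) := by ring
  generalize l.1 - f.1 = s at *
  have htot : ∀ x, tot n (ψ x) = tot n x := fun x => by rw [tot_eq, tot_eq]; simp [hexp]
  have hne : e ≠ [] := by
    rintro rfl
    have h1 := htot (of 0)
    rw [← hwmk, hwAe, List.append_nil, ← FreeGroup.mul_mk, ← FreeGroup.inv_mk, map_mul, map_inv,
      tot_rl, mul_inv_cancel] at h1
    simp only [tot, FreeGroup.lift_apply_of] at h1
    exact absurd h1 (by decide)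
  have hgen : ∀ i : Fin (n+1), ψ (of i) = FreeGroup.mk (rl i w) := by
    have : ∀ k : ℕ, ψ (of (k : Fin (n+1))) = FreeGroup.mk (rl (k : Fin (n+1)) w) := by
      intro k
      induction k with
      | zero => simp [rl_zero, hwmk]
      | succ k ih => push_cast; rw [← rot_of, hrot, ih, rot_mk, rl_rl]
    intro i
    simpa using this i
  have hψ : ∀ p, ψ.toMonoidHom (FreeGroup.mk [p]) = FreeGroup.mk (hW s A e p) := by
    rintro ⟨i, b⟩
    rw [hW_eq, ← hwAe]
    cases b
    · have : (FreeGroup.mk [(i, false)]) = (of i)⁻¹ := by simp [of, FreeGroup.inv_mk, FreeGroup.invRev]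
      rw [this, map_inv]
      change (ψ (of i))⁻¹ = _
      rw [hgen, FreeGroup.inv_mk]; simp
    · change ψ (of i) = _
      rw [hgen]; simp
  have hlen : ∀ v : FreeGroup (Fin (n+1)), v.toWord.length ≤ (ψ v).toWord.length := by
    intro v
    rcases List.eq_nil_or_concat v.toWord with h | ⟨L, p, h⟩
    · simp [h]
    · rw [List.concat_eq_append] at h
      obtain ⟨X, hX1, hX2, hX3⟩ := peel_claim s A e hwAe hr hf hl hs hne he ψ.toMonoidHom hψ L p
        (h ▸ FreeGroup.isReduced_toWord)
      have h3 : ψ v = FreeGroup.mk (X ++ (hC e p ++ FreeGroup.invRev (rl (hE s p) A))) := by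
        rw [← hX3, ← h, FreeGroup.mk_toWord]; rfl
      have hpos : 0 < (hC e p).length := by
        apply List.length_pos_iff.2
        unfold hC; split_ifs
        · simpa [rl] using hne
        · simpa [rl, FreeGroup.invRev] using hne
      rw [h3, FreeGroup.toWord_mk, hX2.reduce_eq, h]
      simp; omega
  set v := ψ⁻¹ (of 0) with hv
  have hψv : ψ v = of 0 := by rw [hv]; simp
  have h1 := hlen v
  rw [hψv, FreeGroup.toWord_of, List.length_singleton] at h1
  have hv0 : v = of 0 := by
    have hx : expo 0 v = Multiplicative.ofAdd 1 := by rw [← hexp, hψv]; simp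
    rcases hvw : v.toWord with _ | ⟨⟨i, b⟩, _ | ⟨q, L⟩⟩
    · rw [FreeGroup.toWord_eq_nil_iff] at hvw
      rw [hvw, map_one] at hx
      exact absurd hx (by decide)
    · have hvm : v = FreeGroup.mk [(i, b)] := by rw [← hvw, FreeGroup.mk_toWord]
      cases b
      · have : (FreeGroup.mk [(i, false)]) = (of i)⁻¹ := by
          simp [of, FreeGroup.inv_mk, FreeGroup.invRev]
        rw [hvm, this, map_inv, expo_of] at hx
        have := congrArg Multiplicative.toAdd hx
        split_ifs at this <;> simp at this
      · have : (FreeGroup.mk [(i, true)]) = of i := rfl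
        rw [hvm, this, expo_of] at hx
        rw [hvm, this]
        by_cases h : i = 0
        · rw [h]
        · rw [if_neg h] at hx
          exact absurd hx (by decide)
    · rw [hvw] at h1; simp at h1
  have h0 : ψ (of 0) = of 0 := by rw [← hv0, hψv, hv0]
  apply mulAut_ext
  intro i
  have hww : w = [(0, true)] := by rw [hw, h0, FreeGroup.toWord_of]
  rw [hgen, hww]; simp [rl, of]

end BraidOrbit

namespace BraidOrbit
open FreeGroup (of)

variable {n : ℕ}

/-! ### Automorphisms trivial on crossing numbers modulo three -/

/-- The automorphism preserves the permutation of every braid and its crossing numbers modulo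
three. -/
def Tri (φ : MulAut (Br n)) : Prop :=
  ∀ g, rho n (φ g) = rho n g ∧ ∀ i j, ((cr (φ g) i j : ℤ) : ZMod 3) = cr g i j

theorem Tri.inv {φ : MulAut (Br n)} (h : Tri φ) : Tri φ⁻¹ := by
  intro g
  obtain ⟨h1, h2⟩ := h (φ⁻¹ g)
  rw [MulAut.apply_inv_self] at h1
  refine ⟨h1.symm, fun i j => ?_⟩
  rw [← h2, MulAut.apply_inv_self]

theorem Tri.pure {φ : MulAut (Br n)} (h : Tri φ) {g : Br n} (hg : g ∈ pureBr n) :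
    φ g ∈ pureBr n := by
  rw [mem_pure, (h g).1]; exact hg

theorem two_mod : 2 % (n + 3) = 2 := Nat.mod_eq_of_lt (by omega)

theorem val_two : ((2 : Fin (n+3)) : ℕ) = 2 := two_mod

theorem two_ne_zero' : (2 : Fin (n+3)) ≠ 0 := by
  intro h; have := congrArg Fin.val h; rw [val_two] at this; simp at this

theorem two_ne_one' : (2 : Fin (n+3)) ≠ 1 := by
  intro h; have := congrArg Fin.val h; rw [val_two] at this; simp at this

/-- The indicator of the first two strands. -/
def chi (i : Fin (n+3)) : ℤ := if i = 0 ∨ i = 1 then 1 else 0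

theorem chi_sq (i : Fin (n+3)) : chi i * chi i = chi i := by
  unfold chi; split_ifs <;> rfl

theorem sum_chi : ∑ i : Fin (n+3), chi i = 2 := by
  rw [Fin.sum_univ_succ, Fin.sum_univ_succ, Finset.sum_eq_zero]
  · simp [chi]
  · intro i _
    rw [chi, if_neg]
    rintro (h | h)
    · exact Fin.succ_ne_zero _ h
    · have h' : i.succ.succ = Fin.succ 0 := h
      rw [Fin.succ_inj] at h'
      exact Fin.succ_ne_zero _ h'

theorem chi_zero : chi (0 : Fin (n+3)) = 1 := by simp [chi]

theorem chi_one : chi (1 : Fin (n+3)) = 1 := by simp [chi]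

theorem chi_two : chi (2 : Fin (n+3)) = 0 := by simp [chi, two_ne_zero', two_ne_one']

theorem chi_three (h : 3 < n + 3) : chi (⟨3, h⟩ : Fin (n+3)) = 0 := by
  simp [chi, Fin.ext_iff]

/-- The symmetric matrix with zero diagonal whose entry at a pair depends only on the number of
members of the pair among the first two strands: `a` for two, `b` for one, `c` for none. -/
def sMat (a b c : ℤ) (i j : Fin (n+3)) : ℤ :=
  if i = j then 0 else c + (b - c) * (chi i + chi j) + (a - 2 * b + c) * (chi i * chi j)

theorem sum_sMat (a b c : ℤ) (i : Fin (n+3)) : ∑ j, sMat a b c i j =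
    (n + 2) * c + 2 * (b - c) + ((n + 1) * (b - c) + (a - 2 * b + c)) * chi i := by
  have h : ∀ j, sMat a b c i j = (c + (b - c) * chi i) + ((b - c) + (a - 2 * b + c) * chi i) * chi j -
      (if i = j then (c + 2 * (b - c) * chi i + (a - 2 * b + c) * chi i) else 0) := by
    intro j
    unfold sMat
    split_ifs with h
    · subst h; linear_combination (-(a - 2 * b + c)) * chi_sq i
    · ring
  rw [Finset.sum_congr rfl (fun j _ => h j), Finset.sum_sub_distrib, Finset.sum_add_distrib,
    ← Finset.mul_sum, sum_chi]
  simp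
  ring

theorem cr_sq_eq (i j : Fin (n+3)) : cr (sN 0 ^ 2 : Br (n+2)) i j = 2 * sMat 1 0 0 i j := by
  have := cr_sq_zero (n := n+1) i j
  rw [pA] at this
  rw [this]
  congr 1
  have h10 : (1 : Fin (n+3)) ≠ 0 := by simp
  unfold pairInd sMat chi
  grind

/-- The shape of the crossing numbers of the image of the first pure generator. -/
structure Shape (φ : MulAut (Br (n+2))) (a b c : ℤ) : Prop where
  eq : ∀ i j, cr (φ (sN 0 ^ 2)) i j = 2 * sMat a b c i j
  ha : 3 ∣ a - 1
  hb : 3 ∣ b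
  hc : 3 ∣ c
  h0 : n = 0 → c = b

theorem sq_pure : (sN 0 ^ 2 : Br n) ∈ pureBr n := by
  have := pA_pure (n := n) 0
  rwa [pA] at this

theorem swap_mem_of_adj (S : Subgroup (Equiv.Perm (Fin (n+3))))
    (hS : ∀ k : ℕ, ∀ h : k + 1 < n + 3, 2 ≤ k →
      Equiv.swap (⟨k, by omega⟩ : Fin (n+3)) ⟨k + 1, h⟩ ∈ S)
    (k d : ℕ) (hk : 2 ≤ k) (h : k + d < n + 3) :
    Equiv.swap (⟨k, by omega⟩ : Fin (n+3)) ⟨k + d, h⟩ ∈ S := by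
  induction d with
  | zero => simp only [add_zero, Equiv.swap_self]; exact one_mem S
  | succ d ih =>
    have h1 := hS (k + d) h (by omega)
    have h2 := ih (by omega)
    by_cases hd : d = 0
    · subst hd; exact h1
    have e : Equiv.swap (⟨k, by omega⟩ : Fin (n+3)) ⟨k + (d + 1), h⟩ =
        Equiv.swap (⟨k + d, by omega⟩ : Fin (n+3)) ⟨k + d + 1, h⟩ *
        Equiv.swap (⟨k, by omega⟩ : Fin (n+3)) ⟨k + d, by omega⟩ *
        (Equiv.swap (⟨k + d, by omega⟩ : Fin (n+3)) ⟨k + d + 1, h⟩)⁻¹ := by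
      rw [← Equiv.swap_apply_apply, Equiv.swap_apply_left, Equiv.swap_apply_of_ne_of_ne]
      · rfl
      · simp [Fin.ext_iff]; omega
      · simp [Fin.ext_iff]; omega
    rw [e]
    exact mul_mem (mul_mem h1 h2) (inv_mem h1)

theorem swap_mem_of_adj' (S : Subgroup (Equiv.Perm (Fin (n+3))))
    (hS : ∀ k : ℕ, ∀ h : k + 1 < n + 3, 2 ≤ k →
      Equiv.swap (⟨k, by omega⟩ : Fin (n+3)) ⟨k + 1, h⟩ ∈ S)
    (i j : Fin (n+3)) (hi : 2 ≤ (i : ℕ)) (hj : 2 ≤ (j : ℕ)) : Equiv.swap i j ∈ S := by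
  rcases le_total (i : ℕ) j with h | h
  · have := swap_mem_of_adj S hS i (j - i) hi (by omega)
    have e : (⟨i + (j - i), by omega⟩ : Fin (n+3)) = j := Fin.ext (by simp; omega)
    rwa [e] at this
  · have := swap_mem_of_adj S hS j (i - j) hj (by omega)
    have e : (⟨j + (i - j), by omega⟩ : Fin (n+3)) = i := Fin.ext (by simp; omega)
    rw [e] at this
    rwa [Equiv.swap_comm]

/-- The image of the first pure generator is centralized by the image of the centralizer of that
generator, so its crossing numbers are invariant under all permutations preserving `{0, 1}`. -/
theorem exists_shape {φ : MulAut (Br (n+2))} (hφ : Tri φ) : ∃ a b c, Shape φ a b c := by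
  set x := φ (sN 0 ^ 2) with hx
  have hxp : x ∈ pureBr (n+2) := hφ.pure sq_pure
  have hsym := cr_symm x
  -- permutations under which the crossing numbers of `x` are invariant
  let S : Subgroup (Equiv.Perm (Fin (n+3))) :=
    { carrier := {p | ∀ i j, cr x (p i) (p j) = cr x i j}
      one_mem' := fun i j => rfl
      mul_mem' := fun {p q} hp hq i j => by
        rw [Equiv.Perm.mul_apply, Equiv.Perm.mul_apply, hp, hq]
      inv_mem' := fun {p} hp i j => by
        rw [← hp (p⁻¹ i) (p⁻¹ j)]; simp }
  have hcomm : ∀ g : Br (n+2), g * sN 0 ^ 2 = sN 0 ^ 2 * g → rho _ g⁻¹ ∈ S := by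
    intro g hg i j
    have h1 : φ g * x * (φ g)⁻¹ = x := by
      rw [hx, ← map_mul, hg, map_mul, mul_inv_cancel_right]
    have h2 := cr_conj_pure (φ g) hxp i j
    rw [h1] at h2
    rw [← map_inv, (hφ g⁻¹).1] at h2
    exact h2.symm
  have hadj : ∀ k : ℕ, ∀ h : k + 1 < n + 3, 2 ≤ k →
      Equiv.swap (⟨k, by omega⟩ : Fin (n+3)) ⟨k + 1, h⟩ ∈ S := by
    intro k h hk
    have h1 := hcomm (sN k)⁻¹ (by
      have : Commute (sN 0 : Br (n+2)) (sN k) := sN_comm (by omega)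
      exact ((this.symm.inv_left).pow_right 2).eq)
    rw [inv_inv, sN_of_lt (by omega : k < n + 2), rho_s] at h1
    exact h1
  have h01 : Equiv.swap (0 : Fin (n+3)) 1 ∈ S := by
    have h1 := hcomm (sN 0)⁻¹ (by
      exact (((Commute.refl (sN 0 : Br (n+2))).inv_left).pow_right 2).eq)
    rw [inv_inv, sN_of_lt (by omega : 0 < n + 2), rho_s] at h1
    exact h1
  have hsw := swap_mem_of_adj' S hadj
  have hne2 : ∀ i : Fin (n+3), 2 ≤ (i : ℕ) → i ≠ 0 ∧ i ≠ 1 := by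
    intro i hi
    constructor <;> (rintro rfl; simp at hi)
  -- pairs meeting `{0, 1}` in one strand form a single orbit
  have hb0 : ∀ i : Fin (n+3), 2 ≤ (i : ℕ) → cr x 0 i = cr x 0 2 := by
    intro i hi
    have := hsw i 2 hi val_two.ge 0 i
    rw [Equiv.swap_apply_left, Equiv.swap_apply_of_ne_of_ne (hne2 i hi).1.symm
      (hne2 2 val_two.ge).1.symm] at this
    exact this.symm
  have hb1 : ∀ i : Fin (n+3), 2 ≤ (i : ℕ) → cr x 1 i = cr x 0 2 := by
    intro i hi
    have := h01 1 i
    rw [Equiv.swap_apply_right, Equiv.swap_apply_of_ne_of_ne (hne2 i hi).1 (hne2 i hi).2] at this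
    rw [← this, hb0 i hi]
  obtain ⟨a', ha'⟩ := cr_even hxp 0 1
  obtain ⟨b', hb'⟩ := cr_even hxp 0 2
  -- pairs disjoint from `{0, 1}` form a single orbit, which is empty on three strands
  have hc : ∃ c', 3 ∣ c' ∧ (n = 0 → c' = b') ∧ ∀ i j : Fin (n+3), 2 ≤ (i : ℕ) → 2 ≤ (j : ℕ) →
      i ≠ j → cr x i j = c' + c' := by
    have hbm : 3 ∣ b' := by
      have h2 := (hφ (sN 0 ^ 2)).2 0 2
      rw [← hx, cr_sq_eq, hb', ← sub_eq_zero, ← Int.cast_sub, ZMod.intCast_zmod_eq_zero_iff_dvd] at h2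
      have : sMat 1 0 0 (0 : Fin (n+3)) 2 = 0 := by simp [sMat, chi_zero, chi_two]
      rw [this] at h2; push_cast at h2; omega
    by_cases hn : n = 0
    · subst hn
      refine ⟨b', hbm, fun _ => rfl, fun i j hi hj hij => absurd (Fin.ext (by omega)) hij⟩
    · obtain ⟨c', hc'⟩ := cr_even hxp 2 (⟨3, by omega⟩ : Fin (n+3))
      refine ⟨c', ?_, fun h => absurd h hn, ?_⟩
      · have h2 := (hφ (sN 0 ^ 2)).2 2 (⟨3, by omega⟩ : Fin (n+3))
        rw [← hx, cr_sq_eq, hc', ← sub_eq_zero, ← Int.cast_sub,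
          ZMod.intCast_zmod_eq_zero_iff_dvd] at h2
        have : sMat 1 0 0 (2 : Fin (n+3)) ⟨3, by omega⟩ = 0 := by
          simp [sMat, chi_two]
        rw [this] at h2; push_cast at h2; omega
      · intro i j hi hj hij
        have h1 := hsw i 2 hi val_two.ge i j
        rw [Equiv.swap_apply_left] at h1
        rw [← h1]
        set j' := Equiv.swap i 2 j with hj'
        have hj2 : 2 ≤ (j' : ℕ) := by
          rw [hj', Equiv.swap_apply_def]; split_ifs <;> simp [hi, hj, two_mod]
        have hjne : j' ≠ 2 := by
          intro h
          rw [hj', Equiv.swap_apply_eq_iff, Equiv.swap_apply_right] at h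
          exact hij h.symm
        have h2 := hsw j' ⟨3, by omega⟩ hj2 (by simp) 2 j'
        rw [Equiv.swap_apply_left, Equiv.swap_apply_of_ne_of_ne hjne.symm
          (by simp [Fin.ext_iff, two_mod])] at h2
        rw [← h2, hc']
  obtain ⟨c', h3c, h0c, hc'⟩ := hc
  refine ⟨a', b', c', ?_, ?_, ?_, h3c, h0c⟩
  · intro i j
    rw [← hx]
    unfold sMat chi
    have hi : i = 0 ∨ i = 1 ∨ 2 ≤ (i : ℕ) := by
      rcases Nat.lt_or_ge i 2 with h | h
      · interval_cases hi : (i : ℕ)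
        · left; exact Fin.ext hi
        · right; left; exact Fin.ext hi
      · right; right; exact h
    have hj : j = 0 ∨ j = 1 ∨ 2 ≤ (j : ℕ) := by
      rcases Nat.lt_or_ge j 2 with h | h
      · interval_cases hj : (j : ℕ)
        · left; exact Fin.ext hj
        · right; left; exact Fin.ext hj
      · right; right; exact h
    have h10 : (1 : Fin (n+3)) ≠ 0 := by simp
    rcases hi with rfl | rfl | hi <;> rcases hj with rfl | rfl | hj
    · simp [cr_self]
    · rw [ha', if_neg h10.symm]; simp; ring
    · rw [hb0 _ hj, hb', if_neg (hne2 j hj).1.symm]; simp [(hne2 j hj).1, (hne2 j hj).2]; ring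
    · rw [hsym, ha', if_neg h10]; simp; ring
    · simp [cr_self]
    · rw [hb1 _ hj, hb', if_neg (hne2 j hj).2.symm]; simp [(hne2 j hj).1, (hne2 j hj).2]; ring
    · rw [hsym, hb0 _ hi, hb', if_neg (hne2 i hi).1]; simp [(hne2 i hi).1, (hne2 i hi).2]; ring
    · rw [hsym, hb1 _ hi, hb', if_neg (hne2 i hi).2]; simp [(hne2 i hi).1, (hne2 i hi).2]; ring
    · by_cases hij : i = j
      · subst hij; simp [cr_self]
      · rw [hc' i j hi hj hij, if_neg hij]
        simp [(hne2 i hi).1, (hne2 i hi).2, (hne2 j hj).1, (hne2 j hj).2]; ring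
  · have h2 := (hφ (sN 0 ^ 2)).2 0 1
    rw [← hx, cr_sq_eq, ha', ← sub_eq_zero, ← Int.cast_sub, ZMod.intCast_zmod_eq_zero_iff_dvd] at h2
    have : sMat 1 0 0 (0 : Fin (n+3)) 1 = 1 := by simp [sMat, chi]
    rw [this] at h2; push_cast at h2; omega
  · have h2 := (hφ (sN 0 ^ 2)).2 0 2
    rw [← hx, cr_sq_eq, hb', ← sub_eq_zero, ← Int.cast_sub, ZMod.intCast_zmod_eq_zero_iff_dvd] at h2
    have : sMat 1 0 0 (0 : Fin (n+3)) 2 = 0 := by simp [sMat, chi_zero, chi_two]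
    rw [this] at h2; push_cast at h2; omega

/-- A linear functional that scales the crossing numbers of all conjugates of the first pure
generator by the same factor does so on all pure braids. -/
theorem eig {φ : MulAut (Br (n+2))} (hφ : Tri φ) {a b c : ℤ} (hs : Shape φ a b c)
    (f : (Fin (n+3) → Fin (n+3) → ℤ) →+ ℤ) (Λ : ℤ)
    (hf : ∀ p : Equiv.Perm (Fin (n+3)), f (fun k l => sMat a b c (p k) (p l)) =
      Λ * f (fun k l => sMat 1 0 0 (p k) (p l))) (y : Br (n+2)) (hy : y ∈ pureBr (n+2)) :
    f (cr (φ y)) = Λ * f (cr y) := by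
  refine pure_induction (p := fun y => f (cr (φ y)) = Λ * f (cr y)) ?_ ?_ ?_ ?_ y hy
  · have : (cr (1 : Br (n+2))) = 0 := by funext i j; simp
    simp [this]
  · intro x y hx hy ihx ihy
    have e1 : cr (x * y) = cr x + cr y := by funext i j; exact cr_mul_pure _ hy i j
    have e2 : cr (φ (x * y)) = cr (φ x) + cr (φ y) := by
      funext i j; rw [map_mul]; exact cr_mul_pure _ (hφ.pure hy) i j
    rw [e1, e2, map_add, map_add, ihx, ihy]; ring
  · intro x hx ih
    have e1 : cr x⁻¹ = - cr x := by funext i j; exact cr_inv_pure hx i j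
    have e2 : cr (φ x⁻¹) = - cr (φ x) := by
      funext i j; rw [map_inv]; exact cr_inv_pure (hφ.pure hx) i j
    rw [e1, e2, map_neg, map_neg, ih]; ring
  · intro g
    have e1 : cr (g * sN 0 ^ 2 * g⁻¹) =
        (2 : ℕ) • (fun k l => sMat 1 0 0 (rho _ g⁻¹ k) (rho _ g⁻¹ l)) := by
      funext i j; rw [cr_conj_pure _ sq_pure, cr_sq_eq]; simp
    have e2 : cr (φ (g * sN 0 ^ 2 * g⁻¹)) =
        (2 : ℕ) • (fun k l => sMat a b c (rho _ g⁻¹ k) (rho _ g⁻¹ l)) := by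
      funext i j
      rw [map_mul, map_mul, map_inv, cr_conj_pure _ (hφ.pure sq_pure), hs.eq, ← map_inv,
        (hφ g⁻¹).1]; simp
    rw [e1, e2, map_nsmul, map_nsmul, hf, nsmul_eq_mul, nsmul_eq_mul]; ring

/-- The eigenvalue of an automorphism on an integral functional is a unit, since the inverse
automorphism has an eigenvalue too; being congruent to one modulo three, it is one. -/
theorem eig_one {φ : MulAut (Br (n+2))} (hφ : Tri φ) {a b c a' b' c' : ℤ} (hs : Shape φ a b c)
    (hs' : Shape φ⁻¹ a' b' c') (f : (Fin (n+3) → Fin (n+3) → ℤ) →+ ℤ) (Λ : ℤ → ℤ → ℤ → ℤ)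
    (hf : ∀ a b c, ∀ p : Equiv.Perm (Fin (n+3)), f (fun k l => sMat a b c (p k) (p l)) =
      Λ a b c * f (fun k l => sMat 1 0 0 (p k) (p l)))
    (hΛ : 3 ∣ Λ a b c - 1) (h0 : f (sMat 1 0 0) ≠ 0) : Λ a b c = 1 := by
  have h1 := eig hφ hs f _ (hf a b c) (φ⁻¹ (sN 0 ^ 2)) (hφ.inv.pure sq_pure)
  have h2 := eig hφ.inv hs' f _ (hf a' b' c') (sN 0 ^ 2) sq_pure
  rw [MulAut.apply_inv_self, h2] at h1
  have e : cr (sN 0 ^ 2 : Br (n+2)) = (2 : ℕ) • sMat 1 0 0 := by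
    funext i j; rw [cr_sq_eq]; simp
  rw [e, map_nsmul, nsmul_eq_mul] at h1
  have h3 : Λ a b c * Λ a' b' c' = 1 := by
    have : ((2 : ℕ) : ℤ) * f (sMat 1 0 0) ≠ 0 := mul_ne_zero (by norm_num) h0
    apply mul_right_cancel₀ this
    linarith
  rcases Int.eq_one_or_neg_one_of_mul_eq_one h3 with h | h
  · exact h
  · rw [h] at hΛ; norm_num at hΛ

/-- Three eigenvalues determine the shape: the difference of two row sums, the total sum, and, when
there are at least four strands, an alternating sum over a quadrilateral of strands. -/
theorem shape_eq {φ : MulAut (Br (n+2))} (hφ : Tri φ) {a b c : ℤ} (hs : Shape φ a b c) :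
    a = 1 ∧ b = 0 ∧ c = 0 := by
  obtain ⟨a', b', c', hs'⟩ := exists_shape hφ.inv
  obtain ⟨a1, ha1⟩ := hs.ha
  obtain ⟨b1, hb1⟩ := hs.hb
  obtain ⟨c1, hc1⟩ := hs.hc
  have hsum : ∀ a b c (p : Equiv.Perm (Fin (n+3))) (k : Fin (n+3)),
      ∑ l, sMat a b c (p k) (p l) =
      (n + 2) * c + 2 * (b - c) + ((n + 1) * (b - c) + (a - 2 * b + c)) * chi (p k) := by
    intro a b c p k
    rw [Equiv.sum_comp p (fun j => sMat a b c (p k) j), sum_sMat]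
  -- the difference of two row sums is an eigenfunctional
  have hD : (n + 1) * (b - c) + (a - 2 * b + c) = 1 := by
    refine eig_one hφ hs hs' (AddMonoidHom.mk' (fun x => ∑ l, x 0 l - ∑ l, x 2 l) ?_)
      (fun a b c => (n + 1) * (b - c) + (a - 2 * b + c)) ?_ ?_ ?_
    · intro x y; simp only [Pi.add_apply, Finset.sum_add_distrib]; ring
    · intro a b c p
      simp only [AddMonoidHom.mk'_apply, hsum]; ring
    · exact ⟨(n+1) * (b1 - c1) + a1 - 2 * b1 + c1, by rw [hb1, hc1]; linear_combination ha1⟩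
    · simp only [AddMonoidHom.mk'_apply, sum_sMat]; simp [chi_zero, chi_two]
  -- the total sum is an eigenfunctional; the number of pairs is an integer `T`
  obtain ⟨T, hT⟩ : ∃ T : ℤ, (n + 3 : ℤ) * (n + 2) = 2 * T := by
    have h := Int.even_mul_succ_self (n + 2)
    obtain ⟨T, hT⟩ := h
    exact ⟨T, by linear_combination hT⟩
  have hE : T * c + 2 * (n + 2) * (b - c) + (a - 2 * b + c) = 1 := by
    refine eig_one hφ hs hs' (AddMonoidHom.mk' (fun x => ∑ k, ∑ l, x k l) ?_)
      (fun a b c => T * c + 2 * (n + 2) * (b - c) + (a - 2 * b + c)) ?_ ?_ ?_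
    · intro x y; simp only [Pi.add_apply, Finset.sum_add_distrib]
    · intro a b c p
      have h2 : ∑ k, chi (p k) = 2 := by rw [Equiv.sum_comp p chi, sum_chi]
      simp only [AddMonoidHom.mk'_apply, hsum, Finset.sum_add_distrib, ← Finset.mul_sum, h2,
        Finset.sum_const, Finset.card_univ, Fintype.card_fin, nsmul_eq_mul]
      push_cast
      linear_combination c * hT
    · exact ⟨T * c1 + 2 * (n+2) * (b1 - c1) + a1 - 2 * b1 + c1, by
        rw [hb1, hc1]; linear_combination ha1⟩
    · simp only [AddMonoidHom.mk'_apply, sum_sMat, Finset.sum_add_distrib, ← Finset.mul_sum,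
        sum_chi]; simp
  have hbc : b = c := by
    by_cases hn : n = 0
    · exact (hs.h0 hn).symm
    · have hF : a - 2 * b + c = 1 := by
        have h3 : (3 : ℕ) < n + 3 := by omega
        refine eig_one hφ hs hs' (AddMonoidHom.mk' (fun x => x 0 1 + x 2 ⟨3, h3⟩ - x 0 2 -
          x 1 ⟨3, h3⟩) ?_) (fun a b c => a - 2 * b + c) ?_ ?_ ?_
        · intro x y; simp only [Pi.add_apply]; ring
        · intro a b c p
          have e1 : p 0 ≠ p 1 := by simp
          have e2 : p 2 ≠ p ⟨3, h3⟩ := by simp [Fin.ext_iff, two_mod]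
          have e3 : p 0 ≠ p 2 := by simp [Fin.ext_iff, two_mod]
          have e4 : p 1 ≠ p ⟨3, h3⟩ := by simp [Fin.ext_iff]
          simp only [AddMonoidHom.mk'_apply, sMat, if_neg e1, if_neg e2, if_neg e3, if_neg e4]
          ring
        · exact ⟨a1 - 2 * b1 + c1, by rw [hb1, hc1]; linear_combination ha1⟩
        · simp [sMat, chi_zero, chi_one, chi_two, chi_three, Fin.ext_iff, two_mod]
      have h4 : ((n : ℤ) + 1) * (b - c) = 0 := by linarith
      rcases mul_eq_zero.1 h4 with h | h
      · omega
      · omega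
  subst hbc
  have hT0 : T ≠ 0 := by rintro rfl; nlinarith [hT, Int.natCast_nonneg n]
  have h5 : T * b = 0 := by linarith
  have hb0 : b = 0 := by
    rcases mul_eq_zero.1 h5 with h | h
    · exact absurd h hT0
    · exact h
  subst hb0
  refine ⟨by linarith, rfl, rfl⟩

/-- An automorphism preserving crossing numbers modulo three preserves those of pure braids. -/
theorem cr_of_tri {φ : MulAut (Br (n+2))} (hφ : Tri φ) {y : Br (n+2)} (hy : y ∈ pureBr (n+2))
    (i j : Fin (n+3)) : cr (φ y) i j = cr y i j := by
  obtain ⟨a, b, c, hs⟩ := exists_shape hφ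
  obtain ⟨rfl, rfl, rfl⟩ := shape_eq hφ hs
  have := eig hφ hs (AddMonoidHom.mk' (fun x => x i j) (fun x y => rfl)) 1
    (fun p => by simp) y hy
  simpa using this

end BraidOrbit

namespace BraidOrbit
open FreeGroup (of)

variable {n : ℕ}

/-! ### Automorphisms preserving linking numbers are inner -/

/-- The automorphism preserves the permutation of every braid and the crossing numbers of every
pure braid. -/
def LP (φ : MulAut (Br n)) : Prop :=
  (∀ g, rho n (φ g) = rho n g) ∧ ∀ y ∈ pureBr n, ∀ i j, cr (φ y) i j = cr y i j

theorem Tri.lp {φ : MulAut (Br (n+2))} (h : Tri φ) : LP φ :=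
  ⟨fun g => (h g).1, fun _ hy i j => cr_of_tri h hy i j⟩

theorem LP.pure {φ : MulAut (Br n)} (h : LP φ) {g : Br n} (hg : g ∈ pureBr n) :
    φ g ∈ pureBr n := by
  rw [mem_pure, h.1]; exact hg

theorem LP.inv {φ : MulAut (Br n)} (h : LP φ) : LP φ⁻¹ := by
  have h1 : ∀ g, rho n (φ⁻¹ g) = rho n g := fun g => by
    rw [← h.1 (φ⁻¹ g), MulAut.apply_inv_self]
  refine ⟨h1, fun y hy i j => ?_⟩
  rw [← h.2 (φ⁻¹ y) (by rw [mem_pure, h1]; exact hy), MulAut.apply_inv_self]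

theorem LP.mul {φ ψ : MulAut (Br n)} (h : LP φ) (h' : LP ψ) : LP (φ * ψ) :=
  ⟨fun g => by rw [MulAut.mul_apply, h.1, h'.1], fun y hy i j => by
    rw [MulAut.mul_apply, h.2 _ (h'.pure hy), h'.2 y hy]⟩

theorem lp_conj {p : Br n} (hp : p ∈ pureBr n) : LP (MulAut.conj p) := by
  have h1 := mem_pure.1 hp
  refine ⟨fun g => by simp [h1], fun y hy i j => ?_⟩
  rw [MulAut.conj_apply, cr_conj_pure _ hy, map_inv, h1]; simp

theorem fg_map {G H : Type*} [Group G] [Group H] (f : G →* H) (V : Subgroup G) (hF : V.FG) :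
    (V.map f).FG := by
  classical
  obtain ⟨S, hS⟩ := hF
  exact ⟨S.image f, by rw [← hS, MonoidHom.map_closure]; simp⟩

/-- The crossing numbers confine the image of the point-pushing subgroup: its projection to the
braid group on one strand less is finitely generated, normalized by pure braids, and unlinked. -/
theorem lp_pu {φ : MulAut (Br (n+1))} (hφ : LP φ) (u : FreeGroup (Fin (n+1))) :
    ∃ u', φ (pu n u) = pu n u' := by
  let W : Subgroup (Br (n+1)) := (pu n).range.map φ.toMonoidHom
  have hWle : W ≤ (th n).range := by
    rintro _ ⟨_, ⟨u, rfl⟩, rfl⟩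
    obtain ⟨x, hx⟩ := exists_th_of_pure (hφ.pure (pu_pure u))
    exact ⟨x, hx⟩
  have hWfg : W.FG := by
    have h1 : (⊤ : Subgroup (FreeGroup (Fin (n+1)))).FG := Group.FG.out
    have h2 := fg_map φ.toMonoidHom _ (fg_map (pu n) _ h1)
    rwa [← MonoidHom.range_eq_map] at h2
  let V : Subgroup (Br n) := (W.comap (th n)).map SemidirectProduct.rightHom
  have hVfg : V.FG := fg_map _ _ (fg_comap (th n) th_injective W hWle hWfg)
  have hmem : ∀ v ∈ V, ∃ x : SD n, ∃ u, x.right = v ∧ th n x = φ (pu n u) := by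
    rintro _ ⟨x, ⟨_, ⟨u, rfl⟩, hu⟩, rfl⟩
    exact ⟨x, u, rfl, hu.symm⟩
  have hV : V = ⊥ := by
    refine pure_fg_trivial V hVfg ?_ ?_ ?_
    · intro v hv
      obtain ⟨x, u, rfl, hx⟩ := hmem v hv
      rw [← th_pure_iff, hx]
      exact hφ.pure (pu_pure u)
    · intro g hg v hv
      obtain ⟨x, u, rfl, hx⟩ := hmem v hv
      have hg' : th n ⟨1, g⟩ ∈ pureBr (n+1) := (th_pure_iff _).2 hg
      obtain ⟨y, hy⟩ := exists_th_of_pure (hφ.inv.pure hg')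
      have hy' : φ (th n y) = th n ⟨1, g⟩ := by rw [hy, MulAut.apply_inv_self]
      refine ⟨⟨1, g⟩ * x * ⟨1, g⟩⁻¹, ⟨_, ⟨y.left * art n y.right u * y.left⁻¹, rfl⟩, ?_⟩, ?_⟩
      · rw [← conj_pu_th]
        simp only [MulEquiv.toMonoidHom_eq_coe, MonoidHom.coe_coe, map_mul, map_inv, hy', hx]
      · simp
    · intro v hv i j
      obtain ⟨x, u, rfl, hx⟩ := hmem v hv
      rw [← cr_th_succ, hx, hφ.2 _ (pu_pure u), cr_pu_succ]
  obtain ⟨x, hx⟩ := exists_th_of_pure (hφ.pure (pu_pure u))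
  have hxV : x.right ∈ V := ⟨x, ⟨_, ⟨u, rfl⟩, hx.symm⟩, rfl⟩
  rw [hV, Subgroup.mem_bot] at hxV
  refine ⟨x.left, ?_⟩
  rw [← hx, th_apply, hxV, map_one, mul_one]

/-- The automorphism induced on the braid group on one strand less. -/
theorem exists_bar {φ : MulAut (Br (n+1))} (hφ : LP φ) : ∃ ψ : MulAut (Br n), LP ψ ∧
    ∀ x : SD n, ∃ u, φ (th n x) = th n ⟨u, ψ x.right⟩ := by
  have key : ∀ φ : MulAut (Br (n+1)), LP φ → ∃ ψ : Br n →* Br n,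
      ∀ x : SD n, ∃ u, φ (th n x) = th n ⟨u, ψ x.right⟩ := by
    intro φ hφ
    have hex : ∀ x : SD n, ∃ y, th n y = φ (th n x) := fun x =>
      (mem_range_th_iff _).2 (by rw [hφ.1]; exact (mem_range_th_iff _).1 ⟨x, rfl⟩)
    choose k hk using hex
    let K : SD n →* SD n := MonoidHom.mk' k (fun x y => th_injective (by
      rw [hk, map_mul, map_mul, map_mul, hk, hk]))
    have hK : ∀ x, th n (K x) = φ (th n x) := hk
    refine ⟨SemidirectProduct.rightHom.comp (K.comp SemidirectProduct.inr), fun x => ?_⟩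
    refine ⟨(K x).left, ?_⟩
    rw [← hK]
    congr 1
    ext1
    · rfl
    · have hx : x = SemidirectProduct.inl x.left * SemidirectProduct.inr x.right :=
        (SemidirectProduct.inl_left_mul_inr_right x).symm
      obtain ⟨u', hu'⟩ := lp_pu hφ x.left
      have h1 : K (SemidirectProduct.inl x.left) = ⟨u', 1⟩ := th_injective (by
        rw [hK, th_mk u', map_one (sh n), mul_one, ← hu', th_apply]; simp)
      conv_lhs => rw [hx, map_mul, h1]
      simp
  obtain ⟨ψ, hψ⟩ := key φ hφ
  obtain ⟨ψ', hψ'⟩ := key φ⁻¹ hφ.inv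
  have inv1 : ψ'.comp ψ = MonoidHom.id _ := by
    refine MonoidHom.ext fun b => ?_
    obtain ⟨u, hu⟩ := hψ ⟨1, b⟩
    obtain ⟨u', hu'⟩ := hψ' ⟨u, ψ b⟩
    rw [← hu, MulAut.inv_apply_self] at hu'
    exact (congrArg (·.right) (th_injective hu')).symm
  have inv2 : ψ.comp ψ' = MonoidHom.id _ := by
    refine MonoidHom.ext fun b => ?_
    obtain ⟨u, hu⟩ := hψ' ⟨1, b⟩
    obtain ⟨u', hu'⟩ := hψ ⟨u, ψ' b⟩
    rw [← hu, MulAut.apply_inv_self] at hu'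
    exact (congrArg (·.right) (th_injective hu')).symm
  refine ⟨MonoidHom.toMulEquiv ψ ψ' inv1 inv2, ⟨fun g => ?_, fun y hy i j => ?_⟩, hψ⟩
  · obtain ⟨u, hu⟩ := hψ ⟨1, g⟩
    ext1 j
    apply Fin.succ_injective
    have := rho_th_succ ⟨u, ψ g⟩ j
    rw [← hu, hφ.1, rho_th_succ] at this
    exact this.symm
  · obtain ⟨u, hu⟩ := hψ ⟨1, y⟩
    have := cr_th_succ ⟨u, ψ y⟩ i j
    rw [← hu, hφ.2 _ ((th_pure_iff _).2 hy), cr_th_succ] at this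
    exact this.symm

/-- After an inner correction, an automorphism inducing the identity on one strand less fixes the
stabilizer of the zeroth strand pointwise. -/
theorem exists_fix_th {φ : MulAut (Br (n+2))} (hφ : LP φ)
    (hbar : ∀ x : SD (n+1), ∃ u, φ (th (n+1) x) = th (n+1) ⟨u, x.right⟩) :
    ∃ v, ∀ x, φ (th (n+1) x) = pu (n+1) v * th (n+1) x * (pu (n+1) v)⁻¹ := by
  have h01 : (0 : Fin (n+2)) ≠ 1 := by simp
  have hex := lp_pu hφ
  choose f hf using hex
  have hex' := lp_pu hφ.inv
  choose f' hf' using hex'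
  have hff' : ∀ u, f (f' u) = u := fun u => pu_injective (by
    rw [← hf, ← hf', MulAut.apply_inv_self])
  have hf'f : ∀ u, f' (f u) = u := fun u => pu_injective (by
    rw [← hf', ← hf, MulAut.inv_apply_self])
  obtain ⟨u, hu⟩ := hbar ⟨of 0, pT (n+1)⟩
  -- the rotation braid is moved by a point-push `w`, which is a cocycle of norm one
  obtain ⟨w, hw⟩ : ∃ w, φ (yrot (n+1)) = pu (n+1) w * yrot (n+1) := by
    refine ⟨u * (of 0)⁻¹, ?_⟩
    rw [yrot, hu, th_mk, th_mk, map_mul, map_inv]; group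
  have hpow : ∀ k, (pu (n+1) w * yrot (n+1)) ^ k = pu (n+1) (rnorm w k) * yrot (n+1) ^ k := by
    intro k
    induction k with
    | zero => simp [rnorm]
    | succ k ih =>
      rw [pow_succ', ih, rnorm, map_mul, ← conj_pu_yrot, pow_succ']; group
  have hcomm : ∀ z, yrot (n+1) ^ (n+2) * pu (n+1) z * (yrot (n+1) ^ (n+2))⁻¹ = pu (n+1) z := by
    intro z
    have : ∀ k : ℕ, yrot (n+1) ^ k * pu (n+1) z * (yrot (n+1) ^ k)⁻¹
        = pu (n+1) ((rot (n+1) ^ k) z) := by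
      intro k
      induction k with
      | zero => simp
      | succ k ih =>
        rw [pow_succ' (rot (n+1)), MulAut.mul_apply, ← conj_pu_yrot, ← ih, pow_succ']; group
    rw [this, rot_pow_self]
  have hr : rnorm w (n+2) = 1 := by
    refine center_trivial h01 fun z => pu_injective ?_
    have h1 := congrArg φ (hcomm (f' z))
    rw [map_mul, map_mul, map_inv, map_pow, hf, hff', hw, hpow] at h1
    have h2 := hcomm z
    rw [map_mul, map_mul]
    calc pu (n+1) (rnorm w (n+2)) * pu (n+1) z
        = (pu (n+1) (rnorm w (n+2)) * yrot (n+1) ^ (n+2)) * ((yrot (n+1) ^ (n+2))⁻¹ *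
            (yrot (n+1) ^ (n+2) * pu (n+1) z * (yrot (n+1) ^ (n+2))⁻¹) * yrot (n+1) ^ (n+2)) *
            (yrot (n+1) ^ (n+2))⁻¹ := by nth_rw 1 [← h2]; group
      _ = (pu (n+1) (rnorm w (n+2)) * yrot (n+1) ^ (n+2)) * pu (n+1) z *
            (pu (n+1) (rnorm w (n+2)) * yrot (n+1) ^ (n+2))⁻¹ * pu (n+1) (rnorm w (n+2)) := by
          group
      _ = _ := by rw [h1]
  obtain ⟨v, rfl⟩ := exists_of_rnorm_eq_one w hr
  refine ⟨v, ?_⟩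
  let φ' : MulAut (Br (n+2)) := (MulAut.conj (pu (n+1) v))⁻¹ * φ
  have hφ' : LP φ' := (lp_conj (pu_pure v)).inv.mul hφ
  have happ : ∀ g, φ' g = (pu (n+1) v)⁻¹ * φ g * pu (n+1) v := fun g => by
    simp [φ']
  have hy : φ' (yrot (n+1)) = yrot (n+1) := by
    rw [happ, hw, map_mul, map_inv, ← conj_pu_yrot]; group
  -- the automorphism of the free group induced by the corrected automorphism
  let F : FreeGroup (Fin (n+2)) →* FreeGroup (Fin (n+2)) := MonoidHom.mk' f (fun x y =>
    pu_injective (by rw [← hf, map_mul, map_mul, map_mul, hf, hf]))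
  let F' : FreeGroup (Fin (n+2)) →* FreeGroup (Fin (n+2)) := MonoidHom.mk' f' (fun x y =>
    pu_injective (by rw [← hf', map_mul, map_mul, map_mul, hf', hf']))
  let Φ : MulAut (FreeGroup (Fin (n+2))) := MonoidHom.toMulEquiv F F'
    (MonoidHom.ext hf'f) (MonoidHom.ext hff')
  let Ψ : MulAut (FreeGroup (Fin (n+2))) := (MulAut.conj v)⁻¹ * Φ
  have hΨ : ∀ x, φ' (pu (n+1) x) = pu (n+1) (Ψ x) := by
    intro x
    have : Ψ x = v⁻¹ * f x * v := by
      change (MulAut.conj v)⁻¹ (f x) = _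
      rw [MulAut.conj_inv_apply]
    rw [this, happ, hf]; simp
  have hΨ1 : Ψ = 1 := by
    refine rot_rigid Ψ (fun x => pu_injective ?_) (fun k x => ?_)
    · rw [← hΨ, ← conj_pu_yrot, ← conj_pu_yrot, map_mul, map_mul, map_inv, hy, hΨ]
    · have h1 := cr_pu_zero (Ψ x) k
      have h2 := cr_pu_zero x k
      rw [← hΨ, hφ'.2 _ (pu_pure x)] at h1
      apply Multiplicative.toAdd.injective
      linarith
  have hfix : ∀ x, φ' (pu (n+1) x) = pu (n+1) x := fun x => by rw [hΨ, hΨ1]; rfl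
  intro x
  suffices h : φ' (th (n+1) x) = th (n+1) x by
    rw [happ] at h
    calc φ (th (n+1) x) = pu (n+1) v * ((pu (n+1) v)⁻¹ * φ (th (n+1) x) * pu (n+1) v) *
          (pu (n+1) v)⁻¹ := by group
      _ = _ := by rw [h]
  obtain ⟨c, hc⟩ : ∃ c, φ' (th (n+1) x) = pu (n+1) c * th (n+1) x := by
    obtain ⟨u, hu⟩ := hbar x
    refine ⟨v⁻¹ * u * art (n+1) x.right v * x.left⁻¹, ?_⟩
    rw [happ, hu, th_mk, th_apply, map_mul, map_mul, map_mul, pu_art, map_inv, map_inv]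
    group
  have hc1 : c = 1 := by
    refine center_trivial h01 fun z => pu_injective ?_
    have h1 := hfix (x⁻¹.left * art (n+1) x⁻¹.right z * x⁻¹.left⁻¹)
    have h2 := hfix z
    have h3 := conj_pu_th x⁻¹ z
    have h4 : pu (n+1) z = th (n+1) x * pu (n+1) (x⁻¹.left * art (n+1) x⁻¹.right z * x⁻¹.left⁻¹)
        * (th (n+1) x)⁻¹ := by rw [← h3, map_inv]; group
    have h5 := congrArg φ' h4
    rw [map_mul, map_mul, map_inv, h1, h2, hc] at h5
    rw [map_mul, map_mul]
    calc pu (n+1) c * pu (n+1) z = _ := by rw [h4]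
      _ = (pu (n+1) c * th (n+1) x * pu (n+1) (x⁻¹.left * art (n+1) x⁻¹.right z * x⁻¹.left⁻¹) *
          (pu (n+1) c * th (n+1) x)⁻¹) * pu (n+1) c := by group
      _ = _ := by rw [← h5]
  rw [hc, hc1, map_one, one_mul]

/-- If the stabilizer of the zeroth strand is fixed pointwise, the first generator is moved by a
factor that centralizes the pure braid group and has vanishing crossing numbers. -/
theorem eq_one_of_fix_th {φ : MulAut (Br (n+2))} (hφ : LP φ)
    (hfix : ∀ x, φ (th (n+1) x) = th (n+1) x) : φ = 1 := by
  have hP : ∀ p ∈ pureBr (n+2), φ p = p := by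
    intro p hp
    obtain ⟨x, rfl⟩ := exists_th_of_pure hp
    exact hfix x
  set a : Br (n+2) := s 0 with ha
  have ea : a = sN 0 := (sN_val (0 : Fin (n+2))).symm
  have rhoa : rho _ a = Equiv.swap 0 1 := rho_s _
  set z := a⁻¹ * φ a with hz
  have hφa : φ a = a * z := by rw [hz]; group
  have hzP : z ∈ pureBr (n+2) := by rw [mem_pure, hz, map_mul, hφ.1, ← map_mul]; simp
  have hcen : ∀ p ∈ pureBr (n+2), z * p = p * z := by
    intro p hp
    have h1 := hP _ ((inferInstance : (pureBr (n+2)).Normal).conj_mem p hp a)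
    rw [map_mul, map_mul, map_inv, hP p hp, hφa] at h1
    have h2 := congrArg (fun t => a⁻¹ * t * a * z) h1
    simp only [mul_inv_rev] at h2
    calc z * p = a⁻¹ * (a * z * p * (z⁻¹ * a⁻¹)) * a * z := by group
      _ = _ := by rw [h2]; group
  have hsq : z = a⁻¹ * z⁻¹ * a⁻¹⁻¹ := by
    have h1 : φ (a ^ 2) = a ^ 2 := hP _ (by rw [ea]; exact sq_pure)
    rw [map_pow, hφa] at h1
    have h2 : a * (z * a * z) = a * a := by rw [← pow_two, ← h1, pow_two]; group
    have h3 := mul_left_cancel h2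
    calc z = a⁻¹ * z⁻¹ * (z * a * z) := by group
      _ = _ := by rw [h3]; group
  have hanti : ∀ i j, cr z (Equiv.swap 0 1 i) (Equiv.swap 0 1 j) = - cr z i j := by
    intro i j
    have h1 := cr_conj_pure a⁻¹ (inv_mem hzP) i j
    rw [← hsq, cr_inv_pure hzP, inv_inv, rhoa] at h1
    linarith
  have hc01 : cr z 0 1 = 0 := by
    have := hanti 0 1
    rw [Equiv.swap_apply_left, Equiv.swap_apply_right, cr_symm] at this
    linarith
  obtain ⟨x, hx⟩ := exists_th_of_pure hzP
  have hrx : rho _ x.right = 1 := by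
    have := (th_pure_iff x).1 (hx ▸ hzP); exact this
  have hexp : ∀ i j, (expo i x.left).toAdd = (expo j x.left).toAdd := by
    intro i j
    have h1 := hcen _ (pu_pure (xi (n+1)))
    have h2 := conj_pu_th x (xi (n+1))
    rw [hx, h1, mul_inv_cancel_right, art_xi] at h2
    have h3 := pu_injective h2
    have h4 : x.left * xi (n+1) = xi (n+1) * x.left := by
      nth_rw 2 [h3]; group
    have := expo_of_commute h4 i j
    rw [expo_xi, expo_xi] at this
    linarith
  have hc0 : ∀ j, cr z 0 j = 0 := by
    intro j
    refine Fin.cases (cr_self _ _) (fun j => ?_) j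
    have h1 := cr_th_zero x j
    have h2 := cr_th_zero x 0
    rw [hrx, hx] at h1 h2
    rw [h1, hexp _ 0]
    rw [← hc01]
    exact h2.symm
  have hcr : ∀ i j, cr z i j = 0 := by
    intro i j
    by_cases hi0 : i = 0
    · rw [hi0, hc0]
    by_cases hj0 : j = 0
    · rw [hj0, cr_symm, hc0]
    by_cases hi1 : i = 1
    · have := hanti i j
      rw [hi1, Equiv.swap_apply_right, hc0] at this
      rw [hi1]; linarith
    by_cases hj1 : j = 1
    · have := hanti i j
      rw [hj1, Equiv.swap_apply_right, cr_symm, hc0] at this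
      rw [hj1]; linarith
    have := hanti i j
    rw [Equiv.swap_apply_of_ne_of_ne hi0 hi1, Equiv.swap_apply_of_ne_of_ne hj0 hj1] at this
    linarith
  have hz1 : z = 1 := by
    have hb : Subgroup.zpowers z = ⊥ := by
      refine pure_fg_trivial _ ⟨{z}, by simp [Subgroup.zpowers_eq_closure]⟩ ?_ ?_ ?_
      · rw [Subgroup.zpowers_le]; exact hzP
      · intro g hg v hv
        obtain ⟨k, rfl⟩ := Subgroup.mem_zpowers_iff.1 hv
        have : Commute z g := hcen g hg
        rw [(this.zpow_left k).symm.eq, mul_inv_cancel_right]; exact hv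
      · intro v hv i j
        rw [Subgroup.zpowers_eq_closure] at hv
        suffices h : v ∈ pureBr (n+2) ∧ cr v i j = 0 from h.2
        induction hv using Subgroup.closure_induction with
        | mem v hv => rw [Set.mem_singleton_iff.1 hv]; exact ⟨hzP, hcr i j⟩
        | one => exact ⟨one_mem _, by simp⟩
        | mul v w _ _ h1 h2 =>
          exact ⟨mul_mem h1.1 h2.1, by rw [cr_mul_pure _ h2.1, h1.2, h2.2, add_zero]⟩
        | inv v _ h1 => exact ⟨inv_mem h1.1, by rw [cr_inv_pure h1.1, h1.2, neg_zero]⟩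
    exact Subgroup.zpowers_eq_bot.1 hb
  have hs : ∀ k : Fin (n+2), φ (s k) = s k := by
    intro k
    refine Fin.cases ?_ (fun k => ?_) k
    · rw [← ha, hφa, hz1, mul_one]
    · have := hfix ⟨1, s k⟩
      rwa [th_mk, map_one, one_mul, sh_s] at this
  have := br_hom_ext (f := φ.toMonoidHom) (g := MonoidHom.id _) hs
  ext g
  exact DFunLike.congr_fun this g

theorem br_one (g : Br 1) : ∃ k : ℤ, g = s 0 ^ k := by
  induction g using br_induction with
  | h1 => exact ⟨0, by simp⟩
  | hm g i ih =>
    obtain ⟨k, rfl⟩ := ih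
    rw [Subsingleton.elim i 0]; exact ⟨k + 1, by rw [zpow_add_one]⟩
  | hi g i ih =>
    obtain ⟨k, rfl⟩ := ih
    rw [Subsingleton.elim i 0]; exact ⟨k - 1, by rw [zpow_sub_one]⟩

theorem cr_br_one (k : ℤ) : cr (s 0 ^ k : Br 1) 0 1 = k := by
  have h1 : ∀ g : Br 1, cr (g * s 0) 0 1 = cr g 0 1 + 1 := by
    intro g
    rw [cr_mul, rho_s, cr_s]
    simp [pairInd]
    rw [cr_symm, add_comm]
  induction k with
  | zero => simp
  | succ k ih => rw [zpow_add_one, h1, ih]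
  | pred k ih =>
    have := h1 (s 0 ^ (-(k : ℤ) - 1))
    rw [← zpow_add_one, sub_add_cancel, ih] at this
    linarith

/-- The image of the generator under an automorphism of the infinite cyclic two-strand group. -/
theorem aut_br_one (φ : MulAut (Br 1)) : ∃ k : ℤ, (k = 1 ∨ k = -1) ∧ φ (s 0) = s 0 ^ k := by
  obtain ⟨k, hk⟩ := br_one (φ (s 0))
  obtain ⟨l, hl⟩ := br_one (φ⁻¹ (s 0))
  refine ⟨k, ?_, hk⟩
  have h1 : φ (φ⁻¹ (s 0)) = s 0 := MulAut.apply_inv_self ..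
  rw [hl, map_zpow, hk, ← zpow_mul] at h1
  have h2 := congrArg (fun g => cr g 0 1) h1
  have h3 := cr_br_one 1
  rw [zpow_one] at h3
  simp only [cr_br_one, h3] at h2
  exact Int.eq_one_or_neg_one_of_mul_eq_one h2

theorem aut_br_one_eq {φ : MulAut (Br 1)} (h : φ (s 0) = s 0) : φ = 1 := by
  have := br_hom_ext (f := φ.toMonoidHom) (g := MonoidHom.id _) (fun k => by
    rw [Subsingleton.elim k 0]; exact h)
  ext g
  exact DFunLike.congr_fun this g

/-- Induction on the number of strands: the automorphism induced on one strand less is inner, so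
after a correction it is the identity, and the remaining discrepancy is conjugation by a point-push. -/
theorem inner_of_lp {φ : MulAut (Br (n+1))} (hφ : LP φ) :
    ∃ p ∈ pureBr (n+1), φ = MulAut.conj p := by
  induction n with
  | zero =>
    refine ⟨1, one_mem _, ?_⟩
    rw [map_one]
    obtain ⟨k, hk, h⟩ := aut_br_one φ
    apply aut_br_one_eq
    rcases hk with rfl | rfl
    · rw [h, zpow_one]
    · exfalso
      have e : (sN 0 : Br 1) = s 0 := sN_val (0 : Fin 1)
      have h1 := hφ.2 _ (sq_pure (n := 1)) 0 1
      rw [e, map_pow, h, ← zpow_natCast, ← zpow_natCast, ← zpow_mul, cr_br_one, cr_br_one] at h1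
      norm_num at h1
  | succ n ih =>
    obtain ⟨ψ, hψ, hbar⟩ := exists_bar hφ
    obtain ⟨b, hb, rfl⟩ := ih hψ
    have hsb : sh (n+1) b ∈ pureBr (n+2) := by
      have := (th_pure_iff (⟨1, b⟩ : SD (n+1))).2 hb
      rwa [th_mk, map_one, one_mul] at this
    have hφ' : LP ((MulAut.conj (sh (n+1) b))⁻¹ * φ) := (lp_conj hsb).inv.mul hφ
    obtain ⟨v, hv⟩ := exists_fix_th hφ' (fun x => by
      obtain ⟨u, hu⟩ := hbar x
      refine ⟨art (n+1) b⁻¹ u, ?_⟩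
      rw [MulAut.mul_apply, hu, MulAut.conj_inv_apply, th_mk, th_mk, pu_art, MulAut.conj_apply,
        map_mul, map_mul, map_inv]
      group)
    have hφ'' := (lp_conj (pu_pure v)).inv.mul hφ'
    have h1 := eq_one_of_fix_th hφ'' (fun x => by
      rw [MulAut.mul_apply, hv, MulAut.conj_inv_apply]; group)
    refine ⟨sh (n+1) b * pu (n+1) v, mul_mem hsb (pu_pure v), ?_⟩
    rw [map_mul, ← mul_one (_ * _ : MulAut _), ← h1]
    group

/-- On two strands an automorphism is trivial or inverts the generator, and the crossing number
modulo three excludes the latter. -/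
theorem inner_of_tri {φ : MulAut (Br (n+1))} (hφ : Tri φ) : ∃ p, φ = MulAut.conj p := by
  cases n with
  | zero =>
    refine ⟨1, ?_⟩
    rw [map_one]
    obtain ⟨k, hk, h⟩ := aut_br_one φ
    apply aut_br_one_eq
    rcases hk with rfl | rfl
    · rw [h, zpow_one]
    · exfalso
      have h1 := (hφ (s 0)).2 0 1
      have h3 := cr_br_one 1
      rw [zpow_one] at h3
      rw [h, cr_br_one, h3] at h1
      revert h1; decide
  | succ n =>
    obtain ⟨p, -, h⟩ := inner_of_lp hφ.lp
    exact ⟨p, h⟩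

/-- Modulo inner automorphisms, an automorphism is determined by the permutations and the crossing
numbers modulo three of the images of the generators: finitely much data. -/
theorem inner_of_crHom {φ ψ : MulAut (Br (n+1))}
    (h : ∀ k, crHom (ZMod 3) (n+1) (φ (s k)) = crHom (ZMod 3) (n+1) (ψ (s k))) :
    ∃ p, φ = MulAut.conj p * ψ := by
  have h0 : (crHom (ZMod 3) (n+1)).comp φ.toMonoidHom = (crHom (ZMod 3) (n+1)).comp ψ.toMonoidHom :=
    br_hom_ext h
  have h1 : ∀ g, crHom (ZMod 3) (n+1) (φ g) = crHom (ZMod 3) (n+1) (ψ g) :=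
    fun g => DFunLike.congr_fun h0 g
  have ht : Tri (φ * ψ⁻¹) := by
    intro g
    have h2 := h1 (ψ⁻¹ g)
    rw [MulAut.apply_inv_self] at h2
    rw [MulAut.mul_apply]
    refine ⟨?_, fun i j => ?_⟩
    · ext1 i
      have h3 := congrArg (fun p => (p ((i, i), 0)).1.1) h2
      simpa only [crHom_apply] using h3
    · have h3 := congrArg (fun p => (p ((i, j), 0)).2) h2
      simpa only [crHom_apply, zero_add] using h3
  obtain ⟨p, hp⟩ := inner_of_tri ht
  exact ⟨p, by rw [← hp]; group⟩

/-- A subgroup of automorphisms has finitely many classes modulo inner automorphisms. -/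
theorem exists_reps (A : Subgroup (MulAut (Br (n+1)))) : ∃ l : List (MulAut (Br (n+1))),
    (∀ ψ ∈ l, ψ ∈ A) ∧ ∀ α ∈ A, ∃ ψ ∈ l, ∃ p, α = MulAut.conj p * ψ := by
  classical
  let t : A → (Fin (n+1) → Equiv.Perm ((Fin (n+2) × Fin (n+2)) × ZMod 3)) :=
    fun α k => crHom (ZMod 3) (n+1) (α.1 (s k))
  have hfin : (Set.range t).Finite := Set.toFinite _
  choose r hr using fun y : Set.range t => y.2
  have := hfin.fintype
  refine ⟨(Finset.univ : Finset (Set.range t)).toList.map (fun y => (r y).1), ?_, ?_⟩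
  · intro ψ hψ
    obtain ⟨y, -, rfl⟩ := List.mem_map.1 hψ
    exact (r y).2
  · intro α hα
    refine ⟨(r ⟨t ⟨α, hα⟩, ⟨_, rfl⟩⟩).1, List.mem_map.2 ⟨_, by simp, rfl⟩, ?_⟩
    apply inner_of_crHom
    intro k
    exact (congrFun (hr ⟨t ⟨α, hα⟩, ⟨_, rfl⟩⟩) k).symm

end BraidOrbit

namespace BraidOrbit

variable {n : ℕ}

/-! ### The positive braid monoid -/

/-- Generators whose indices differ by more than one. -/
def Far (i j : Fin n) : Prop := (i : ℕ) + 1 < j ∨ (j : ℕ) + 1 < i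

/-- Generators whose indices differ by exactly one. -/
def Adj (i j : Fin n) : Prop := (i : ℕ) + 1 = j ∨ (j : ℕ) + 1 = i

theorem Far.symm {i j : Fin n} (h : Far i j) : Far j i := Or.symm h
theorem Adj.symm {i j : Fin n} (h : Adj i j) : Adj j i := Or.symm h

/-- The defining relations of the positive braid monoid. -/
inductive MRel : FreeMonoid (Fin n) → FreeMonoid (Fin n) → Prop
  | far {i j : Fin n} (h : Far i j) :
      MRel (FreeMonoid.of i * FreeMonoid.of j) (FreeMonoid.of j * FreeMonoid.of i)
  | adj {i j : Fin n} (h : Adj i j) :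
      MRel (FreeMonoid.of i * FreeMonoid.of j * FreeMonoid.of i)
        (FreeMonoid.of j * FreeMonoid.of i * FreeMonoid.of j)

/-- The positive braid monoid with `n` generators. -/
abbrev BM (n : ℕ) := PresentedMonoid (MRel (n := n))

/-- The generators of the positive braid monoid. -/
def gn (i : Fin n) : BM n := PresentedMonoid.of _ i

theorem gn_far {i j : Fin n} (h : Far i j) : gn i * gn j = gn j * gn i :=
  PresentedMonoid.mk_eq_mk_of_rel (.far h)

theorem gn_adj {i j : Fin n} (h : Adj i j) : gn i * gn j * gn i = gn j * gn i * gn j :=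
  PresentedMonoid.mk_eq_mk_of_rel (.adj h)

theorem far3 {i j : Fin n} (h : Far i j) (t : BM n) : gn i * (gn j * t) = gn j * (gn i * t) := by
  rw [← mul_assoc, gn_far h, mul_assoc]

theorem adj3 {i j : Fin n} (h : Adj i j) (t : BM n) :
    gn i * (gn j * (gn i * t)) = gn j * (gn i * (gn j * t)) := by
  rw [← mul_assoc, ← mul_assoc, gn_adj h, mul_assoc, mul_assoc]

/-- Word length in the positive monoid, as a homomorphism. -/
def mlHom (n : ℕ) : BM n →* Multiplicative ℕ :=
  PresentedMonoid.lift (fun _ => Multiplicative.ofAdd 1) (by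
    intro a b h
    cases h <;> simp)

/-- Word length in the positive monoid. -/
def ml (x : BM n) : ℕ := (mlHom n x).toAdd

@[simp] theorem ml_one : ml (1 : BM n) = 0 := by simp [ml]
@[simp] theorem ml_mul (x y : BM n) : ml (x * y) = ml x + ml y := by simp [ml]
@[simp] theorem ml_gn (i : Fin n) : ml (gn i) = 1 := rfl

theorem bm_induction {p : BM n → Prop} (h1 : p 1) (hm : ∀ i x, p x → p (gn i * x)) (x : BM n) :
    p x := by
  induction x using PresentedMonoid.inductionOn with
  | h a =>
    induction a using FreeMonoid.inductionOn' with
    | one => rw [map_one]; exact h1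
    | of_mul i a ih => rw [map_mul]; exact hm i _ ih

theorem bm_cases (x : BM n) : x = 1 ∨ ∃ i y, x = gn i * y := by
  induction x using bm_induction with
  | h1 => exact Or.inl rfl
  | hm i x _ => exact Or.inr ⟨i, x, rfl⟩

theorem eq_one_of_ml {x : BM n} (h : ml x = 0) : x = 1 := by
  rcases bm_cases x with rfl | ⟨i, y, rfl⟩
  · rfl
  · simp at h

/-- The conclusion of the key cancellation property for an equality `gn i * x = gn j * y`: it
arises from the defining relation between `gn i` and `gn j`. -/
def KRel (i j : Fin n) (x y : BM n) : Prop :=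
  (i = j ∧ x = y) ∨ (Far i j ∧ ∃ z, x = gn j * z ∧ y = gn i * z) ∨
    (Adj i j ∧ ∃ z, x = gn j * (gn i * z) ∧ y = gn i * (gn j * z))

theorem KRel.symm {i j : Fin n} {x y : BM n} (h : KRel i j x y) : KRel j i y x := by
  rcases h with ⟨rfl, rfl⟩ | ⟨h, z, rfl, rfl⟩ | ⟨h, z, rfl, rfl⟩
  · exact Or.inl ⟨rfl, rfl⟩
  · exact Or.inr (Or.inl ⟨h.symm, z, rfl, rfl⟩)
  · exact Or.inr (Or.inr ⟨h.symm, z, rfl, rfl⟩)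

/-- The key property for equalities of elements of length at most `L`. -/
def KUpTo (n L : ℕ) : Prop := ∀ (i j : Fin n) (x y : BM n), gn i * x = gn j * y → ml x < L →
  KRel i j x y

theorem KUpTo.self {L : ℕ} (H : KUpTo n L) {i : Fin n} {x y : BM n} (h : gn i * x = gn i * y)
    (hl : ml x < L) : x = y := by
  rcases H i i x y h hl with ⟨_, h⟩ | ⟨h, _⟩ | ⟨h, _⟩
  · exact h
  · unfold Far at h; omega
  · unfold Adj at h; omega

theorem KUpTo.far {L : ℕ} (H : KUpTo n L) {i j : Fin n} (hij : Far i j) {x y : BM n}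
    (h : gn i * x = gn j * y) (hl : ml x < L) : ∃ z, x = gn j * z ∧ y = gn i * z := by
  rcases H i j x y h hl with ⟨rfl, _⟩ | ⟨_, h⟩ | ⟨h, _⟩
  · unfold Far at hij; omega
  · exact h
  · unfold Far at hij; unfold Adj at h; omega

theorem KUpTo.adj {L : ℕ} (H : KUpTo n L) {i j : Fin n} (hij : Adj i j) {x y : BM n}
    (h : gn i * x = gn j * y) (hl : ml x < L) :
    ∃ z, x = gn j * (gn i * z) ∧ y = gn i * (gn j * z) := by
  rcases H i j x y h hl with ⟨rfl, _⟩ | ⟨h, _⟩ | ⟨_, h⟩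
  · unfold Adj at hij; omega
  · unfold Adj at hij; unfold Far at h; omega
  · exact h

/-- Overlap case of the key property: from `gn a * z1 = gn b * gn c * z2` with `c` far from `a` and
adjacent to `b`, the words obtained by moving `gn c` across are related as `a` and `b` prescribe. -/
theorem krel_far_adj {L : ℕ} (H : KUpTo n L) {a b c : Fin n} {z1 z2 : BM n} (hac : Far a c)
    (hcb : Adj c b) (hw : gn a * z1 = gn b * (gn c * z2)) (hl : ml z1 < L) :
    KRel a b (gn c * z1) (gn c * (gn b * z2)) := by
  have hlen := congrArg ml hw
  simp only [ml_mul, ml_gn] at hlen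
  rcases H a b _ _ hw hl with ⟨rfl, _⟩ | ⟨hab, z, rfl, h2⟩ | ⟨hab, z, rfl, h2⟩
  · exfalso; unfold Far at hac; unfold Adj at hcb; omega
  · simp only [ml_mul, ml_gn] at hl hlen
    obtain ⟨z', rfl, rfl⟩ := H.far hac.symm h2 (by omega)
    refine Or.inr (Or.inl ⟨hab, gn c * (gn b * z'), ?_, ?_⟩)
    · rw [adj3 hcb]
    · rw [far3 hac, far3 hab]
  · simp only [ml_mul, ml_gn] at hl hlen
    obtain ⟨z', rfl, h3⟩ := H.far hac.symm h2 (by omega)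
    simp only [ml_mul, ml_gn] at hl hlen
    obtain ⟨z'', rfl, rfl⟩ := H.adj hcb.symm h3 (by omega)
    refine Or.inr (Or.inr ⟨hab, gn c * (gn b * (gn a * z'')), ?_, ?_⟩)
    · rw [far3 hac (gn b * z''), adj3 hcb (gn a * (gn b * z'')), adj3 hab.symm z'',
        far3 hac.symm (gn b * (gn a * z''))]
    · rw [adj3 hab.symm (gn c * z''), far3 hac.symm (gn b * (gn a * (gn c * z''))), far3 hac z'',
        adj3 hcb (gn a * z'')]

/-- The key property is transitive as long as it holds in smaller length; the cases are the overlaps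
of two defining relations on three generators. -/
theorem krel_trans {L : ℕ} (H : KUpTo n L) {a b c : Fin n} {x w y : BM n} (h1 : KRel a c x w)
    (h2 : KRel c b w y) (hl : ml x ≤ L) : KRel a b x y := by
  rcases h1 with ⟨rfl, rfl⟩ | ⟨hac, z1, rfl, rfl⟩ | ⟨hac, z1, rfl, rfl⟩
  · exact h2
  · simp only [ml_mul, ml_gn] at hl
    rcases h2 with ⟨rfl, rfl⟩ | ⟨hcb, z2, h3, rfl⟩ | ⟨hcb, z2, h3, rfl⟩
    · exact Or.inr (Or.inl ⟨hac, z1, rfl, rfl⟩)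
    · rcases H a b _ _ h3 (by omega) with ⟨rfl, rfl⟩ | ⟨hab, z, rfl, rfl⟩ | ⟨hab, z, rfl, rfl⟩
      · exact Or.inl ⟨rfl, rfl⟩
      · exact Or.inr (Or.inl ⟨hab, gn c * z, far3 hcb _, far3 hac.symm _⟩)
      · refine Or.inr (Or.inr ⟨hab, gn c * z, ?_, ?_⟩)
        · rw [far3 hcb, far3 hac.symm]
        · rw [far3 hac.symm, far3 hcb]
    · exact krel_far_adj H hac hcb h3 (by omega)
  · simp only [ml_mul, ml_gn] at hl
    rcases h2 with ⟨rfl, rfl⟩ | ⟨hcb, z2, h3, rfl⟩ | ⟨hcb, z2, h3, rfl⟩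
    · exact Or.inr (Or.inr ⟨hac, z1, rfl, rfl⟩)
    · have hlen := congrArg ml h3
      simp only [ml_mul, ml_gn] at hlen
      exact (krel_far_adj H hcb.symm hac.symm h3.symm (by omega)).symm
    · have hlen := congrArg ml h3
      simp only [ml_mul, ml_gn] at hlen
      rcases H a b _ _ h3 (by simp; omega) with ⟨rfl, h4⟩ | ⟨hab, z, h4, h5⟩ | ⟨hab, _⟩
      · rw [H.self h4 (by omega)]; exact Or.inl ⟨rfl, rfl⟩
      · obtain ⟨p, rfl, rfl⟩ := H.adj hcb h4 (by omega)
        obtain ⟨q, rfl, h6⟩ := H.adj hac.symm h5 (by omega)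
        simp only [ml_mul, ml_gn] at hlen hl
        have h7 := H.self h6 (by simp; omega)
        obtain ⟨r, rfl, rfl⟩ := H.far hab.symm h7 (by omega)
        refine Or.inr (Or.inl ⟨hab, gn c * (gn b * (gn a * (gn c * r))), ?_, ?_⟩)
        · rw [adj3 hcb.symm, ← adj3 hac, far3 hab.symm]
        · rw [far3 hab.symm (gn c * (gn b * r)), adj3 hcb.symm r, adj3 hac.symm (gn b * (gn c * r)),
            far3 hab (gn c * r)]
      · exfalso; unfold Adj at hac hcb hab; omega

/-- The key property, for a pair of words. -/
def KWord (A C : FreeMonoid (Fin n)) : Prop :=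
  (A = 1 ∧ C = 1) ∨ ∃ i j X Y, A = FreeMonoid.of i * X ∧ C = FreeMonoid.of j * Y ∧
    KRel i j (PresentedMonoid.mk MRel X) (PresentedMonoid.mk MRel Y)

theorem of_mul_ne_one (i : Fin n) (X : FreeMonoid (Fin n)) : FreeMonoid.of i * X ≠ 1 := by
  intro h
  have := congrArg FreeMonoid.length h
  simp at this

theorem of_mul_inj {i j : Fin n} {X Y : FreeMonoid (Fin n)}
    (h : FreeMonoid.of i * X = FreeMonoid.of j * Y) : i = j ∧ X = Y := by
  have := congrArg FreeMonoid.toList h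
  simp at this
  exact this

theorem kword_of_conGen {L : ℕ} (H : KUpTo n L) {A C : FreeMonoid (Fin n)}
    (h : ConGen.Rel MRel A C) (hl : ml (PresentedMonoid.mk MRel A) ≤ L + 1) : KWord A C := by
  induction h with
  | of x y h =>
    cases h with
    | @far i j h =>
      exact Or.inr ⟨i, j, _, _, rfl, rfl, Or.inr (Or.inl ⟨h, 1, by rw [mul_one]; rfl, by
        rw [mul_one]; rfl⟩)⟩
    | @adj i j h =>
      exact Or.inr ⟨i, j, _, _, mul_assoc _ _ _, mul_assoc _ _ _, Or.inr (Or.inr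
        ⟨h, 1, by rw [mul_one]; rfl, by rw [mul_one]; rfl⟩)⟩
  | refl x =>
    induction x using FreeMonoid.casesOn with
    | one => exact Or.inl ⟨rfl, rfl⟩
    | of_mul i x => exact Or.inr ⟨i, i, x, x, rfl, rfl, Or.inl ⟨rfl, rfl⟩⟩
  | @symm x y h ih =>
    have e : PresentedMonoid.mk MRel x = PresentedMonoid.mk MRel y :=
      PresentedMonoid.mk_eq_mk_iff.2 h
    rcases ih (by rwa [e]) with ⟨rfl, rfl⟩ | ⟨i, j, X, Y, rfl, rfl, hk⟩
    · exact Or.inl ⟨rfl, rfl⟩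
    · exact Or.inr ⟨j, i, Y, X, rfl, rfl, hk.symm⟩
  | @trans x y z hxy hyz ih1 ih2 =>
    have e : PresentedMonoid.mk MRel x = PresentedMonoid.mk MRel y :=
      PresentedMonoid.mk_eq_mk_iff.2 hxy
    have hl' := hl
    rw [e] at hl'
    rcases ih1 hl with ⟨rfl, rfl⟩ | ⟨i, j, X, Y, rfl, rfl, hk⟩ <;>
      rcases ih2 hl' with ⟨h1, rfl⟩ | ⟨i', j', X', Y', h1, rfl, hk'⟩
    · exact Or.inl ⟨rfl, rfl⟩
    · exact absurd h1.symm (of_mul_ne_one _ _)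
    · exact absurd h1 (of_mul_ne_one _ _)
    · obtain ⟨rfl, rfl⟩ := of_mul_inj h1
      refine Or.inr ⟨_, _, _, _, rfl, rfl, krel_trans H hk hk' ?_⟩
      rw [map_mul, ml_mul] at hl
      have : ml (PresentedMonoid.mk MRel (FreeMonoid.of i)) = 1 := rfl
      omega
  | @mul w x y z hwx hyz ih1 ih2 =>
    rw [map_mul, ml_mul] at hl
    have e : PresentedMonoid.mk MRel y = PresentedMonoid.mk MRel z :=
      PresentedMonoid.mk_eq_mk_iff.2 hyz
    rcases ih1 (by omega) with ⟨rfl, rfl⟩ | ⟨i, j, X, Y, rfl, rfl, hk⟩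
    · simpa using ih2 (by omega)
    · refine Or.inr ⟨i, j, X * y, Y * z, mul_assoc _ _ _, mul_assoc _ _ _, ?_⟩
      rw [map_mul, map_mul, e]
      rcases hk with ⟨h, h'⟩ | ⟨h, t, h', h''⟩ | ⟨h, t, h', h''⟩
      · exact Or.inl ⟨h, by rw [h']⟩
      · exact Or.inr (Or.inl ⟨h, t * PresentedMonoid.mk MRel z, by rw [h', mul_assoc], by
          rw [h'', mul_assoc]⟩)
      · exact Or.inr (Or.inr ⟨h, t * PresentedMonoid.mk MRel z, by rw [h']; simp only [mul_assoc],
          by rw [h'']; simp only [mul_assoc]⟩)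

/-- Garside's key property holds in every length: an equality `gn i * x = gn j * y` comes from the
defining relation between `gn i` and `gn j`. It gives left cancellation and the least common
multiples of pairs of generators. -/
theorem kUpTo (L : ℕ) : KUpTo n L := by
  induction L with
  | zero => intro i j x y _ h; omega
  | succ L H =>
    intro i j x y h hl
    induction x using PresentedMonoid.inductionOn with
    | h X =>
    induction y using PresentedMonoid.inductionOn with
    | h Y =>
    have h1 : PresentedMonoid.mk MRel (FreeMonoid.of i * X) =
        PresentedMonoid.mk MRel (FreeMonoid.of j * Y) := by rw [map_mul, map_mul]; exact h
    have h2 : ConGen.Rel MRel (FreeMonoid.of i * X) (FreeMonoid.of j * Y) :=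
      PresentedMonoid.mk_eq_mk_iff.1 h1
    have hl' : ml (PresentedMonoid.mk MRel (FreeMonoid.of i * X)) ≤ L + 1 := by
      rw [map_mul, ml_mul]
      have : ml (PresentedMonoid.mk MRel (FreeMonoid.of i)) = 1 := rfl
      omega
    rcases kword_of_conGen H h2 hl' with ⟨h, _⟩ | ⟨i', j', X', Y', h3, h4, hk⟩
    · exact absurd h (of_mul_ne_one _ _)
    · obtain ⟨rfl, rfl⟩ := of_mul_inj h3
      obtain ⟨rfl, rfl⟩ := of_mul_inj h4
      exact hk

theorem gn_cancel {i : Fin n} {x y : BM n} (h : gn i * x = gn i * y) : x = y :=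
  (kUpTo (ml x + 1)).self h (Nat.lt_succ_self _)

theorem bm_cancel {a x y : BM n} (h : a * x = a * y) : x = y := by
  induction a using bm_induction with
  | h1 => simpa using h
  | hm i a ih => exact ih (gn_cancel (by simpa only [mul_assoc] using h))

/-- Two generators have a least common right multiple. -/
theorem gn_lcm (i j : Fin n) : ∃ u v : BM n, gn i * u = gn j * v ∧
    ∀ x y, gn i * x = gn j * y → ∃ z, x = u * z ∧ y = v * z := by
  have hcases : i = j ∨ Far i j ∨ Adj i j := by unfold Far Adj; omega
  rcases hcases with rfl | h | h
  · exact ⟨1, 1, rfl, fun x y e => ⟨x, by simp, by simp [gn_cancel e]⟩⟩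
  · refine ⟨gn j, gn i, gn_far h, fun x y e => ?_⟩
    exact (kUpTo (ml x + 1)).far h e (Nat.lt_succ_self _)
  · refine ⟨gn j * gn i, gn i * gn j, by rw [← mul_assoc, gn_adj h, mul_assoc], fun x y e => ?_⟩
    simpa only [mul_assoc] using (kUpTo (ml x + 1)).adj h e (Nat.lt_succ_self _)

theorem dvd_cancel {a x y : BM n} (h : a * x ∣ a * y) : x ∣ y := by
  obtain ⟨z, hz⟩ := h
  exact ⟨z, bm_cancel (by rw [hz, mul_assoc])⟩

/-- Two positive braids with a common right multiple have a least one. -/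
theorem exists_lcm (a b m : BM n) (ha : a ∣ m) (hb : b ∣ m) :
    ∃ l, a ∣ l ∧ b ∣ l ∧ ∀ m', a ∣ m' → b ∣ m' → l ∣ m' := by
  induction hL : ml m using Nat.strong_induction_on generalizing a b m with
  | _ L ih =>
  subst hL
  rcases bm_cases a with rfl | ⟨i, a', rfl⟩
  · exact ⟨b, one_dvd _, dvd_rfl, fun _ _ h => h⟩
  rcases bm_cases b with rfl | ⟨j, b', rfl⟩
  · exact ⟨gn i * a', dvd_rfl, one_dvd _, fun _ h _ => h⟩
  obtain ⟨u, v, huv, hlcm⟩ := gn_lcm i j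
  -- the common multiple, and any other, is a multiple of `gn i * u`
  have hiu : ∀ m', gn i * a' ∣ m' → gn j * b' ∣ m' → gn i * u ∣ m' := by
    rintro m' ⟨t, ht⟩ ⟨t', ht'⟩
    obtain ⟨z, hz, _⟩ := hlcm (a' * t) (b' * t') (by rw [← mul_assoc, ← mul_assoc, ← ht, ← ht'])
    exact ⟨z, by rw [ht, mul_assoc, hz, mul_assoc]⟩
  have hm := hiu m ha hb
  obtain ⟨t, ht⟩ := ha
  obtain ⟨t', ht'⟩ := hb
  have e1 : m = gn i * (a' * t) := by rw [ht, mul_assoc]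
  have e2 : m = gn j * (b' * t') := by rw [ht', mul_assoc]
  have len1 := congrArg ml e1
  have len2 := congrArg ml e2
  rw [ml_mul, ml_gn] at len1 len2
  obtain ⟨l1, hl1, hul1, hmin1⟩ := ih _ (by omega) a' u (a' * t) (Dvd.intro _ rfl)
    (dvd_cancel (a := gn i) (by rw [← e1]; exact hm)) rfl
  obtain ⟨w, hw⟩ := hul1
  have e3 : gn i * l1 = gn j * (v * w) := by rw [hw, ← mul_assoc, huv, mul_assoc]
  have hl1m : ∀ m', gn i * a' ∣ m' → gn j * b' ∣ m' → gn j * (v * w) ∣ m' := by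
    intro m' h1 h2
    have h3 := hiu m' h1 h2
    obtain ⟨r, rfl⟩ := h1
    rw [mul_assoc] at h3 ⊢
    rw [← e3]
    exact mul_dvd_mul_left _ (hmin1 _ (Dvd.intro _ rfl) (dvd_cancel h3))
  obtain ⟨l3, hl3, hwl3, hmin3⟩ := ih _ (by omega) b' (v * w) (b' * t') (Dvd.intro _ rfl)
    (dvd_cancel (a := gn j) (by
      rw [← e2]; exact hl1m m ⟨t, ht⟩ ⟨t', ht'⟩)) rfl
  refine ⟨gn j * l3, ?_, mul_dvd_mul_left _ hl3, ?_⟩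
  · exact (mul_dvd_mul_left _ hl1).trans (e3 ▸ mul_dvd_mul_left _ hwl3)
  · intro m' h1 h2
    have h3 := hl1m m' h1 h2
    obtain ⟨r, rfl⟩ := h2
    rw [mul_assoc] at h3 ⊢
    exact mul_dvd_mul_left _ (hmin3 _ (Dvd.intro _ rfl) (dvd_cancel h3))

theorem ml_le_of_dvd {a b : BM n} (h : a ∣ b) : ml a ≤ ml b := by
  obtain ⟨c, rfl⟩ := h; simp

theorem eq_of_dvd_of_ml {a b : BM n} (h : a ∣ b) (hl : ml b ≤ ml a) : a = b := by
  obtain ⟨c, rfl⟩ := h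
  rw [ml_mul] at hl
  rw [eq_one_of_ml (x := c) (by omega), mul_one]

/-- Two positive braids have a greatest common left divisor. -/
theorem exists_gcd (a b : BM n) : ∃ d, d ∣ a ∧ d ∣ b ∧ ∀ t, t ∣ a → t ∣ b → t ∣ d := by
  classical
  -- a common divisor of maximal length absorbs every other one through the common multiple
  let Q : ℕ → Prop := fun k => ∃ d : BM n, d ∣ a ∧ d ∣ b ∧ ml d = k
  have hQ0 : Q 0 := ⟨1, one_dvd _, one_dvd _, ml_one⟩
  obtain ⟨d, hda, hdb, hd⟩ : Q (Nat.findGreatest Q (ml a)) :=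
    Nat.findGreatest_spec (P := Q) (Nat.zero_le _) hQ0
  refine ⟨d, hda, hdb, fun t hta htb => ?_⟩
  obtain ⟨l, hdl, htl, hmin⟩ := exists_lcm d t a hda hta
  have hla := hmin a hda hta
  have hlb := hmin b hdb htb
  have := Nat.le_findGreatest (P := Q) (ml_le_of_dvd hla) ⟨l, hla, hlb, rfl⟩
  rw [eq_of_dvd_of_ml hdl (by omega)]
  exact htl

end BraidOrbit

namespace BraidOrbit

variable {n : ℕ}

/-! ### A central common multiple of the generators -/

/-- The generators of the positive monoid, indexed by natural numbers; out of range it is `1`. -/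
def gN (n i : ℕ) : BM n := if h : i < n then gn ⟨i, h⟩ else 1

theorem gN_eq (i : Fin n) : gN n i = gn i := by simp [gN]

theorem gN_comm {i j : ℕ} (h : i + 1 < j) : gN n i * gN n j = gN n j * gN n i := by
  unfold gN
  split_ifs
  · exact gn_far (Or.inl h)
  all_goals simp

theorem gN_braid {i : ℕ} (h : i + 1 < n) :
    gN n i * gN n (i+1) * gN n i = gN n (i+1) * gN n i * gN n (i+1) := by
  unfold gN
  rw [dif_pos h, dif_pos (show i < n by omega)]
  exact gn_adj (Or.inl rfl)

/-- The product of `k` consecutive generators, starting with the one of index `a`. -/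
def gR (n a : ℕ) : ℕ → BM n
  | 0 => 1
  | k + 1 => gR n a k * gN n (a + k)

theorem gR_comm {k j : ℕ} (h : k + 1 ≤ j) : gR n 0 k * gN n j = gN n j * gR n 0 k := by
  induction k with
  | zero => simp [gR]
  | succ k ih =>
    rw [gR, mul_assoc, gN_comm (by omega), ← mul_assoc, ih (by omega), mul_assoc]

theorem gR_shift {i j : ℕ} (h : i + 2 ≤ j) (hj : j ≤ n) :
    gR n 0 j * gN n i = gN n (i+1) * gR n 0 j := by
  induction j, h using Nat.le_induction with
  | base =>
    rw [gR, gR, zero_add, zero_add, mul_assoc, mul_assoc, ← mul_assoc (gN n i),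
      gN_braid (by omega), ← mul_assoc, ← mul_assoc, gR_comm (by omega)]
    simp only [mul_assoc]
  | succ j hij ih =>
    rw [gR, zero_add, mul_assoc, ← gN_comm (by omega), ← mul_assoc, ih (by omega), mul_assoc]

theorem gR_gR {m k : ℕ} (h : k + 1 ≤ m) (hm : m ≤ n) :
    gR n 0 m * gR n 0 k = gR n 1 k * gR n 0 m := by
  induction k with
  | zero => simp [gR]
  | succ k ih =>
    rw [gR, ← mul_assoc, ih (by omega), gR, zero_add, mul_assoc, gR_shift (by omega) hm,
      ← mul_assoc, add_comm 1 k]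

theorem gN_mul_gR (k : ℕ) : gN n 0 * gR n 1 k = gR n 0 (k+1) := by
  induction k with
  | zero => simp [gR]
  | succ k ih => rw [gR, ← mul_assoc, ih, add_comm 1 k, gR.eq_2 n 0 (k+1), zero_add]

theorem gR_sq {k : ℕ} (h : k + 1 ≤ n) :
    gN n 0 * (gR n 0 (k+1) * gR n 0 (k+1)) = gR n 0 (k+1) * gR n 0 (k+1) * gN n k := by
  calc gN n 0 * (gR n 0 (k+1) * gR n 0 (k+1))
      = gN n 0 * (gR n 0 (k+1) * gR n 0 k) * gN n k := by
        simp only [mul_assoc]; simp only [gR, zero_add]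
    _ = gN n 0 * gR n 1 k * gR n 0 (k+1) * gN n k := by
        rw [gR_gR le_rfl h]; simp only [mul_assoc]
    _ = _ := by rw [gN_mul_gR]

theorem gR_pow_shift {i j : ℕ} (h : i + j + 1 ≤ n) :
    gR n 0 n ^ j * gN n i = gN n (i+j) * gR n 0 n ^ j := by
  induction j with
  | zero => simp
  | succ j ih =>
    rw [pow_succ', mul_assoc, ih (by omega), ← mul_assoc, gR_shift (by omega) le_rfl, mul_assoc,
      add_assoc]

/-- The positive full twist. -/
def Om (n : ℕ) : BM n := gR n 0 n ^ (n+1)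

theorem Om_gn (i : Fin n) : Om n * gn i = gn i * Om n := by
  obtain ⟨k, rfl⟩ : ∃ k, n = k + 1 := ⟨n - 1, by have := i.2; omega⟩
  have hi := i.2
  have e : Om (k+1) = gR (k+1) 0 (k+1) ^ (i : ℕ) * (gR (k+1) 0 (k+1) * gR (k+1) 0 (k+1)) *
      gR (k+1) 0 (k+1) ^ (k - i) := by
    rw [Om, ← pow_two, ← pow_add, ← pow_add]
    congr 1; omega
  have h1 := gR_pow_shift (n := k+1) (i := i) (j := k - i) (by omega)
  have h2 := gR_pow_shift (n := k+1) (i := 0) (j := i) (by omega)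
  rw [show (i : ℕ) + (k - i) = k by omega] at h1
  rw [zero_add] at h2
  rw [← gN_eq, e, mul_assoc, h1, ← mul_assoc, mul_assoc _ _ (gN (k+1) k), ← gR_sq le_rfl,
    ← mul_assoc, h2]
  simp only [mul_assoc]

theorem Om_comm (x : BM n) : Om n * x = x * Om n := by
  induction x using bm_induction with
  | h1 => simp
  | hm i x ih => rw [← mul_assoc, Om_gn, mul_assoc, ih, mul_assoc]

theorem gn_dvd_Om (i : Fin n) : gn i ∣ Om n := by
  obtain ⟨k, rfl⟩ : ∃ k, n = k + 1 := ⟨n - 1, by have := i.2; omega⟩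
  have hi := i.2
  have h2 := gR_pow_shift (n := k+1) (i := 0) (j := i) (by omega)
  rw [zero_add] at h2
  have e : Om (k+1) = gR (k+1) 0 (k+1) ^ (i : ℕ) * gR (k+1) 0 (k+1) *
      gR (k+1) 0 (k+1) ^ (k + 1 - i) := by
    rw [Om, ← pow_succ, ← pow_add]
    congr 1; omega
  have h3 : gR (k+1) 0 (k+1) ^ (i : ℕ) * gR (k+1) 0 (k+1) =
      gn i * (gR (k+1) 0 (k+1) ^ (i : ℕ) * gR (k+1) 1 k) := by
    rw [← mul_assoc, ← gN_eq, ← h2, mul_assoc, gN_mul_gR]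
  rw [e, h3, mul_assoc]
  exact Dvd.intro _ rfl

theorem exists_compl (i : Fin n) : ∃ h : BM n, gn i * h = Om n ∧ h * gn i = Om n := by
  obtain ⟨h, hh⟩ := gn_dvd_Om i
  exact ⟨h, hh.symm, bm_cancel (a := gn i) (by rw [← mul_assoc, ← hh, Om_comm])⟩

/-! ### The positive monoid embeds in the braid group -/

theorem Om_pow_comm (k : ℕ) (x : BM n) : Om n ^ k * x = x * Om n ^ k :=
  (show Commute (Om n) x from Om_comm x).pow_left k

theorem bm_mul_Om_cancel {x y : BM n} {k : ℕ} (h : x * Om n ^ k = y * Om n ^ k) : x = y :=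
  bm_cancel (a := Om n ^ k) (by rw [Om_pow_comm, Om_pow_comm, h])

/-- Inverting the central full twist. -/
noncomputable instance oreSetOm : OreLocalization.OreSet (Submonoid.powers (Om n)) where
  ore_right_cancel := by
    rintro r1 r2 ⟨_, k, rfl⟩ h
    exact ⟨1, by rw [bm_mul_Om_cancel h]⟩
  oreNum r _ := r
  oreDenom _ t := t
  ore_eq := by
    rintro r ⟨_, k, rfl⟩
    exact Om_pow_comm k r

/-- The inclusion of the positive monoid in its localization at the full twist. -/
noncomputable def toLoc : BM n →* OreLocalization (Submonoid.powers (Om n)) (BM n) :=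
  OreLocalization.numeratorHom

theorem toLoc_injective : Function.Injective (toLoc (n := n)) := by
  intro x y h
  have h' : (x /ₒ (1 : Submonoid.powers (Om n))) = y /ₒ 1 := h
  rw [OreLocalization.oreDiv_eq_iff] at h'
  obtain ⟨u, v, h1, h2⟩ := h'
  simp only [OneMemClass.coe_one, mul_one] at h2
  rw [← h2] at h1
  exact (bm_cancel h1).symm

theorem isUnit_toLoc_gn (i : Fin n) : IsUnit (toLoc (gn i)) := by
  obtain ⟨h, h1, h2⟩ := exists_compl i
  have hO : IsUnit (toLoc (Om n)) :=
    OreLocalization.numerator_isUnit ⟨Om n, Submonoid.mem_powers _⟩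
  rw [isUnit_iff_exists_and_exists]
  obtain ⟨u, hu⟩ := hO
  refine ⟨⟨toLoc h * ↑u⁻¹, ?_⟩, ⟨↑u⁻¹ * toLoc h, ?_⟩⟩
  · rw [← mul_assoc, ← map_mul, h1, ← hu, Units.mul_inv]
  · rw [mul_assoc, ← map_mul, h2, ← hu, Units.inv_mul]

/-- The homomorphism from the positive monoid to the braid group. -/
def emb (n : ℕ) : BM n →* Br n :=
  PresentedMonoid.lift s (by
    rintro _ _ (⟨h | h⟩ | ⟨h | h⟩)
    · simp [s_comm h]
    · simp [s_comm h]
    · simp [s_braid h]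
    · simp [s_braid h])

@[simp] theorem emb_gn (i : Fin n) : emb n (gn i) = s i := PresentedMonoid.lift_of _ _

/-- The central element `Om` is a multiple of every generator, so inverting its powers turns the
positive monoid, which is cancellative, into a group that receives the braid group. -/
theorem emb_injective : Function.Injective (emb n) := by
  let F : Br n →* (OreLocalization (Submonoid.powers (Om n)) (BM n))ˣ :=
    brLift (fun i => (isUnit_toLoc_gn i).unit)
      (fun i j h => by
        ext
        simp only [Units.val_mul, IsUnit.unit_spec, ← map_mul]
        rw [gn_far (Or.inl h)])
      (fun i j h => by
        ext
        simp only [Units.val_mul, IsUnit.unit_spec, ← map_mul]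
        rw [gn_adj (Or.inl h)])
  have hF : ∀ x, ((F (emb n x) : (OreLocalization (Submonoid.powers (Om n)) (BM n))ˣ) :
      OreLocalization (Submonoid.powers (Om n)) (BM n)) = toLoc x := by
    intro x
    induction x using bm_induction with
    | h1 => simp
    | hm i x ih =>
      rw [map_mul, map_mul, Units.val_mul, ih, map_mul, emb_gn, brLift_s, IsUnit.unit_spec]
  intro x y h
  exact toLoc_injective (by rw [← hF, ← hF, h])

end BraidOrbit

namespace BraidOrbit

variable {n : ℕ}

/-! ### Bounding the length of conjugating braids -/

/-- A conjugation by a positive braid begins with a conjugation by a divisor of the full twist. -/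
theorem exists_step {p c q : BM n} (h : p * c = c * q) : ∃ d c' p', c = d * c' ∧ d ∣ Om n ∧
    p * d = d * p' ∧ p' * c' = c' * q ∧ (c ≠ 1 → d ≠ 1) := by
  obtain ⟨d, ⟨c', hc'⟩, hdO, hmax⟩ := exists_gcd c (Om n)
  have hdpc : d ∣ p * c := by rw [h, hc', mul_assoc]; exact Dvd.intro _ rfl
  have hdpO : d ∣ p * Om n := by
    rw [← Om_comm]; exact hdO.trans (Dvd.intro _ rfl)
  obtain ⟨l, hdl, ⟨t, rfl⟩, hmin⟩ := exists_lcm d p (p * c) hdpc (Dvd.intro _ rfl)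
  have htd : t ∣ d := hmax t (dvd_cancel (hmin _ hdpc (Dvd.intro _ rfl)))
    (dvd_cancel (hmin _ hdpO (Dvd.intro _ rfl)))
  obtain ⟨p', hp'⟩ := hdl.trans (mul_dvd_mul_left p htd)
  refine ⟨d, c', p', hc', hdO, hp', bm_cancel (a := d) ?_, ?_⟩
  · rw [← mul_assoc, ← hp', mul_assoc, ← hc', h, hc', mul_assoc]
  · intro hc hd
    rcases bm_cases c with rfl | ⟨i, y, rfl⟩
    · exact hc rfl
    · obtain ⟨z, hz⟩ := hmax (gn i) (Dvd.intro _ rfl) (gn_dvd_Om i)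
      have := congrArg ml hz
      rw [hd] at this
      simp only [ml_one, ml_mul, ml_gn] at this
      omega

theorem exists_posWord (x : BM n) : ∃ w : List (Fin n), w.length = ml x ∧ (w.map gn).prod = x := by
  induction x using bm_induction with
  | h1 => exact ⟨[], by simp, rfl⟩
  | hm i x ih =>
    obtain ⟨w, h1, h2⟩ := ih
    exact ⟨i :: w, by simp [h1, add_comm], by simp [h2]⟩

theorem ml_prod (w : List (Fin n)) : ml (w.map gn).prod = w.length := by
  induction w with
  | nil => simp
  | cons i w ih => simp [ih, add_comm]

/-- The positive braids of a given length. -/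
abbrev Lev (n L : ℕ) := {x : BM n // ml x = L}

/-- The positive braid spelled by a tuple of generators. -/
def ofTuple {L : ℕ} (f : Fin L → Fin n) : Lev n L :=
  ⟨((List.ofFn f).map gn).prod, by rw [ml_prod, List.length_ofFn]⟩

theorem ofTuple_surjective {L : ℕ} : Function.Surjective (ofTuple (n := n) (L := L)) := by
  rintro ⟨x, rfl⟩
  obtain ⟨w, h1, h2⟩ := exists_posWord x
  refine ⟨fun i => w.get (i.cast h1.symm), Subtype.ext ?_⟩
  simp only [ofTuple]
  conv_rhs => rw [← h2]
  congr 2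
  apply List.ext_get
  · simp [h1]
  · intro k _ _; simp

noncomputable instance levFintype (L : ℕ) : Fintype (Lev n L) :=
  @Fintype.ofSurjective _ _ (Classical.decEq _) _ _ ofTuple_surjective

theorem card_lev (L : ℕ) : Fintype.card (Lev n L) ≤ n ^ L := by
  have := Fintype.card_le_of_surjective _ (ofTuple_surjective (n := n) (L := L))
  simpa using this

/-- Positive braids of a given length, joined when a divisor of the full twist conjugates one to
the other. -/
def stepGraph (n L : ℕ) : SimpleGraph (Lev n L) :=
  SimpleGraph.fromRel (fun x y => ∃ d, d ∣ Om n ∧ x.1 * d = d * y.1)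

theorem ml_eq_of_conj {p c q : BM n} (h : p * c = c * q) : ml p = ml q := by
  have := congrArg ml h
  simp only [ml_mul] at this
  omega

theorem reachable_of_conj {L : ℕ} {p q : Lev n L} {c : BM n} (h : p.1 * c = c * q.1) :
    (stepGraph n L).Reachable p q := by
  induction hl : ml c using Nat.strong_induction_on generalizing c p with
  | _ k ih =>
  by_cases hc : c = 1
  · subst hc
    rw [mul_one, one_mul] at h
    rw [Subtype.ext h]
  obtain ⟨d, c', p', h1, h2, h3, h4, h5⟩ := exists_step h
  have hd : ml d ≠ 0 := fun h0 => h5 hc (eq_one_of_ml h0)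
  have hlen : ml c = ml d + ml c' := by rw [h1, ml_mul]
  have hr := ih (ml c') (by omega) (p := ⟨p', (ml_eq_of_conj h3).symm.trans p.2⟩) h4 rfl
  refine SimpleGraph.Reachable.trans ?_ hr
  by_cases he : p = ⟨p', (ml_eq_of_conj h3).symm.trans p.2⟩
  · rw [← he]
  · exact SimpleGraph.Adj.reachable ((SimpleGraph.fromRel_adj _ _ _).2 ⟨he, Or.inl ⟨d, h2, h3⟩⟩)

/-- Evaluation of signed words in the braid group. -/
def ev (w : List (Fin n × Bool)) : Br n :=
  (w.map (fun p => if p.2 then s p.1 else (s p.1)⁻¹)).prod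

@[simp] theorem ev_nil : ev ([] : List (Fin n × Bool)) = 1 := rfl
@[simp] theorem ev_cons (p : Fin n × Bool) (w) :
    ev (p :: w) = (if p.2 then s p.1 else (s p.1)⁻¹) * ev w := by simp [ev]
@[simp] theorem ev_append (w w' : List (Fin n × Bool)) : ev (w ++ w') = ev w * ev w' := by
  simp [ev]

theorem exists_word_emb (x : BM n) : ∃ w, w.length = ml x ∧ ev w = emb n x := by
  induction x using bm_induction with
  | h1 => exact ⟨[], by simp, by simp⟩
  | hm i x ih =>
    obtain ⟨w, h1, h2⟩ := ih
    exact ⟨(i, true) :: w, by simp [h1, add_comm], by simp [h2]⟩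

theorem exists_word_inv (w : List (Fin n × Bool)) :
    ∃ w', w'.length = w.length ∧ ev w' = (ev w)⁻¹ := by
  induction w with
  | nil => exact ⟨[], rfl, by simp⟩
  | cons p w ih =>
    obtain ⟨w', h1, h2⟩ := ih
    refine ⟨w' ++ [(p.1, !p.2)], by simp [h1], ?_⟩
    obtain ⟨i, b⟩ := p
    cases b <;> simp [h2]

theorem exists_word (g : Br n) : ∃ w, ev w = g := by
  induction g using br_induction with
  | h1 => exact ⟨[], rfl⟩
  | hm g i ih => obtain ⟨w, rfl⟩ := ih; exact ⟨w ++ [(i, true)], by simp⟩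
  | hi g i ih => obtain ⟨w, rfl⟩ := ih; exact ⟨w ++ [(i, false)], by simp⟩

theorem word_of_walk {L : ℕ} {p q : Lev n L} (W : (stepGraph n L).Walk p q) :
    ∃ w, w.length ≤ W.length * ml (Om n) ∧ emb n p.1 * ev w = ev w * emb n q.1 := by
  induction W with
  | nil => exact ⟨[], by simp, by simp⟩
  | cons h W ih =>
    obtain ⟨w, hw1, hw2⟩ := ih
    rename_i p p' q
    have : ∃ w', w'.length ≤ ml (Om n) ∧ emb n p.1 * ev w' = ev w' * emb n p'.1 := by
      rcases ((SimpleGraph.fromRel_adj _ _ _).1 h).2 with ⟨d, hd, he⟩ | ⟨d, hd, he⟩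
      · obtain ⟨w', h1, h2⟩ := exists_word_emb d
        exact ⟨w', h1 ▸ ml_le_of_dvd hd, by rw [h2, ← map_mul, ← map_mul, he]⟩
      · obtain ⟨w', h1, h2⟩ := exists_word_emb d
        obtain ⟨w'', h3, h4⟩ := exists_word_inv w'
        refine ⟨w'', by rw [h3, h1]; exact ml_le_of_dvd hd, ?_⟩
        have := congrArg (emb n) he
        rw [map_mul, map_mul] at this
        rw [h4, h2, eq_inv_mul_iff_mul_eq, ← mul_assoc, mul_inv_eq_iff_eq_mul, this]
    obtain ⟨w', h1, h2⟩ := this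
    refine ⟨w' ++ w, ?_, ?_⟩
    · rw [List.length_append, SimpleGraph.Walk.length_cons]; nlinarith
    · rw [ev_append, ← mul_assoc, h2, mul_assoc, hw2, mul_assoc]

theorem pos_conj_bound {p q c : BM n} (h : p * c = c * q) :
    ∃ w, w.length ≤ n ^ ml p * ml (Om n) ∧ emb n p * ev w = ev w * emb n q := by
  classical
  obtain ⟨W⟩ := reachable_of_conj (p := ⟨p, rfl⟩) (q := ⟨q, (ml_eq_of_conj h).symm⟩) h
  obtain ⟨w, h1, h2⟩ := word_of_walk W.toPath.1
  refine ⟨w, h1.trans (Nat.mul_le_mul_right _ ?_), h2⟩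
  exact (W.toPath.2.length_lt.le).trans (card_lev _)

theorem emb_Om_comm (k : ℕ) (g : Br n) : emb n (Om n) ^ k * g = g * emb n (Om n) ^ k := by
  refine Commute.pow_left ?_ k
  induction g using br_induction with
  | h1 => exact Commute.one_right _
  | hm g i ih =>
    refine ih.mul_right ?_
    rw [← emb_gn]
    exact (show Commute (Om n) (gn i) from Om_comm _).map (emb n)
  | hi g i ih =>
    refine ih.mul_right (Commute.inv_right ?_)
    rw [← emb_gn]
    exact (show Commute (Om n) (gn i) from Om_comm _).map (emb n)

/-- A power of the full twist makes a signed word positive. -/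
theorem pos_of_word (w : List (Fin n × Bool)) : ∃ x : BM n,
    emb n x = emb n (Om n) ^ w.length * ev w ∧ ml x ≤ w.length * (ml (Om n) + 1) := by
  induction w with
  | nil => exact ⟨1, by simp, by simp⟩
  | cons p w ih =>
    obtain ⟨x, h1, h2⟩ := ih
    obtain ⟨i, b⟩ := p
    cases b
    · obtain ⟨h, hh1, hh2⟩ := exists_compl i
      have hl := congrArg ml hh2
      rw [ml_mul, ml_gn] at hl
      refine ⟨h * x, ?_, by rw [ml_mul, List.length_cons]; nlinarith⟩
      have e : emb n h = emb n (Om n) * (s i)⁻¹ := by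
        rw [← hh2, map_mul, emb_gn, mul_inv_cancel_right]
      rw [map_mul, h1, e, List.length_cons, pow_succ', ev_cons, mul_assoc, mul_assoc,
        ← mul_assoc (s i)⁻¹, ← emb_Om_comm]
      simp [mul_assoc]
    · refine ⟨Om n * (gn i * x), ?_, by
        rw [ml_mul, ml_mul, ml_gn, List.length_cons]; nlinarith⟩
      rw [map_mul, map_mul, h1, emb_gn, List.length_cons, pow_succ', ev_cons,
        ← mul_assoc (s i), ← emb_Om_comm]
      simp [mul_assoc]

/-- Conjugate braids are conjugate by a braid of bounded length. -/
theorem conj_bound (w1 w2 : List (Fin n × Bool)) (h : IsConj (ev w2) (ev w1)) :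
    ∃ w, w.length ≤ n ^ ((w1.length + w2.length) * (ml (Om n) + 1)) * ml (Om n) + 1 ∧
      ev w1 * ev w = ev w * ev w2 := by
  rcases Nat.eq_zero_or_pos n with rfl | hn
  · exact ⟨[], by simp, by
      rcases w1 with _ | ⟨⟨i, -⟩, -⟩
      · rcases w2 with _ | ⟨⟨i, -⟩, -⟩
        · rfl
        · exact i.elim0
      · exact i.elim0⟩
  obtain ⟨g, hg⟩ := isConj_iff.1 h
  obtain ⟨wg, rfl⟩ := exists_word g
  obtain ⟨c, hc, -⟩ := pos_of_word wg
  obtain ⟨x1, hx1, hl1⟩ := pos_of_word w1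
  obtain ⟨x2, hx2, -⟩ := pos_of_word w2
  have e1 : emb n (Om n ^ w2.length * x1) = emb n (Om n) ^ (w1.length + w2.length) * ev w1 := by
    rw [map_mul, hx1, map_pow, ← mul_assoc, ← pow_add, add_comm]
  have e2 : emb n (Om n ^ w1.length * x2) = emb n (Om n) ^ (w1.length + w2.length) * ev w2 := by
    rw [map_mul, hx2, map_pow, ← mul_assoc, ← pow_add]
  have hconj : (Om n ^ w2.length * x1) * c = c * (Om n ^ w1.length * x2) := by
    apply emb_injective
    have h1 : ev w1 * ev wg = ev wg * ev w2 := by rw [← hg, inv_mul_cancel_right]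
    rw [map_mul _ _ c, map_mul _ c, e1, e2, hc, emb_Om_comm wg.length, ← mul_assoc,
      mul_assoc _ (ev w1), h1, mul_assoc, ← emb_Om_comm wg.length, emb_Om_comm (w1.length + _),
      mul_assoc (ev wg), emb_Om_comm (w1.length + _) (ev w2), ← mul_assoc (ev wg),
      ← emb_Om_comm wg.length (ev wg)]
    simp only [mul_assoc]
  obtain ⟨w, hw, he⟩ := pos_conj_bound hconj
  refine ⟨w, hw.trans ?_, ?_⟩
  · refine le_trans (Nat.mul_le_mul_right _ (Nat.pow_le_pow_right hn ?_)) (Nat.le_succ _)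
    have : ml (Om n ^ w2.length) = w2.length * ml (Om n) := by simp [ml]
    rw [ml_mul, this]
    nlinarith
  · rw [e1, e2, mul_assoc, ← mul_assoc (ev w), ← emb_Om_comm, mul_assoc] at he
    exact mul_left_cancel he

end BraidOrbit

namespace BraidOrbit

variable {n : ℕ}

/-! ### The word problem, through the Artin representation -/

section Reduce
variable {α : Type*} [DecidableEq α]

/-- One step of free reduction: prepend a letter, cancelling it if possible. -/
def redStep (x : α × Bool) (L : List (α × Bool)) : List (α × Bool) :=
  List.casesOn L [x] fun hd tl => if x.1 = hd.1 ∧ x.2 = not hd.2 then tl else x :: hd :: tl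

theorem reduce_eq_foldr (L : List (α × Bool)) : FreeGroup.reduce L = L.foldr redStep [] := by
  induction L with
  | nil => rfl
  | cons x L ih => rw [FreeGroup.reduce.cons, ih]; rfl

end Reduce

theorem primrec_redStep {α : Type*} [DecidableEq α] [Primcodable α] :
    Primrec₂ (redStep (α := α)) := by
  refine Primrec.list_casesOn (α := (α × Bool) × List (α × Bool)) (f := fun q => q.2)
    (g := fun q => [q.1])
    (h := fun q r => if q.1.1 = r.1.1 ∧ q.1.2 = not r.1.2 then r.2 else q.1 :: r.1 :: r.2)
    Primrec.snd (Primrec.list_cons.comp Primrec.fst (Primrec.const [])) ?_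
  refine Primrec.ite ?_ ?_ ?_
  · refine PrimrecPred.and ?_ ?_
    · exact Primrec.eq.comp (Primrec.fst.comp (Primrec.fst.comp Primrec.fst))
        (Primrec.fst.comp (Primrec.fst.comp Primrec.snd))
    · exact Primrec.eq.comp (Primrec.snd.comp (Primrec.fst.comp Primrec.fst))
        (Primrec.not.comp (Primrec.snd.comp (Primrec.fst.comp Primrec.snd)))
  · exact Primrec.snd.comp Primrec.snd
  · exact Primrec.list_cons.comp (Primrec.fst.comp Primrec.fst)
      (Primrec.list_cons.comp (Primrec.fst.comp Primrec.snd) (Primrec.snd.comp Primrec.snd))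

theorem primrec_reduce {α : Type*} [DecidableEq α] [Primcodable α] :
    Primrec (FreeGroup.reduce : List (α × Bool) → List (α × Bool)) := by
  have : Primrec (fun L : List (α × Bool) => L.foldr redStep []) :=
    Primrec.list_foldr Primrec.id (Primrec.const [])
      (h := fun _ p => redStep p.1 p.2)
      (primrec_redStep.comp (Primrec.fst.comp Primrec.snd) (Primrec.snd.comp Primrec.snd))
  exact this.of_eq fun L => (reduce_eq_foldr L).symm

/-- The reduced word of the image of a free letter under the Artin action of a braid letter. -/
def artTable (p : Fin n × Bool) (x : Fin (n+1) × Bool) : List (Fin (n+1) × Bool) :=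
  (art n (if p.2 then s p.1 else (s p.1)⁻¹) (FreeGroup.mk [x])).toWord

theorem mk_flatMap_artTable (p : Fin n × Bool) (L : List (Fin (n+1) × Bool)) :
    FreeGroup.mk (L.flatMap (artTable p)) =
      art n (if p.2 then s p.1 else (s p.1)⁻¹) (FreeGroup.mk L) := by
  induction L with
  | nil => exact (map_one _).symm
  | cons x L ih =>
    rw [List.flatMap_cons, ← FreeGroup.mul_mk, ih, artTable, FreeGroup.mk_toWord, ← map_mul,
      FreeGroup.mul_mk]
    rfl

/-- A word for the image of a free generator under the Artin action of a signed braid word. -/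
def artWord (w : List (Fin n × Bool)) (j : Fin (n+1)) : List (Fin (n+1) × Bool) :=
  w.foldr (fun p L => L.flatMap (artTable p)) [(j, true)]

theorem mk_artWord (w : List (Fin n × Bool)) (j : Fin (n+1)) :
    FreeGroup.mk (artWord w j) = art n (ev w) (FreeGroup.of j) := by
  induction w with
  | nil => simp [artWord]; rfl
  | cons p w ih =>
    rw [artWord, List.foldr_cons, mk_flatMap_artTable, ev_cons, map_mul, MulAut.mul_apply, ← ih]
    rfl

/-- The normal form of a braid word: the reduced images of all free generators. -/
def braidNF (w : List (Fin n × Bool)) : List (List (Fin (n+1) × Bool)) :=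
  (List.finRange (n+1)).map (fun j => FreeGroup.reduce (artWord w j))

/-- By faithfulness of the Artin representation, normal forms decide the word problem. -/
theorem braidNF_eq_iff (w w' : List (Fin n × Bool)) : braidNF w = braidNF w' ↔ ev w = ev w' := by
  have hj : ∀ (v : List (Fin n × Bool)) j,
      FreeGroup.reduce (artWord v j) = (art n (ev v) (FreeGroup.of j)).toWord := by
    intro v j
    rw [← mk_artWord, FreeGroup.toWord_mk]
  constructor
  · intro h
    have h1 : ∀ j, art n (ev w) (FreeGroup.of j) = art n (ev w') (FreeGroup.of j) := by
      intro j
      have := (List.map_inj_left.1 h) j (List.mem_finRange j)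
      rw [hj, hj] at this
      exact FreeGroup.toWord_injective this
    have h2 : art n (ev w) = art n (ev w') := mulAut_ext h1
    have h3 := art_faithful (ev w * (ev w')⁻¹) (by rw [map_mul, map_inv, h2, mul_inv_cancel])
    exact mul_inv_eq_one.1 h3
  · intro h
    unfold braidNF
    refine List.map_congr_left fun j _ => ?_
    rw [hj, hj, h]

theorem primrec_artWord : Primrec₂ (artWord (n := n)) := by
  have ht : Primrec (fun q : (Fin n × Bool) × (Fin (n+1) × Bool) => artTable q.1 q.2) :=
    Primrec.dom_finite _
  unfold artWord
  refine Primrec.list_foldr Primrec.fst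
    (Primrec.list_cons.comp (Primrec.pair Primrec.snd (Primrec.const true)) (Primrec.const []))
    (h := fun _ q => q.2.flatMap (artTable q.1)) ?_
  refine Primrec.list_flatMap (Primrec.snd.comp Primrec.snd) ?_
  exact ht.comp (Primrec.pair (Primrec.fst.comp (Primrec.snd.comp Primrec.fst)) Primrec.snd)

theorem primrec_braidNF : Primrec (braidNF (n := n)) :=
  Primrec.list_map (Primrec.const _) (primrec_reduce.comp primrec_artWord)

/-! ### The conjugacy problem -/

/-- All signed words of length at most `k`. -/
noncomputable def wordsLE (n : ℕ) (k : ℕ) : List (List (Fin n × Bool)) :=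
  Nat.rec [[]] (fun _ L => [] :: L.flatMap (fun w =>
    (Finset.univ : Finset (Fin n × Bool)).toList.map (fun p => p :: w))) k

theorem mem_wordsLE {k : ℕ} {w : List (Fin n × Bool)} (h : w.length ≤ k) : w ∈ wordsLE n k := by
  induction k generalizing w with
  | zero => rw [List.length_eq_zero_iff.1 (Nat.le_zero.1 h)]; exact List.mem_singleton.2 rfl
  | succ k ih =>
    rcases w with _ | ⟨p, w⟩
    · exact List.mem_cons_self
    · refine List.mem_cons_of_mem _ (List.mem_flatMap.2 ⟨w, ih (by simpa using h), ?_⟩)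
      exact List.mem_map.2 ⟨p, by simp, rfl⟩

theorem primrec_wordsLE : Primrec (wordsLE n) := by
  refine Primrec.nat_rec₁ _ ?_
  refine Primrec.list_cons.comp (Primrec.const _) ?_
  refine Primrec.list_flatMap Primrec.snd ?_
  refine Primrec.list_map (Primrec.const _) ?_
  exact Primrec.list_cons.comp Primrec.snd (Primrec.snd.comp Primrec.fst)

theorem primrec_pow (n : ℕ) : Primrec (fun k : ℕ => n ^ k) := by
  have : Primrec (fun k : ℕ => (Nat.rec 1 (fun _ m => m * n) k : ℕ)) :=
    Primrec.nat_rec₁ _ (Primrec.nat_mul.comp Primrec.snd (Primrec.const n))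
  refine this.of_eq fun k => ?_
  induction k with
  | zero => rfl
  | succ k ih => rw [pow_succ, ← ih]

/-- Conjugacy is a search among the words up to an explicit length, each candidate being tested by
normal forms. -/
theorem isConj_iff_bounded (w1 w2 : List (Fin n × Bool)) : IsConj (ev w2) (ev w1) ↔
    ∃ w ∈ wordsLE n (n ^ ((w1.length + w2.length) * (ml (Om n) + 1)) * ml (Om n) + 1),
      braidNF (w1 ++ w) = braidNF (w ++ w2) := by
  constructor
  · intro h
    obtain ⟨w, hw, he⟩ := conj_bound w1 w2 h
    exact ⟨w, mem_wordsLE hw, (braidNF_eq_iff _ _).2 (by rw [ev_append, ev_append, he])⟩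
  · rintro ⟨w, -, h⟩
    rw [braidNF_eq_iff, ev_append, ev_append] at h
    exact isConj_iff.2 ⟨ev w, by rw [← h, mul_inv_cancel_right]⟩

theorem primrecPred_isConj :
    PrimrecPred (fun q : List (Fin n × Bool) × List (Fin n × Bool) => IsConj (ev q.2) (ev q.1)) := by
  have hR : PrimrecRel (fun (w : List (Fin n × Bool))
      (q : List (Fin n × Bool) × List (Fin n × Bool)) =>
      braidNF (q.1 ++ w) = braidNF (w ++ q.2)) := by
    refine Primrec.eq.comp (primrec_braidNF.comp (Primrec.list_append.comp
      (Primrec.fst.comp Primrec.snd) Primrec.fst)) (primrec_braidNF.comp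
      (Primrec.list_append.comp Primrec.fst (Primrec.snd.comp Primrec.snd)))
  have hb : Primrec (fun q : List (Fin n × Bool) × List (Fin n × Bool) =>
      wordsLE n (n ^ ((q.1.length + q.2.length) * (ml (Om n) + 1)) * ml (Om n) + 1)) := by
    refine primrec_wordsLE.comp (Primrec.succ.comp (Primrec.nat_mul.comp ((primrec_pow n).comp
      (Primrec.nat_mul.comp (Primrec.nat_add.comp (Primrec.list_length.comp Primrec.fst)
        (Primrec.list_length.comp Primrec.snd)) (Primrec.const _))) (Primrec.const _)))
  exact (hR.exists_mem_list.comp hb Primrec.id).of_eq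
    fun q => (isConj_iff_bounded q.1 q.2).symm

/-! ### Orbits of automorphisms -/

/-- Substituting chosen words for the images of the generators computes an automorphism. -/
theorem exists_subst (ψ : MulAut (Br n)) : ∃ F : List (Fin n × Bool) → List (Fin n × Bool),
    Primrec F ∧ ∀ w, ev (F w) = ψ (ev w) := by
  choose T hT using fun p : Fin n × Bool => exists_word (ψ (if p.2 then s p.1 else (s p.1)⁻¹))
  refine ⟨fun w => w.flatMap T, Primrec.list_flatMap Primrec.id
    ((Primrec.dom_finite T).comp Primrec.snd), fun w => ?_⟩
  induction w with
  | nil => exact (map_one _).symm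
  | cons p w ih => simp only [List.flatMap_cons] at ih ⊢; rw [ev_append, ih, hT, ev_cons, map_mul]

theorem primrecPred_exists_aut (l : List (MulAut (Br n))) :
    PrimrecPred (fun q : List (Fin n × Bool) × List (Fin n × Bool) =>
      ∃ ψ ∈ l, IsConj (ev q.2) (ψ (ev q.1))) := by
  induction l with
  | nil =>
    exact (Primrec.eq.comp (Primrec.const 0) (Primrec.const 1)).of_eq fun q => by simp
  | cons ψ l ih =>
    obtain ⟨F, hF, hF'⟩ := exists_subst ψ
    have h1 := primrecPred_isConj.comp (Primrec.pair (hF.comp Primrec.fst) Primrec.snd)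
    refine (h1.or ih).of_eq fun q => ?_
    simp [hF']

/-- Changing an automorphism by an inner one does not change the conjugacy class of the image, so
representatives of the classes modulo inner automorphisms suffice. -/
theorem orbit_iff {A : Subgroup (MulAut (Br n))} {l : List (MulAut (Br n))}
    (h1 : ∀ ψ ∈ l, ψ ∈ A) (h2 : ∀ α ∈ A, ∃ ψ ∈ l, ∃ p, α = MulAut.conj p * ψ) (x y : Br n) :
    (∃ ψ ∈ l, IsConj y (ψ x)) ↔ ∃ α ∈ A, IsConj y (α x) := by
  constructor
  · rintro ⟨ψ, hψ, h⟩
    exact ⟨ψ, h1 ψ hψ, h⟩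
  · rintro ⟨α, hα, h⟩
    obtain ⟨ψ, hψ, p, rfl⟩ := h2 α hα
    exact ⟨ψ, hψ, h.trans (isConj_iff.2 ⟨p, rfl⟩).symm⟩

end BraidOrbit

/-- every finitely generated subgroup of `Aut (B n)` is orbit decidable. -/
theorem fg_subgroup_of_aut_orbit_decidable (n : ℕ) (hn : 2 ≤ n) (m : ℕ)
    (φ : Fin m → MulAut (B n)) :
    ∃ f : List (Fin (n - 1) × Bool) × List (Fin (n - 1) × Bool) → Bool,
      Computable f ∧
      ∀ u v : List (Fin (n - 1) × Bool),
        (f (u, v) = true ↔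
          ∃ α ∈ Subgroup.closure (Set.range φ), IsConj (π v) (α (π u))) := by
  obtain ⟨k, rfl⟩ : ∃ k, n = k + 2 := ⟨n - 2, by omega⟩
  obtain ⟨l, h1, h2⟩ := BraidOrbit.exists_reps (n := k) (Subgroup.closure (Set.range φ))
  obtain ⟨_, hf⟩ := BraidOrbit.primrecPred_exists_aut l
  exact ⟨_, hf.to_comp, fun u v => decide_eq_true_iff.trans
    (BraidOrbit.orbit_iff h1 h2 (BraidOrbit.ev u) (BraidOrbit.ev v))⟩
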